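/- arXiv:1709.07264 — 2 statements merged into one kernel-verified Lean document; each statement's English description precedes it below -/
import Mathlib

section
/- Suppose T_n converges in distribution under P_(n) to ξ1 and under Q_(n) to ξ2 (values in [−∞,∞]). Then the following are equivalent: (a) ξ1 and ξ2 are both Gaussian, or ξ1 = ξ2 ≡ 0 a.s.; (b) ξ1 ∼ N(−σ²/2, σ²) for some σ² ∈ [0,∞); (c) ξ2 ∼ N(σ²/2, σ²) for some σ² ∈ [0,∞); (d) ξ2 is real-valued a.s. and ξ1 ∼ N(a,σ²) for some a ∈ ℝ, σ² ∈ [0,∞); (e) ξ2 ∼ N(a,σ²) for some a ∈ ℝ, σ² ∈ [0,∞); (f) Z_n = Σ_{i=1}^{k_n} ε_{n,i}(dμ_{n,i}/dP_{n,i} − 1) converges in distribution under P_(n) to N(0,σ²) for some σ² ∈ [0,∞); (g) ξ2 is real-valued a.s. and max_{1≤i≤k_n} dQ_{n,i}/dP_{n,i} → 1 in P_(n)-probability; (h) ξ2 is real-valued a.s. and max_{1≤i≤k_n} ε_{n,i}·dμ_{n,i}/dP_{n,i} → 0 in P_(n)-probability; (i) for some τ ∈ (0,∞): I_{n,1,x}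 → 0 for all x > 0 and I_{n,2,τ} → σ² ∈ [0,∞). Moreover, if one of (b), (c), (f), (i) holds with a given σ² ∈ [0,∞), then all of them hold with the same σ². -/
open MeasureTheory Filter Topology

noncomputable section

/-- Mixture `Q = (1-e)·P + e·μ`. -/
def Qmix {α : Type*} [MeasurableSpace α] (P μ : Measure α) (e : ℝ) : Measure α :=
  (ENNReal.ofReal (1 - e)) • P + (ENNReal.ofReal e) • μ

/-- Product null measure `P_(n) = ⊗_{i<k_n} P_{n,i}`. -/
def Pprod {α : Type*} [MeasurableSpace α] (P : ℕ → ℕ → Measure α) (k : ℕ → ℕ) (n : ℕ) :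
    Measure (Fin (k n) → α) :=
  Measure.pi (fun i => P n i)

/-- Product alternative measure `Q_(n) = ⊗_{i<k_n} Q_{n,i}`. -/
def Qprod {α : Type*} [MeasurableSpace α] (P μ : ℕ → ℕ → Measure α) (ε : ℕ → ℕ → ℝ)
    (k : ℕ → ℕ) (n : ℕ) : Measure (Fin (k n) → α) :=
  Measure.pi (fun i => Qmix (P n i) (μ n i) (ε n i))

/-- Extended likelihood ratio `dQ/dP` with values in `[0,∞]` (equal to `+∞` on the
`P`-singular part of `Q`), computed via densities w.r.t. `P + Q`. -/
def elr {α : Type*} [MeasurableSpace α] (Q P : Measure α) (a : α) : ENNReal :=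
  Q.rnDeriv (P + Q) a / P.rnDeriv (P + Q) a

/-- Log-likelihood ratio statistic `T_n = Σ_{i<k_n} log(dQ_{n,i}/dP_{n,i})(y_i)`,
with values in `[−∞,∞]`. -/
def Tstat {α : Type*} [MeasurableSpace α] (P μ : ℕ → ℕ → Measure α) (ε : ℕ → ℕ → ℝ)
    (k : ℕ → ℕ) (n : ℕ) (y : Fin (k n) → α) : EReal :=
  ∑ i : Fin (k n), ENNReal.log (elr (Qmix (P n i) (μ n i) (ε n i)) (P n i) (y i))

/-- Law of `T_n` under the null `P_(n)`. -/
def lawP {α : Type*} [MeasurableSpace α] (P μ : ℕ → ℕ → Measure α) (ε : ℕ → ℕ → ℝ)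
    (k : ℕ → ℕ) (n : ℕ) : Measure EReal :=
  (Pprod P k n).map (Tstat P μ ε k n)

/-- Law of `T_n` under the alternative `Q_(n)`. -/
def lawQ {α : Type*} [MeasurableSpace α] (P μ : ℕ → ℕ → Measure α) (ε : ℕ → ℕ → ℝ)
    (k : ℕ → ℕ) (n : ℕ) : Measure EReal :=
  (Qprod P μ ε k n).map (Tstat P μ ε k n)

/-- Weak convergence of a sequence of measures (convergence in distribution):
integrals of bounded continuous functions converge. -/
def WeakLim {β : Type*} [MeasurableSpace β] [TopologicalSpace β]
    (μs : ℕ → Measure β) (ν : Measure β) : Prop :=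
  ∀ f : BoundedContinuousFunction β ℝ,
    Tendsto (fun n => ∫ x, f x ∂(μs n)) atTop (nhds (∫ x, f x ∂ν))

end
noncomputable section

open ProbabilityTheory

/-- Real-valued Radon–Nikodym density `dμ/dP`. -/
def dmuP {α : Type*} [MeasurableSpace α] (μ P : Measure α) (a : α) : ℝ :=
  (μ.rnDeriv P a).toReal

/-- `I_{n,1,x}`. -/
def I1 {α : Type*} [MeasurableSpace α] (P μ : ℕ → ℕ → Measure α) (ε : ℕ → ℕ → ℝ)
    (k : ℕ → ℕ) (x : ℝ) (n : ℕ) : ℝ :=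
  ∑ i ∈ Finset.range (k n),
    ε n i * ((μ n i) {a | x < ε n i * dmuP (μ n i) (P n i) a}).toReal

/-- `I_{n,2,x}`. -/
def I2 {α : Type*} [MeasurableSpace α] (P μ : ℕ → ℕ → Measure α) (ε : ℕ → ℕ → ℝ)
    (k : ℕ → ℕ) (x : ℝ) (n : ℕ) : ℝ :=
  ∑ i ∈ Finset.range (k n),
    (ε n i) ^ 2 * ∫ a, ((dmuP (μ n i) (P n i) a) ^ 2 *
      (if ε n i * dmuP (μ n i) (P n i) a ≤ x then (1 : ℝ) else 0) - 1) ∂(P n i)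

/-- The law `N(m, v)` (Dirac at `m` if `v ≤ 0`) pushed forward to `[−∞,∞]`. -/
def gaussE (m v : ℝ) : Measure EReal :=
  (gaussianReal m v.toNNReal).map (fun x : ℝ => (x : EReal))

/-- The linear statistic `Z_n = Σ_{i<k_n} ε_{n,i}(dμ_{n,i}/dP_{n,i}(y_i) − 1)`. -/
def Zstat {α : Type*} [MeasurableSpace α] (P μ : ℕ → ℕ → Measure α) (ε : ℕ → ℕ → ℝ)
    (k : ℕ → ℕ) (n : ℕ) (y : Fin (k n) → α) : ℝ :=
  ∑ i : Fin (k n), ε n i * (dmuP (μ n i) (P n i) (y i) - 1)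

/-- `max_{i<k_n} dQ_{n,i}/dP_{n,i}(y_i)`. -/
def maxQ {α : Type*} [MeasurableSpace α] (P μ : ℕ → ℕ → Measure α) (ε : ℕ → ℕ → ℝ)
    (k : ℕ → ℕ) (n : ℕ) (y : Fin (k n) → α) : ℝ :=
  ⨆ i : Fin (k n),
    ((Qmix (P n i) (μ n i) (ε n i)).rnDeriv (P n i) (y i)).toReal

/-- `max_{i<k_n} ε_{n,i}·dμ_{n,i}/dP_{n,i}(y_i)`. -/
def maxMu {α : Type*} [MeasurableSpace α] (P μ : ℕ → ℕ → Measure α) (ε : ℕ → ℕ → ℝ)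
    (k : ℕ → ℕ) (n : ℕ) (y : Fin (k n) → α) : ℝ :=
  ⨆ i : Fin (k n), ε n i * dmuP (μ n i) (P n i) (y i)

/-! ### Elementary real analysis -/

/-- `g x = c x² + o(x²)` at zero. -/
def Quad (g : ℝ → ℝ) (c : ℝ) : Prop :=
  ∀ η : ℝ, 0 < η → ∃ x0 : ℝ, 0 < x0 ∧ ∀ x : ℝ, |x| ≤ x0 → |g x - c * x ^ 2| ≤ η * x ^ 2

/-- Linear bound on `[-1, ∞)`. -/
def LinB (g : ℝ → ℝ) : Prop :=
  ∃ K : ℝ, 0 ≤ K ∧ ∀ x : ℝ, -1 ≤ x → |g x| ≤ K * |x|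

lemma quad_of_deriv {g g' : ℝ → ℝ} {c : ℝ} (h0 : g 0 = 0)
    (hd : ∀ᶠ x in 𝓝 (0 : ℝ), HasDerivAt g (g' x) x) (h0' : g' 0 = 0)
    (hd' : HasDerivAt g' (2 * c) 0) : Quad g c := by
  intro η hη
  have h1 := (hasDerivAt_iff_isLittleO.1 hd').def hη
  obtain ⟨x1, hx1, H⟩ := Metric.eventually_nhds_iff.1 (h1.and hd)
  refine ⟨x1 / 2, by positivity, fun x hx => ?_⟩
  have key := (convex_closedBall (0 : ℝ) |x|).norm_image_sub_le_of_norm_hasDerivWithin_le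
    (f := fun y => g y - c * y ^ 2) (f' := fun y => g' y - c * (2 * y)) (C := η * |x|)
    (x := 0) (y := x) ?_ ?_ (by simp) (by simp)
  · simp only [h0, Real.norm_eq_abs] at key
    calc |g x - c * x ^ 2| = |g x - c * x ^ 2 - (0 - c * 0 ^ 2)| := by congr 1; ring
      _ ≤ η * |x| * |x - 0| := key
      _ = η * x ^ 2 := by rw [sub_zero, mul_assoc, ← sq, sq_abs]
  · intro y hy
    have hy' : dist y 0 < x1 := by
      have : dist y 0 ≤ |x| := by simpa using hy
      linarith
    have h := (H hy').2
    have h2 : HasDerivAt (fun y : ℝ => c * y ^ 2) (c * (2 * y)) y := by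
      simpa using ((hasDerivAt_pow 2 y).const_mul c)
    exact (h.sub h2).hasDerivWithinAt
  · intro y hy
    have hy2 : |y| ≤ |x| := by simpa using hy
    have hy' : dist y 0 < x1 := by
      rw [Real.dist_eq, sub_zero]; linarith
    have h := (H hy').1
    simp only [h0', sub_zero, Real.norm_eq_abs, smul_eq_mul] at h ⊢
    calc |g' y - c * (2 * y)| = |g' y - y * (2 * c)| := by congr 1; ring
      _ ≤ η * |y| := h
      _ ≤ η * |x| := by gcongr

/-- Hellinger test function. -/
def gH (r x : ℝ) : ℝ := 1 + r * x - (1 + x) ^ r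

/-- Laplace test function. -/
def gL (l x : ℝ) : ℝ := Real.exp (-(l * x)) - 1 + l * x

lemma gH_nonneg {r x : ℝ} (h0 : 0 ≤ r) (h1 : r ≤ 1) (hx : -1 ≤ x) : 0 ≤ gH r x := by
  have := _root_.rpow_one_add_le_one_add_mul_self hx h0 h1
  unfold gH; linarith

lemma gH_le_abs {r x : ℝ} (h0 : 0 < r) (h1 : r ≤ 1) (hx : -1 ≤ x) : gH r x ≤ |x| := by
  unfold gH
  rcases le_total 0 x with h | h
  · have : 1 ≤ (1 + x) ^ r := Real.one_le_rpow (by linarith) h0.le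
    rw [abs_of_nonneg h]; nlinarith
  · have : (1 + x) ^ (1 : ℝ) ≤ (1 + x) ^ r :=
      Real.rpow_le_rpow_of_exponent_ge' (by linarith) (by linarith) h0.le h1
    rw [Real.rpow_one] at this
    rw [abs_of_nonpos h]; nlinarith

lemma gH_linB {r : ℝ} (h0 : 0 < r) (h1 : r ≤ 1) : LinB (gH r) :=
  ⟨1, zero_le_one, fun x hx => by
    rw [abs_of_nonneg (gH_nonneg h0.le h1 hx), one_mul]; exact gH_le_abs h0 h1 hx⟩

lemma gH_quad (r : ℝ) : Quad (gH r) (r * (1 - r) / 2) := by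
  refine quad_of_deriv (g' := fun x => r - r * (1 + x) ^ (r - 1)) (by simp [gH]) ?_ (by simp) ?_
  · filter_upwards [Ioi_mem_nhds (show (-1 : ℝ) < 0 by norm_num)] with x hx
    have hx' : (1 + x) ≠ 0 := by have : -1 < x := hx; linarith
    have h1 : HasDerivAt (fun x : ℝ => 1 + x) 1 x := (hasDerivAt_id x).const_add 1
    have h2 := h1.rpow_const (p := r) (Or.inl hx')
    have h3 : HasDerivAt (fun x : ℝ => 1 + r * x) (r * 1) x :=
      ((hasDerivAt_id x).const_mul r).const_add 1
    have h4 := h3.sub h2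
    exact h4.congr_deriv (by ring)
  · have h1 : HasDerivAt (fun x : ℝ => 1 + x) 1 (0 : ℝ) := (hasDerivAt_id 0).const_add 1
    have h2 := h1.rpow_const (p := r - 1) (Or.inl (by norm_num))
    have h4 := (h2.const_mul r).const_sub r
    refine h4.congr_deriv ?_
    simp; ring

lemma gH_half {x : ℝ} (hx : -1 ≤ x) : gH (1 / 2) x = (Real.sqrt (1 + x) - 1) ^ 2 / 2 := by
  have h := Real.sq_sqrt (show 0 ≤ 1 + x by linarith)
  unfold gH
  rw [← Real.sqrt_eq_rpow]
  nlinarith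

lemma gH_le_half {r x : ℝ} (h0 : 0 ≤ r) (hx : -(3 / 4) ≤ x) : gH r x ≤ 10 * r * gH (1 / 2) x := by
  have hpos : 0 < 1 + x := by linarith
  set w := Real.sqrt (1 + x) with hw
  have hw2 : w ^ 2 = 1 + x := Real.sq_sqrt hpos.le
  have hwh : 1 / 2 ≤ w := Real.le_sqrt_of_sq_le (by linarith)
  have hw0 : 0 < w := by linarith
  rw [gH_half (by linarith), ← hw]
  have h1 : 1 + r * Real.log (1 + x) ≤ (1 + x) ^ r := by
    rw [Real.rpow_def_of_pos hpos]
    have := Real.add_one_le_exp (Real.log (1 + x) * r)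
    linarith
  have h2 : Real.log (1 + x) = 2 * Real.log w := by
    rw [← hw2, Real.log_pow]; norm_num
  have h3 : 1 - w⁻¹ ≤ Real.log w := Real.one_sub_inv_le_log_of_pos hw0
  have h4 : x - Real.log (1 + x) ≤ 5 * (w - 1) ^ 2 := by
    have h5 : x - Real.log (1 + x) ≤ (w - 1) ^ 2 * (1 + 2 * w⁻¹) := by
      rw [h2]
      have : (w - 1) ^ 2 * (1 + 2 * w⁻¹) = w ^ 2 - 1 - 2 * (1 - w⁻¹) := by
        field_simp; ring
      rw [this]; linarith
    have h6 : w⁻¹ ≤ 2 := by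
      rw [inv_le_comm₀ hw0 (by norm_num)]; linarith
    nlinarith [sq_nonneg (w - 1)]
  unfold gH
  nlinarith

lemma gH_lower {r : ℝ} (h0 : 0 < r) (h1 : r < 1) :
    ∃ K : ℝ, 0 < K ∧ ∀ x, K ≤ x → r / 2 * x ≤ gH r x := by
  have h := (tendsto_rpow_neg_atTop (show 0 < 1 - r by linarith)).eventually
    (gt_mem_nhds (show 0 < r / 2 by positivity))
  obtain ⟨K, hK⟩ := Filter.eventually_atTop.1 h
  refine ⟨max K 1, by positivity, fun x hx => ?_⟩
  have hx1 : 1 ≤ x := (le_max_right _ _).trans hx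
  have h2 := hK (1 + x) (by linarith [le_max_left K 1])
  have h3 : (1 + x) ^ r = (1 + x) * (1 + x) ^ (-(1 - r)) := by
    rw [← Real.rpow_one_add' (by linarith) (by linarith)]; congr 1; ring
  have h4 : (1 + x) ^ r ≤ (1 + x) * (r / 2) := by
    rw [h3]; exact mul_le_mul_of_nonneg_left h2.le (by linarith)
  unfold gH
  nlinarith

/-- Fourth order Hellinger combination. -/
def hH (x : ℝ) : ℝ := 4 * gH (3 / 4) x + 4 * gH (1 / 4) x - 6 * gH (1 / 2) x

lemma hH_eq {x : ℝ} (hx : -1 ≤ x) : hH x = ((1 + x) ^ (1 / 4 : ℝ) - 1) ^ 4 := by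
  have h0 : 0 ≤ 1 + x := by linarith
  set w := (1 + x) ^ (1 / 4 : ℝ) with hw
  have e1 : (1 + x) ^ (1 / 2 : ℝ) = w ^ 2 := by
    rw [hw, ← Real.rpow_natCast, ← Real.rpow_mul h0]; norm_num
  have e2 : (1 + x) ^ (3 / 4 : ℝ) = w ^ 3 := by
    rw [hw, ← Real.rpow_natCast, ← Real.rpow_mul h0]; norm_num
  have e3 : 1 + x = w ^ 4 := by
    rw [hw, ← Real.rpow_natCast, ← Real.rpow_mul h0]; norm_num
  unfold hH gH
  rw [e1, e2, ← hw]
  linear_combination e3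

lemma hH_nonneg {x : ℝ} (hx : -1 ≤ x) : 0 ≤ hH x := by
  rw [hH_eq hx]; positivity

lemma hH_lower {x0 : ℝ} (h0 : 0 < x0) : ∃ c : ℝ, 0 < c ∧ ∀ x, x0 ≤ x → c * x ≤ hH x := by
  have hb : 1 < (1 + x0) ^ (1 / 4 : ℝ) := Real.one_lt_rpow (by linarith) (by norm_num)
  set b := (1 + x0) ^ (1 / 4 : ℝ) with hbdef
  have hb0 : 0 < b := by linarith
  refine ⟨(1 - b⁻¹) ^ 4, ?_, fun x hx => ?_⟩
  · have : b⁻¹ < 1 := inv_lt_one_of_one_lt₀ hb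
    have : 0 < 1 - b⁻¹ := by linarith
    positivity
  · rw [hH_eq (by linarith)]
    have hbw : b ≤ (1 + x) ^ (1 / 4 : ℝ) := Real.rpow_le_rpow (by linarith) (by linarith) (by norm_num)
    set w := (1 + x) ^ (1 / 4 : ℝ) with hw
    have e3 : 1 + x = w ^ 4 := by
      rw [hw, ← Real.rpow_natCast, ← Real.rpow_mul (by linarith)]; norm_num
    have hbi : b⁻¹ ≤ 1 := inv_le_one_of_one_le₀ hb.le
    have h1 : (1 - b⁻¹) * w ≤ w - 1 := by
      have : 1 ≤ b⁻¹ * w := by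
        rw [← inv_mul_cancel₀ hb0.ne']
        exact mul_le_mul_of_nonneg_left hbw (by positivity)
      linarith
    calc (1 - b⁻¹) ^ 4 * x ≤ (1 - b⁻¹) ^ 4 * w ^ 4 := by
          apply mul_le_mul_of_nonneg_left (by linarith) (by positivity)
      _ = ((1 - b⁻¹) * w) ^ 4 := by ring
      _ ≤ (w - 1) ^ 4 := by
          apply pow_le_pow_left₀ (mul_nonneg (by linarith) (by linarith)) h1

lemma gL_nonneg (l x : ℝ) : 0 ≤ gL l x := by
  have := Real.add_one_le_exp (-(l * x))
  unfold gL; linarith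

lemma gL_linB {l : ℝ} (hl : 0 ≤ l) : LinB (gL l) := by
  refine ⟨l * Real.exp l + l, by positivity, fun x hx => ?_⟩
  rw [abs_of_nonneg (gL_nonneg l x)]
  unfold gL
  have he := Real.exp_pos l
  rcases le_total 0 x with h | h
  · have : Real.exp (-(l * x)) ≤ 1 := Real.exp_le_one_iff.2 (by nlinarith)
    rw [abs_of_nonneg h]
    have : 0 ≤ l * Real.exp l * x := by positivity
    nlinarith
  · rw [abs_of_nonpos h]
    have h1 := Real.add_one_le_exp (l * x)
    have h2 : Real.exp (-(l * x)) * Real.exp (l * x) = 1 := by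
      rw [← Real.exp_add]; simp
    have h3 := Real.exp_pos (-(l * x))
    have h4 : Real.exp (-(l * x)) ≤ Real.exp l := Real.exp_le_exp.2 (by nlinarith)
    have h5 : Real.exp (-(l * x)) - 1 ≤ Real.exp (-(l * x)) * (-(l * x)) := by nlinarith
    have h6 : Real.exp (-(l * x)) * (-(l * x)) ≤ Real.exp l * (-(l * x)) :=
      mul_le_mul_of_nonneg_right h4 (by nlinarith)
    nlinarith

lemma gL_quad (l : ℝ) : Quad (gL l) (l ^ 2 / 2) := by
  have hd : ∀ x : ℝ, HasDerivAt (fun x : ℝ => Real.exp (-(l * x))) (-l * Real.exp (-(l * x))) x := by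
    intro x
    have h1 : HasDerivAt (fun x : ℝ => -(l * x)) (-(l * 1)) x :=
      ((hasDerivAt_id x).const_mul l).neg
    exact h1.exp.congr_deriv (by ring)
  refine quad_of_deriv (g' := fun x => -l * Real.exp (-(l * x)) + l) (by simp [gL]) ?_ (by simp) ?_
  · refine Eventually.of_forall fun x => ?_
    have h2 := ((hd x).sub_const 1).add ((hasDerivAt_id x).const_mul l)
    exact h2.congr_deriv (by ring)
  · have h2 := ((hd 0).const_mul (-l)).add_const l
    exact h2.congr_deriv (by simp; ring)

lemma gL_double {l x : ℝ} (hx : -1 ≤ l * x) : gL (2 * l) x ≤ 11 * gL l x := by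
  set w := Real.exp (-(l * x) / 2) with hw
  have hw0 : 0 < w := Real.exp_pos _
  have e1 : Real.exp (-(l * x)) = w ^ 2 := by rw [hw, ← Real.exp_nat_mul]; congr 1; push_cast; ring
  have e2 : Real.exp (-(2 * l * x)) = w ^ 4 := by
    rw [hw, ← Real.exp_nat_mul]; congr 1; push_cast; ring
  have hw2 : w ≤ 2 := by
    have h1 : w ≤ Real.exp (1 / 2) := Real.exp_le_exp.2 (by linarith)
    have h2 : Real.exp (1 / 2) ^ 2 = Real.exp 1 := by rw [← Real.exp_nat_mul]; norm_num
    have h3 := Real.exp_one_lt_d9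
    nlinarith [Real.exp_pos (1 / 2 : ℝ)]
  have hlw : -(l * x) / 2 ≤ w - 1 := by have := Real.add_one_le_exp (-(l * x) / 2); linarith
  unfold gL
  rw [e1, e2]
  have : (w - 1) ^ 2 * (w + 1) ^ 2 ≤ (w - 1) ^ 2 * 9 := by
    apply mul_le_mul_of_nonneg_left _ (sq_nonneg _); nlinarith
  nlinarith

lemma gL_half (l x : ℝ) : gL (l / 2) x ≤ gL l x / 2 := by
  have e1 : Real.exp (-(l * x)) = Real.exp (-(l / 2 * x)) ^ 2 := by
    rw [← Real.exp_nat_mul]; congr 1; push_cast; ring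
  unfold gL
  rw [e1]
  nlinarith [sq_nonneg (Real.exp (-(l / 2 * x)) - 1)]

/-- Fourth order Laplace combination. -/
def hL (x : ℝ) : ℝ := 3 * gL 1 x - 3 / 2 * gL 2 x + 1 / 3 * gL 3 x

lemma hL_hasDerivAt (x : ℝ) : HasDerivAt hL ((1 - Real.exp (-x)) ^ 3) x := by
  have hd : ∀ l : ℝ, HasDerivAt (gL l) (-l * Real.exp (-(l * x)) + l) x := by
    intro l
    have h1 : HasDerivAt (fun x : ℝ => -(l * x)) (-(l * 1)) x :=
      ((hasDerivAt_id x).const_mul l).neg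
    have h2 := ((h1.exp).sub_const 1).add ((hasDerivAt_id x).const_mul l)
    exact h2.congr_deriv (by ring)
  have h := (((hd 1).const_mul 3).sub ((hd 2).const_mul (3 / 2))).add ((hd 3).const_mul (1 / 3))
  refine h.congr_deriv ?_
  have e2 : Real.exp (-(2 * x)) = Real.exp (-x) ^ 2 := by
    rw [← Real.exp_nat_mul]; congr 1; push_cast; ring
  have e3 : Real.exp (-(3 * x)) = Real.exp (-x) ^ 3 := by
    rw [← Real.exp_nat_mul]; congr 1; push_cast; ring
  rw [e2, e3, one_mul]; ring

lemma hL_zero : hL 0 = 0 := by simp [hL, gL]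

lemma hL_lower' {a x c : ℝ} (hax : a ≤ x) (hc : ∀ y, a ≤ y → c ≤ (1 - Real.exp (-y)) ^ 3) :
    hL a + c * (x - a) ≤ hL x := by
  have hm : MonotoneOn (fun y => hL y - c * y) (Set.Ici a) := by
    apply monotoneOn_of_hasDerivWithinAt_nonneg (convex_Ici a)
      (f' := fun y => (1 - Real.exp (-y)) ^ 3 - c * 1)
    · exact fun y _ => (((hL_hasDerivAt y).sub ((hasDerivAt_id y).const_mul c)).continuousAt).continuousWithinAt
    · intro y _
      exact ((hL_hasDerivAt y).sub ((hasDerivAt_id y).const_mul c)).hasDerivWithinAt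
    · intro y hy
      rw [interior_Ici] at hy
      have := hc y (le_of_lt hy)
      linarith
  have := hm (Set.self_mem_Ici) (Set.mem_Ici.2 hax) hax
  simp only at this
  linarith

lemma hL_nonneg (x : ℝ) : 0 ≤ hL x := by
  rcases le_total 0 x with h | h
  · have := hL_lower' (a := 0) (c := 0) h (fun y hy => by
      have : Real.exp (-y) ≤ 1 := Real.exp_le_one_iff.2 (by linarith)
      have : 0 ≤ 1 - Real.exp (-y) := by linarith
      positivity)
    rw [hL_zero] at this; linarith
  · have hm : AntitoneOn hL (Set.Iic 0) := by
      apply antitoneOn_of_hasDerivWithinAt_nonpos (convex_Iic 0)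
        (f' := fun y => (1 - Real.exp (-y)) ^ 3)
      · exact fun y _ => (hL_hasDerivAt y).continuousAt.continuousWithinAt
      · exact fun y _ => (hL_hasDerivAt y).hasDerivWithinAt
      · intro y hy
        rw [interior_Iic] at hy
        have hy' : y < 0 := hy
        have : 1 ≤ Real.exp (-y) := Real.one_le_exp (by linarith)
        exact Odd.pow_nonpos (by decide) (by linarith)
    have := hm (Set.mem_Iic.2 h) (Set.self_mem_Iic) h
    rwa [hL_zero] at this

lemma hL_lower {x0 : ℝ} (h0 : 0 < x0) : ∃ c : ℝ, 0 < c ∧ ∀ x, x0 ≤ x → c * x ≤ hL x := by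
  set d := (1 - Real.exp (-(x0 / 2))) ^ 3 with hd
  have hd0 : 0 < d := by
    have : Real.exp (-(x0 / 2)) < 1 := Real.exp_lt_one_iff.2 (by linarith)
    have : 0 < 1 - Real.exp (-(x0 / 2)) := by linarith
    positivity
  refine ⟨d / 2, by positivity, fun x hx => ?_⟩
  have h1 := hL_lower' (a := x0 / 2) (x := x) (c := d) (by linarith) (fun y hy => by
    have h1 : Real.exp (-y) ≤ Real.exp (-(x0 / 2)) := Real.exp_le_exp.2 (by linarith)
    have h2 : Real.exp (-(x0 / 2)) < 1 := Real.exp_lt_one_iff.2 (by linarith)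
    apply pow_le_pow_left₀ (by linarith) (by linarith))
  have h2 := hL_nonneg (x0 / 2)
  nlinarith

lemma cos_linB (t : ℝ) : LinB (fun x => Real.cos (t * x) - 1) := by
  refine ⟨|t|, abs_nonneg _, fun x _ => ?_⟩
  have := Real.abs_cos_sub_cos_le (t * x) 0
  simpa [abs_mul] using this

lemma sin_linB (t : ℝ) : LinB (fun x => Real.sin (t * x) - t * x) := by
  refine ⟨2 * |t|, by positivity, fun x _ => ?_⟩
  have h1 : |Real.sin (t * x)| ≤ |t * x| := Real.abs_sin_le_abs
  calc |Real.sin (t * x) - t * x| ≤ |Real.sin (t * x)| + |t * x| := abs_sub _ _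
    _ ≤ |t * x| + |t * x| := by linarith
    _ = 2 * |t| * |x| := by rw [abs_mul]; ring

lemma cos_quad (t : ℝ) : Quad (fun x => Real.cos (t * x) - 1) (-(t ^ 2 / 2)) := by
  have ht : ∀ x : ℝ, HasDerivAt (fun x : ℝ => t * x) t x := fun x => by
    simpa using (hasDerivAt_id x).const_mul t
  refine quad_of_deriv (g' := fun x => -Real.sin (t * x) * t) (by simp) ?_ (by simp) ?_
  · exact Eventually.of_forall fun x => ((ht x).cos).sub_const 1
  · have := (((ht 0).sin).neg).mul_const t
    exact this.congr_deriv (by simp; ring)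

lemma sin_quad (t : ℝ) : Quad (fun x => Real.sin (t * x) - t * x) 0 := by
  have ht : ∀ x : ℝ, HasDerivAt (fun x : ℝ => t * x) t x := fun x => by
    simpa using (hasDerivAt_id x).const_mul t
  refine quad_of_deriv (g' := fun x => Real.cos (t * x) * t - t) (by simp) ?_ (by simp) ?_
  · exact Eventually.of_forall fun x => ((ht x).sin).sub (ht x)
  · have := (((ht 0).cos).mul_const t).sub_const t
    exact this.congr_deriv (by simp)

/-! ### Row-wise independent arrays -/

/-- Standing assumptions on an array of nonnegative variables `W n i` with small means `ε n i`. -/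
structure Arr {α : Type*} [MeasurableSpace α] (P : ℕ → ℕ → Measure α) (k : ℕ → ℕ)
    (ε : ℕ → ℕ → ℝ) (W : ℕ → ℕ → α → ℝ) : Prop where
  prob : ∀ n i, IsProbabilityMeasure (P n i)
  meas : ∀ n i, Measurable (W n i)
  nonneg : ∀ n i a, 0 ≤ W n i a
  int : ∀ n i, Integrable (W n i) (P n i)
  mean : ∀ n i, ∫ a, W n i a ∂(P n i) = ε n i
  e0 : ∀ n i, 0 ≤ ε n i
  e1 : ∀ n i, ε n i ≤ 1
  small : ∀ δ : ℝ, 0 < δ → ∀ᶠ n in atTop, ∀ i, i < k n → ε n i ≤ δ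

/-- `Σ E[W 1{W > x}]`. -/
def J1 {α : Type*} [MeasurableSpace α] (P : ℕ → ℕ → Measure α) (k : ℕ → ℕ)
    (W : ℕ → ℕ → α → ℝ) (x : ℝ) (n : ℕ) : ℝ :=
  ∑ i ∈ Finset.range (k n), ∫ a, (if x < W n i a then W n i a else 0) ∂(P n i)

/-- `Σ (E[W² 1{W ≤ x}] - ε²)`. -/
def J2 {α : Type*} [MeasurableSpace α] (P : ℕ → ℕ → Measure α) (k : ℕ → ℕ)
    (ε : ℕ → ℕ → ℝ) (W : ℕ → ℕ → α → ℝ) (x : ℝ) (n : ℕ) : ℝ :=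
  ∑ i ∈ Finset.range (k n),
    ((∫ a, (if W n i a ≤ x then W n i a ^ 2 else 0) ∂(P n i)) - ε n i ^ 2)

/-- `Σ E[g(W - ε)]`. -/
def SS {α : Type*} [MeasurableSpace α] (P : ℕ → ℕ → Measure α) (k : ℕ → ℕ)
    (ε : ℕ → ℕ → ℝ) (W : ℕ → ℕ → α → ℝ) (g : ℝ → ℝ) (n : ℕ) : ℝ :=
  ∑ i ∈ Finset.range (k n), ∫ a, g (W n i a - ε n i) ∂(P n i)

section single

variable {α : Type*} [MeasurableSpace α] {P : Measure α} [IsProbabilityMeasure P]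
  {W : α → ℝ} {e : ℝ}

lemma int_tail (hm : Measurable W) (hi : Integrable W P) (x : ℝ) :
    Integrable (fun a => if x < W a then W a else 0) P := by
  have : (fun a => if x < W a then W a else 0) = Set.indicator {a | x < W a} W := by
    ext a; simp [Set.indicator]
  rw [this]
  exact hi.indicator (measurableSet_lt measurable_const hm)

lemma int_trunc_sq (hm : Measurable W) (h0 : ∀ a, 0 ≤ W a) (x : ℝ) :
    Integrable (fun a => if W a ≤ x then W a ^ 2 else 0) P := by
  refine Integrable.of_bound (C := x ^ 2) ?_ (Eventually.of_forall fun a => ?_)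
  · exact (Measurable.ite (measurableSet_le hm measurable_const) (by fun_prop)
      measurable_const).aestronglyMeasurable
  · split_ifs with h
    · rw [Real.norm_of_nonneg (by positivity)]
      exact pow_le_pow_left₀ (h0 a) h 2
    · simp; positivity

lemma int_test (hm : Measurable W) (h0 : ∀ a, 0 ≤ W a) (hi : Integrable W P) (he1 : e ≤ 1)
    {g : ℝ → ℝ} (hg : Measurable g) (hL : LinB g) :
    Integrable (fun a => g (W a - e)) P := by
  obtain ⟨K, hK0, hK⟩ := hL
  refine Integrable.mono' (g := fun a => K * |W a - e|) ?_
    (hg.comp (hm.sub_const e)).aestronglyMeasurable (Eventually.of_forall fun a => ?_)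
  · exact ((hi.sub (integrable_const e)).abs).const_mul K
  · exact hK _ (by linarith [h0 a])

lemma int_abs_le (hm : Measurable W) (h0 : ∀ a, 0 ≤ W a) (hi : Integrable W P)
    (hmean : ∫ a, W a ∂P = e) (he0 : 0 ≤ e) (he1 : e ≤ 1)
    {g : ℝ → ℝ} {K : ℝ} (hK0 : 0 ≤ K)
    (hK : ∀ x : ℝ, -1 ≤ x → |g x| ≤ K * |x|) :
    ∫ a, |g (W a - e)| ∂P ≤ K * (2 * e) := by
  calc ∫ a, |g (W a - e)| ∂P ≤ ∫ a, K * (W a + e) ∂P := by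
        apply integral_mono_of_nonneg (Eventually.of_forall fun a => abs_nonneg _)
          ((hi.add (integrable_const e)).const_mul K)
        refine Eventually.of_forall fun a => ?_
        refine (hK _ (by linarith [h0 a])).trans ?_
        refine mul_le_mul_of_nonneg_left ?_ hK0
        refine (abs_sub _ _).trans ?_
        rw [abs_of_nonneg (h0 a), abs_of_nonneg he0]; exact le_rfl
    _ = K * (2 * e) := by
        rw [integral_const_mul, integral_add hi (integrable_const e), hmean]
        simp only [integral_const, probReal_univ, one_smul]; ring

lemma single_bound (hm : Measurable W) (h0 : ∀ a, 0 ≤ W a) (hi : Integrable W P)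
    (hmean : ∫ a, W a ∂P = e) (he0 : 0 ≤ e) (he1 : e ≤ 1)
    {g : ℝ → ℝ} (hg : Measurable g) {K c η x τ : ℝ} (hK0 : 0 ≤ K)
    (hK : ∀ x : ℝ, -1 ≤ x → |g x| ≤ K * |x|)
    (hx : 0 < x) (hxτ : x ≤ τ) (hex : e ≤ x)
    (hq : ∀ y, |y| ≤ x → |g y - c * y ^ 2| ≤ η * y ^ 2) :
    ∃ B : ℝ, |(∫ a, g (W a - e) ∂P) - c * B|
        ≤ η * B + K * ∫ a, (if x < W a then W a else 0) ∂P ∧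
      |B - ((∫ a, (if W a ≤ τ then W a ^ 2 else 0) ∂P) - e ^ 2)|
        ≤ (3 + x⁻¹ + τ) * ∫ a, (if x < W a then W a else 0) ∂P := by
  have iT := int_tail (P := P) hm hi x
  have iτ := int_trunc_sq (P := P) hm h0 τ
  have iG := int_test (P := P) (e := e) hm h0 hi he1 hg ⟨K, hK0, hK⟩
  have iB : Integrable (fun a => if W a ≤ x then (W a - e) ^ 2 else 0) P := by
    refine Integrable.of_bound (C := x ^ 2) ?_ (Eventually.of_forall fun a => ?_)
    · exact (Measurable.ite (measurableSet_le hm measurable_const) (by fun_prop)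
        measurable_const).aestronglyMeasurable
    · split_ifs with h
      · rw [Real.norm_of_nonneg (by positivity)]
        rw [sq_le_sq, abs_of_pos hx, abs_le]
        constructor <;> linarith [h0 a]
      · simp; positivity
  refine ⟨∫ a, (if W a ≤ x then (W a - e) ^ 2 else 0) ∂P, ?_, ?_⟩
  · rw [← integral_const_mul, ← integral_const_mul, ← integral_const_mul,
      ← integral_sub iG (iB.const_mul c), ← integral_add (iB.const_mul η) (iT.const_mul K)]
    refine (abs_integral_le_integral_abs).trans ?_
    refine integral_mono ((iG.sub (iB.const_mul c)).abs) ((iB.const_mul η).add (iT.const_mul K)) ?_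
    intro a
    simp only
    by_cases h : W a ≤ x
    · simp only [h, if_true, not_lt.2 h, if_false, mul_zero, add_zero]
      apply hq
      rw [abs_le]; constructor <;> linarith [h0 a]
    · simp only [h, if_false, not_le.1 h, if_true, mul_zero, sub_zero, zero_add]
      have h' := not_le.1 h
      refine (hK _ (by linarith)).trans (mul_le_mul_of_nonneg_left ?_ hK0)
      rw [abs_of_nonneg (by linarith)]; linarith
  · have key : ∀ a, |(if W a ≤ x then (W a - e) ^ 2 else 0) -
        ((if W a ≤ τ then W a ^ 2 else 0) + (-2 * e * W a + e ^ 2))|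
        ≤ (3 + x⁻¹ + τ) * (if x < W a then W a else 0) := by
      intro a
      by_cases h : W a ≤ x
      · simp only [h, if_true, not_lt.2 h, if_false, mul_zero, h.trans hxτ]
        rw [show (W a - e) ^ 2 - (W a ^ 2 + (-2 * e * W a + e ^ 2)) = 0 by ring]; simp
      · have h' := not_le.1 h
        simp only [h, if_false, h', if_true, zero_sub, abs_neg]
        have h1 : 1 ≤ x⁻¹ * W a := by
          rw [← inv_mul_cancel₀ hx.ne']
          exact mul_le_mul_of_nonneg_left h'.le (by positivity)
        have h2 : 0 ≤ (if W a ≤ τ then W a ^ 2 else 0) := by split_ifs <;> positivity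
        have h3 : (if W a ≤ τ then W a ^ 2 else 0) ≤ τ * W a := by
          split_ifs with h4
          · nlinarith [h0 a]
          · nlinarith [h0 a]
        have h5 : e * W a ≤ W a := by nlinarith [h0 a]
        have h6 : 0 ≤ e * W a := mul_nonneg he0 (h0 a)
        have h7 : e ^ 2 ≤ 1 := by nlinarith
        rw [abs_le]
        constructor <;> nlinarith [h0 a, sq_nonneg e]
    have iL : Integrable (fun a => -2 * e * W a + e ^ 2) P :=
      (hi.const_mul _).add (integrable_const _)
    have e1 : (∫ a, (if W a ≤ τ then W a ^ 2 else 0) ∂P) - e ^ 2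
        = ∫ a, ((if W a ≤ τ then W a ^ 2 else 0) + (-2 * e * W a + e ^ 2)) ∂P := by
      rw [integral_add iτ iL, integral_add (hi.const_mul _) (integrable_const _),
        integral_const_mul, hmean]
      simp; ring
    have iS : Integrable (fun a => (if W a ≤ τ then W a ^ 2 else 0) + (-2 * e * W a + e ^ 2)) P :=
      iτ.add iL
    rw [e1, ← integral_sub iB iS, ← integral_const_mul]
    refine (abs_integral_le_integral_abs).trans ?_
    exact integral_mono ((iB.sub iS).abs) (iT.const_mul _) key

end single

section arr

variable {α : Type*} [MeasurableSpace α] {P : ℕ → ℕ → Measure α} {k : ℕ → ℕ}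
    {ε : ℕ → ℕ → ℝ} {W : ℕ → ℕ → α → ℝ}

lemma J1_nonneg (A : Arr P k ε W) (x : ℝ) (n : ℕ) : 0 ≤ J1 P k W x n := by
  refine Finset.sum_nonneg fun i _ => integral_nonneg fun a => ?_
  simp only [Pi.zero_apply]
  split_ifs
  · exact A.nonneg n i a
  · exact le_rfl

lemma compare (A : Arr P k ε W) {g : ℝ → ℝ} (hg : Measurable g) {c : ℝ} (hL : LinB g)
    (hQ : Quad g c) (hJ : ∀ x : ℝ, 0 < x → Tendsto (J1 P k W x) atTop (𝓝 0))
    {τ : ℝ} (hτ : 0 < τ) {η : ℝ} (hη : 0 < η) :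
    ∀ᶠ n in atTop, |SS P k ε W g n - c * J2 P k ε W τ n| ≤ η * |J2 P k ε W τ n| + η := by
  obtain ⟨K, hK0, hK⟩ := hL
  obtain ⟨x1, hx1, hq⟩ := hQ η hη
  set x := min x1 τ with hxdef
  have hx : 0 < x := lt_min hx1 hτ
  have hxτ : x ≤ τ := min_le_right _ _
  set D := 3 + x⁻¹ + τ with hD
  have hD0 : 0 < D := by positivity
  have hT : Tendsto (fun n => (K + (|c| + η) * D) * J1 P k W x n) atTop (𝓝 0) := by
    simpa using (hJ x hx).const_mul (K + (|c| + η) * D)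
  filter_upwards [A.small x hx, hT.eventually (gt_mem_nhds hη)] with n hn hsm
  have hex : ∀ i, ∃ B : ℝ, i ∈ Finset.range (k n) →
      (|(∫ a, g (W n i a - ε n i) ∂(P n i)) - c * B|
        ≤ η * B + K * ∫ a, (if x < W n i a then W n i a else 0) ∂(P n i) ∧
      |B - ((∫ a, (if W n i a ≤ τ then W n i a ^ 2 else 0) ∂(P n i)) - ε n i ^ 2)|
        ≤ D * ∫ a, (if x < W n i a then W n i a else 0) ∂(P n i)) := by
    intro i
    haveI := A.prob n i
    by_cases hi : i ∈ Finset.range (k n)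
    · obtain ⟨B, hB⟩ := single_bound (A.meas n i) (A.nonneg n i) (A.int n i) (A.mean n i)
        (A.e0 n i) (A.e1 n i) hg hK0 hK hx hxτ (hn i (Finset.mem_range.1 hi))
        (c := c) (η := η) (fun y hy => hq y (hy.trans (min_le_left _ _)))
      exact ⟨B, fun _ => hB⟩
    · exact ⟨0, fun h => absurd h hi⟩
  choose B hB using hex
  have h1 : |SS P k ε W g n - c * ∑ i ∈ Finset.range (k n), B i|
      ≤ η * ∑ i ∈ Finset.range (k n), B i + K * J1 P k W x n := by
    unfold SS J1
    rw [Finset.mul_sum, Finset.mul_sum, Finset.mul_sum, ← Finset.sum_sub_distrib,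
      ← Finset.sum_add_distrib]
    exact (Finset.abs_sum_le_sum_abs _ _).trans (Finset.sum_le_sum fun i hi => (hB i hi).1)
  have h2 : |∑ i ∈ Finset.range (k n), B i - J2 P k ε W τ n| ≤ D * J1 P k W x n := by
    unfold J2 J1
    rw [Finset.mul_sum, ← Finset.sum_sub_distrib]
    exact (Finset.abs_sum_le_sum_abs _ _).trans (Finset.sum_le_sum fun i hi => (hB i hi).2)
  set b := ∑ i ∈ Finset.range (k n), B i
  set j := J2 P k ε W τ n
  set s := SS P k ε W g n
  have hj := J1_nonneg A x n
  have h3 : |s - c * j| ≤ |s - c * b| + |c| * |b - j| := by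
    rw [← abs_mul]
    calc |s - c * j| = |(s - c * b) + c * (b - j)| := by congr 1; ring
      _ ≤ _ := abs_add_le _ _
  have h4 : |c| * |b - j| ≤ |c| * (D * J1 P k W x n) :=
    mul_le_mul_of_nonneg_left h2 (abs_nonneg _)
  have h5 : b ≤ |j| + D * J1 P k W x n := by
    have := le_abs_self (b - j); have := le_abs_self j; linarith
  have h6 := mul_le_mul_of_nonneg_left h5 hη.le
  nlinarith

lemma seq_lim {s a : ℕ → ℝ} {c : ℝ}
    (h : ∀ η : ℝ, 0 < η → ∀ᶠ n in atTop, |s n - c * a n| ≤ η * |a n| + η) {L : ℝ}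
    (ha : Tendsto a atTop (𝓝 L)) : Tendsto s atTop (𝓝 (c * L)) := by
  have h1 : Tendsto (fun n => s n - c * a n) atTop (𝓝 0) := by
    rw [Metric.tendsto_atTop']
    intro δ hδ
    have hb : ∀ᶠ n in atTop, |a n| < |L| + 1 :=
      (ha.abs).eventually (gt_mem_nhds (by linarith))
    have hη : 0 < δ / (|L| + 3) := by positivity
    have hh := (h _ hη).and hb
    obtain ⟨N, hN⟩ := eventually_atTop.1 hh
    refine ⟨N, fun n hn => ?_⟩
    obtain ⟨h1, h2⟩ := hN n hn.le
    rw [Real.dist_eq, sub_zero]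
    calc |s n - c * a n| ≤ δ / (|L| + 3) * |a n| + δ / (|L| + 3) := h1
      _ ≤ δ / (|L| + 3) * (|L| + 1) + δ / (|L| + 3) := by gcongr
      _ < δ := by
        rw [div_mul_eq_mul_div, ← add_div, div_lt_iff₀ (by positivity)]; nlinarith
  have := h1.add (ha.const_mul c)
  simpa using this

lemma seq_lim' {s a : ℕ → ℝ} {c : ℝ} (hc : 0 < c)
    (h : ∀ η : ℝ, 0 < η → ∀ᶠ n in atTop, |s n - c * a n| ≤ η * |a n| + η) {L : ℝ}
    (hs : Tendsto s atTop (𝓝 (c * L))) : Tendsto a atTop (𝓝 L) := by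
  have h2 : ∀ η : ℝ, 0 < η → ∀ᶠ n in atTop, |a n - c⁻¹ * s n| ≤ η * |s n| + η := by
    intro η hη
    set θ := min (min 1 (c / 2)) (min (η * c ^ 2 / 4) (η * c / 4)) with hθ
    have hθ0 : 0 < θ := by positivity
    have t1 : θ ≤ c / 2 := (min_le_left _ _).trans (min_le_right _ _)
    have hη1 : θ ≤ 1 := (min_le_left _ _).trans (min_le_left _ _)
    have t2 : θ ≤ η * c ^ 2 / 4 := (min_le_right _ _).trans (min_le_left _ _)
    have t3 : θ ≤ η * c / 4 := (min_le_right _ _).trans (min_le_right _ _)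
    filter_upwards [h θ hθ0] with n hn
    have b1 : c * |a n| ≤ |s n| + (θ * |a n| + θ) := by
      have : |c * a n| ≤ |s n| + |s n - c * a n| := by
        calc |c * a n| = |s n - (s n - c * a n)| := by congr 1; ring
          _ ≤ _ := abs_sub _ _
      rw [abs_mul, abs_of_pos hc] at this
      linarith
    have b2 : c / 2 * |a n| ≤ |s n| + θ := by nlinarith [abs_nonneg (a n)]
    have b3 : |a n - c⁻¹ * s n| = c⁻¹ * |s n - c * a n| := by
      rw [← abs_of_pos (inv_pos.2 hc), ← abs_mul, abs_of_pos (inv_pos.2 hc), ← abs_neg]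
      congr 1; field_simp; ring
    rw [b3, inv_mul_le_iff₀ hc]
    refine hn.trans ?_
    have b4 : θ * |a n| ≤ η * c / 2 * (|s n| + θ) := by
      have : |a n| ≤ 2 / c * (|s n| + θ) := by
        rw [div_mul_eq_mul_div, le_div_iff₀ hc]; linarith
      calc θ * |a n| ≤ (η * c ^ 2 / 4) * (2 / c * (|s n| + θ)) := by
            apply mul_le_mul t2 this (abs_nonneg _) (by positivity)
        _ = η * c / 2 * (|s n| + θ) := by field_simp; ring
    have : 0 < η * c := by positivity
    nlinarith [abs_nonneg (s n)]
  have := seq_lim h2 hs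
  rwa [← mul_assoc, inv_mul_cancel₀ hc.ne', one_mul] at this

end arr
/-! ### Tail control and product lemmas -/

section arr3

variable {α : Type*} [MeasurableSpace α] {P : ℕ → ℕ → Measure α} {k : ℕ → ℕ}
    {ε : ℕ → ℕ → ℝ} {W : ℕ → ℕ → α → ℝ}

lemma tail_of_SS (A : Arr P k ε W) {h : ℝ → ℝ} (hm : Measurable h) (hL : LinB h)
    (h0 : ∀ x, -1 ≤ x → 0 ≤ h x)
    (hlow : ∀ x0 : ℝ, 0 < x0 → ∃ c : ℝ, 0 < c ∧ ∀ x, x0 ≤ x → c * x ≤ h x)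
    (hS : Tendsto (SS P k ε W h) atTop (𝓝 0)) :
    ∀ x : ℝ, 0 < x → Tendsto (J1 P k W x) atTop (𝓝 0) := by
  intro x hx
  obtain ⟨c, hc, hlow⟩ := hlow (x / 2) (by positivity)
  have hT : Tendsto (fun n => 2 / c * SS P k ε W h n) atTop (𝓝 0) := by
    simpa using hS.const_mul (2 / c)
  refine squeeze_zero' (Eventually.of_forall fun n => J1_nonneg A x n) ?_ hT
  filter_upwards [A.small (x / 2) (by positivity)] with n hn
  unfold J1 SS
  rw [Finset.mul_sum]
  refine Finset.sum_le_sum fun i hi => ?_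
  have := A.prob n i
  have hi' := hn i (Finset.mem_range.1 hi)
  rw [← integral_const_mul]
  refine integral_mono (int_tail (A.meas n i) (A.int n i) x)
    ((int_test (A.meas n i) (A.nonneg n i) (A.int n i) (A.e1 n i) hm hL).const_mul _) ?_
  intro a
  have hW := A.nonneg n i a
  have he := A.e1 n i
  simp only
  split_ifs with hxa
  · have h1 := hlow (W n i a - ε n i) (by linarith)
    have h2 : c * (W n i a / 2) ≤ c * (W n i a - ε n i) :=
      mul_le_mul_of_nonneg_left (by linarith) hc.le
    rw [div_mul_eq_mul_div, le_div_iff₀ hc]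
    linarith
  · have := h0 (W n i a - ε n i) (by linarith)
    positivity

end arr3

lemma log_one_add_cmp {b : ℝ} (hb : |b| ≤ 1 / 2) : |Real.log (1 + b) - b| ≤ 2 * b ^ 2 := by
  have hb' := abs_le.1 hb
  have hp : 0 < 1 + b := by linarith
  have h1 := Real.log_le_sub_one_of_pos hp
  have h2 := Real.one_sub_inv_le_log_of_pos hp
  have h3 : b - 2 * b ^ 2 ≤ 1 - (1 + b)⁻¹ := by
    have : 1 - (1 + b)⁻¹ = b / (1 + b) := by field_simp; ring
    rw [this, le_div_iff₀ hp]
    nlinarith [sq_nonneg b]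
  rw [abs_le]
  constructor <;> nlinarith [sq_nonneg b]

lemma prod_cmp {k : ℕ → ℕ} {b : ℕ → ℕ → ℝ}
    (hsum : ∀ n, ∑ i ∈ Finset.range (k n), |b n i| = |∑ i ∈ Finset.range (k n), b n i|)
    (hs : ∀ δ : ℝ, 0 < δ → ∀ᶠ n in atTop, ∀ i, i < k n → |b n i| ≤ δ) (η : ℝ) (hη : 0 < η) :
    ∀ᶠ n in atTop, |Real.log (∏ i ∈ Finset.range (k n), (1 + b n i))
        - 1 * ∑ i ∈ Finset.range (k n), b n i| ≤ η * |∑ i ∈ Finset.range (k n), b n i| + η := by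
  filter_upwards [hs (min (1 / 2) (η / 2)) (by positivity)] with n hn
  rw [Real.log_prod, one_mul, ← Finset.sum_sub_distrib, ← hsum n, Finset.mul_sum]
  · refine (Finset.abs_sum_le_sum_abs _ _).trans ?_
    refine (Finset.sum_le_sum fun i hi => ?_).trans (le_add_of_nonneg_right hη.le)
    have h1 := hn i (Finset.mem_range.1 hi)
    have h2 := h1.trans (min_le_left _ _)
    have h3 := h1.trans (min_le_right _ _)
    refine (log_one_add_cmp h2).trans ?_
    rw [← sq_abs]
    nlinarith [abs_nonneg (b n i)]
  · intro i hi
    have h2 := (hn i (Finset.mem_range.1 hi)).trans (min_le_left _ _)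
    have := (abs_le.1 h2).1
    linarith

lemma prod_ev_pos {k : ℕ → ℕ} {b : ℕ → ℕ → ℝ}
    (hs : ∀ δ : ℝ, 0 < δ → ∀ᶠ n in atTop, ∀ i, i < k n → |b n i| ≤ δ) :
    ∀ᶠ n in atTop, 0 < ∏ i ∈ Finset.range (k n), (1 + b n i) := by
  filter_upwards [hs (1 / 2) (by norm_num)] with n hn
  refine Finset.prod_pos fun i hi => ?_
  have := (abs_le.1 (hn i (Finset.mem_range.1 hi))).1
  linarith

lemma prod_tendsto {k : ℕ → ℕ} {b : ℕ → ℕ → ℝ}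
    (hsum : ∀ n, ∑ i ∈ Finset.range (k n), |b n i| = |∑ i ∈ Finset.range (k n), b n i|)
    (hs : ∀ δ : ℝ, 0 < δ → ∀ᶠ n in atTop, ∀ i, i < k n → |b n i| ≤ δ) {L : ℝ}
    (h : Tendsto (fun n => ∑ i ∈ Finset.range (k n), b n i) atTop (𝓝 L)) :
    Tendsto (fun n => ∏ i ∈ Finset.range (k n), (1 + b n i)) atTop (𝓝 (Real.exp L)) := by
  have h1 := seq_lim (prod_cmp hsum hs) h
  rw [one_mul] at h1
  refine ((Real.continuous_exp.tendsto L).comp h1).congr' ?_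
  filter_upwards [prod_ev_pos hs] with n hn
  exact Real.exp_log hn

lemma sum_tendsto {k : ℕ → ℕ} {b : ℕ → ℕ → ℝ}
    (hsum : ∀ n, ∑ i ∈ Finset.range (k n), |b n i| = |∑ i ∈ Finset.range (k n), b n i|)
    (hs : ∀ δ : ℝ, 0 < δ → ∀ᶠ n in atTop, ∀ i, i < k n → |b n i| ≤ δ) {H : ℝ} (hH : 0 < H)
    (h : Tendsto (fun n => ∏ i ∈ Finset.range (k n), (1 + b n i)) atTop (𝓝 H)) :
    Tendsto (fun n => ∑ i ∈ Finset.range (k n), b n i) atTop (𝓝 (Real.log H)) := by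
  refine seq_lim' one_pos (prod_cmp hsum hs) ?_
  rw [one_mul]
  exact h.log hH.ne'

lemma sum_abs_nonneg {s : Finset ℕ} {b : ℕ → ℝ} (h : ∀ i, 0 ≤ b i) :
    ∑ i ∈ s, |b i| = |∑ i ∈ s, b i| := by
  rw [abs_of_nonneg (Finset.sum_nonneg fun i _ => h i)]
  exact Finset.sum_congr rfl fun i _ => abs_of_nonneg (h i)

lemma sum_abs_nonpos {s : Finset ℕ} {b : ℕ → ℝ} (h : ∀ i, b i ≤ 0) :
    ∑ i ∈ s, |b i| = |∑ i ∈ s, b i| := by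
  rw [abs_of_nonpos (Finset.sum_nonpos fun i _ => h i), ← Finset.sum_neg_distrib]
  exact Finset.sum_congr rfl fun i _ => abs_of_nonpos (h i)

lemma prod_tendsto_complex {k : ℕ → ℕ} {z : ℕ → ℕ → ℂ} {M : ℝ}
    (hM : ∀ᶠ n in atTop, ∑ i ∈ Finset.range (k n), ‖z n i‖ ≤ M)
    (hs : ∀ δ : ℝ, 0 < δ → ∀ᶠ n in atTop, ∀ i, i < k n → ‖z n i‖ ≤ δ) {L : ℂ}
    (h : Tendsto (fun n => ∑ i ∈ Finset.range (k n), z n i) atTop (𝓝 L)) :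
    Tendsto (fun n => ∏ i ∈ Finset.range (k n), (1 + z n i)) atTop (𝓝 (Complex.exp L)) := by
  have h1 : Tendsto (fun n => ∑ i ∈ Finset.range (k n), Complex.log (1 + z n i)
      - ∑ i ∈ Finset.range (k n), z n i) atTop (𝓝 0) := by
    rw [Metric.tendsto_nhds]
    intro η hη
    have hδ : 0 < min (1 / 2) (η / (2 * (|M| + 1))) := by positivity
    filter_upwards [hs _ hδ, hM] with n hn hMn
    rw [dist_zero_right, ← Finset.sum_sub_distrib]
    calc ‖∑ i ∈ Finset.range (k n), (Complex.log (1 + z n i) - z n i)‖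
        ≤ ∑ i ∈ Finset.range (k n), ‖Complex.log (1 + z n i) - z n i‖ := norm_sum_le _ _
      _ ≤ ∑ i ∈ Finset.range (k n), (η / (2 * (|M| + 1))) * ‖z n i‖ := by
          refine Finset.sum_le_sum fun i hi => ?_
          have h1 := hn i (Finset.mem_range.1 hi)
          have h2 := h1.trans (min_le_left _ _)
          have h3 := h1.trans (min_le_right _ _)
          refine (Complex.norm_log_one_add_sub_self_le (by linarith)).trans ?_
          have h4 : (1 - ‖z n i‖)⁻¹ ≤ 2 := by
            rw [inv_le_comm₀ (by linarith) (by norm_num)]; linarith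
          have h5 : 0 ≤ (1 - ‖z n i‖)⁻¹ := inv_nonneg.2 (by linarith)
          nlinarith [norm_nonneg (z n i), mul_le_mul_of_nonneg_right h4 (sq_nonneg ‖z n i‖),
            mul_le_mul_of_nonneg_right h3 (norm_nonneg (z n i))]
      _ = (η / (2 * (|M| + 1))) * ∑ i ∈ Finset.range (k n), ‖z n i‖ := by rw [Finset.mul_sum]
      _ ≤ (η / (2 * (|M| + 1))) * |M| := by
          gcongr; exact hMn.trans (le_abs_self _)
      _ < η := by
          rw [div_mul_eq_mul_div, div_lt_iff₀ (by positivity)]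
          nlinarith [abs_nonneg M]
  have h2 := h1.add h
  simp only [sub_add_cancel, zero_add] at h2
  refine ((Complex.continuous_exp.tendsto L).comp h2).congr' ?_
  filter_upwards [hs (1 / 2) (by norm_num)] with n hn
  simp only [Function.comp_apply]
  rw [Complex.exp_sum]
  refine Finset.prod_congr rfl fun i hi => Complex.exp_log ?_
  intro h0
  have h1 := hn i (Finset.mem_range.1 hi)
  have h2 : z n i = -1 := by linear_combination h0
  rw [h2] at h1
  norm_num at h1
/-! ### Limit theorems for arrays -/

lemma gH_measurable (r : ℝ) : Measurable (gH r) := by unfold gH; fun_prop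
lemma gL_measurable (r : ℝ) : Measurable (gL r) := by unfold gL; fun_prop

section arr4

variable {α : Type*} [MeasurableSpace α] {P : ℕ → ℕ → Measure α} {k : ℕ → ℕ}
    {ε : ℕ → ℕ → ℝ} {W : ℕ → ℕ → α → ℝ}

lemma Arr.intg (A : Arr P k ε W) {g : ℝ → ℝ} (hg : Measurable g) (hL : LinB g) (n i : ℕ) :
    Integrable (fun a => g (W n i a - ε n i)) (P n i) := by
  have := A.prob n i
  exact int_test (A.meas n i) (A.nonneg n i) (A.int n i) (A.e1 n i) hg hL

lemma Arr.mean0 (A : Arr P k ε W) (n i : ℕ) : ∫ a, (W n i a - ε n i) ∂(P n i) = 0 := by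
  have := A.prob n i
  rw [integral_sub (A.int n i) (integrable_const _), A.mean]; simp

lemma Arr.intX (A : Arr P k ε W) (n i : ℕ) : Integrable (fun a => W n i a - ε n i) (P n i) := by
  have := A.prob n i
  exact (A.int n i).sub (integrable_const _)

lemma Arr.ge (A : Arr P k ε W) (n i : ℕ) (a : α) : -1 ≤ W n i a - ε n i := by
  linarith [A.nonneg n i a, A.e1 n i]

lemma Arr.smallint (A : Arr P k ε W) {g : ℝ → ℝ} (hL : LinB g) (δ : ℝ) (hδ : 0 < δ) :
    ∀ᶠ n in atTop, ∀ i, i < k n → ∫ a, |g (W n i a - ε n i)| ∂(P n i) ≤ δ := by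
  obtain ⟨K, hK0, hK⟩ := hL
  filter_upwards [A.small (δ / (2 * (K + 1))) (by positivity)] with n hn i hi
  have := A.prob n i
  refine (int_abs_le (A.meas n i) (A.nonneg n i) (A.int n i) (A.mean n i) (A.e0 n i) (A.e1 n i)
    hK0 hK).trans ?_
  have h1 := hn i hi
  rw [le_div_iff₀ (by positivity)] at h1
  nlinarith [A.e0 n i]

lemma Arr.smallint' (A : Arr P k ε W) {g : ℝ → ℝ} (hL : LinB g) (δ : ℝ) (hδ : 0 < δ) :
    ∀ᶠ n in atTop, ∀ i, i < k n → |∫ a, g (W n i a - ε n i) ∂(P n i)| ≤ δ := by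
  filter_upwards [A.smallint hL δ hδ] with n hn i hi
  exact abs_integral_le_integral_abs.trans (hn i hi)

lemma SS_lin3 (A : Arr P k ε W) {g1 g2 g3 : ℝ → ℝ} (m1 : Measurable g1) (m2 : Measurable g2)
    (m3 : Measurable g3) (l1 : LinB g1) (l2 : LinB g2) (l3 : LinB g3) (c1 c2 c3 : ℝ) (n : ℕ) :
    SS P k ε W (fun x => c1 * g1 x + c2 * g2 x + c3 * g3 x) n
      = c1 * SS P k ε W g1 n + c2 * SS P k ε W g2 n + c3 * SS P k ε W g3 n := by
  unfold SS
  rw [Finset.mul_sum, Finset.mul_sum, Finset.mul_sum, ← Finset.sum_add_distrib,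
    ← Finset.sum_add_distrib]
  refine Finset.sum_congr rfl fun i _ => ?_
  have i1 := (A.intg m1 l1 n i).const_mul c1
  have i2 := (A.intg m2 l2 n i).const_mul c2
  have i3 := (A.intg m3 l3 n i).const_mul c3
  have i12 : Integrable (fun a => c1 * g1 (W n i a - ε n i) + c2 * g2 (W n i a - ε n i)) (P n i) :=
    i1.add i2
  rw [integral_add i12 i3, integral_add i1 i2, integral_const_mul, integral_const_mul,
    integral_const_mul]

lemma linB3 {g1 g2 g3 : ℝ → ℝ} (l1 : LinB g1) (l2 : LinB g2) (l3 : LinB g3) (c1 c2 c3 : ℝ) :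
    LinB (fun x => c1 * g1 x + c2 * g2 x + c3 * g3 x) := by
  obtain ⟨K1, h1, H1⟩ := l1
  obtain ⟨K2, h2, H2⟩ := l2
  obtain ⟨K3, h3, H3⟩ := l3
  refine ⟨|c1| * K1 + |c2| * K2 + |c3| * K3, by positivity, fun x hx => ?_⟩
  have a1 := mul_le_mul_of_nonneg_left (H1 x hx) (abs_nonneg c1)
  have a2 := mul_le_mul_of_nonneg_left (H2 x hx) (abs_nonneg c2)
  have a3 := mul_le_mul_of_nonneg_left (H3 x hx) (abs_nonneg c3)
  have b1 := abs_add_le (c1 * g1 x + c2 * g2 x) (c3 * g3 x)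
  have b2 := abs_add_le (c1 * g1 x) (c2 * g2 x)
  rw [abs_mul c3] at b1
  rw [abs_mul, abs_mul] at b2
  linarith

/-- Hellinger-type transforms. -/
def HH (P : ℕ → ℕ → Measure α) (k : ℕ → ℕ) (ε : ℕ → ℕ → ℝ) (W : ℕ → ℕ → α → ℝ) (r : ℝ)
    (n : ℕ) : ℝ :=
  ∏ i ∈ Finset.range (k n), ∫ a, (1 + (W n i a - ε n i)) ^ r ∂(P n i)

lemma int_rpow (A : Arr P k ε W) {r : ℝ} (h0 : 0 < r) (h1 : r < 1) (n i : ℕ) :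
    ∫ a, (1 + (W n i a - ε n i)) ^ r ∂(P n i)
      = 1 + -(∫ a, gH r (W n i a - ε n i) ∂(P n i)) := by
  have := A.prob n i
  have hi := A.intg (gH_measurable r) (gH_linB h0 h1.le) n i
  have hX := A.intX n i
  have e : ∀ a, (1 + (W n i a - ε n i)) ^ r
      = (1 + r * (W n i a - ε n i)) - gH r (W n i a - ε n i) := by intro a; unfold gH; ring
  have hY : Integrable (fun a => 1 + r * (W n i a - ε n i)) (P n i) :=
    (integrable_const _).add (hX.const_mul r)
  simp_rw [e]
  rw [integral_sub hY hi, integral_add (integrable_const _) (hX.const_mul r),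
    integral_const_mul, A.mean0]
  simp; ring

lemma HH_eq (A : Arr P k ε W) {r : ℝ} (h0 : 0 < r) (h1 : r < 1) :
    HH P k ε W r = fun n => ∏ i ∈ Finset.range (k n),
      (1 + -(∫ a, gH r (W n i a - ε n i) ∂(P n i))) := by
  ext n
  unfold HH
  exact Finset.prod_congr rfl fun i _ => int_rpow A h0 h1 n i

lemma igH_nonneg (A : Arr P k ε W) {r : ℝ} (h0 : 0 < r) (h1 : r < 1) (n i : ℕ) :
    0 ≤ ∫ a, gH r (W n i a - ε n i) ∂(P n i) :=
  integral_nonneg fun a => gH_nonneg h0.le h1.le (A.ge n i a)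

lemma SS_neg (r : ℝ) : (fun n => ∑ i ∈ Finset.range (k n),
    -(∫ a, gH r (W n i a - ε n i) ∂(P n i))) = fun n => -(SS P k ε W (gH r) n) := by
  ext n; unfold SS; rw [Finset.sum_neg_distrib]

lemma SS_of_HH (A : Arr P k ε W) {r : ℝ} (h0 : 0 < r) (h1 : r < 1) {H : ℝ} (hH : 0 < H)
    (h : Tendsto (HH P k ε W r) atTop (𝓝 H)) :
    Tendsto (SS P k ε W (gH r)) atTop (𝓝 (-Real.log H)) := by
  rw [HH_eq A h0 h1] at h
  have := sum_tendsto (b := fun n i => -(∫ a, gH r (W n i a - ε n i) ∂(P n i)))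
    (fun n => sum_abs_nonpos fun i => neg_nonpos.2 (igH_nonneg A h0 h1 n i)) ?_ hH h
  · rw [SS_neg] at this
    simpa using this.neg
  · intro δ hδ
    simpa only [abs_neg] using A.smallint' (gH_linB h0 h1.le) δ hδ

lemma HH_of_SS (A : Arr P k ε W) {r : ℝ} (h0 : 0 < r) (h1 : r < 1) {L : ℝ}
    (h : Tendsto (SS P k ε W (gH r)) atTop (𝓝 L)) :
    Tendsto (HH P k ε W r) atTop (𝓝 (Real.exp (-L))) := by
  rw [HH_eq A h0 h1]
  refine prod_tendsto (b := fun n i => -(∫ a, gH r (W n i a - ε n i) ∂(P n i)))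
    (fun n => sum_abs_nonpos fun i => neg_nonpos.2 (igH_nonneg A h0 h1 n i)) ?_ ?_
  · intro δ hδ
    simpa only [abs_neg] using A.smallint' (gH_linB h0 h1.le) δ hδ
  · rw [SS_neg]; exact h.neg

lemma I_to_SS (A : Arr P k ε W) {s τ : ℝ} (hτ : 0 < τ)
    (hJ : ∀ x : ℝ, 0 < x → Tendsto (J1 P k W x) atTop (𝓝 0))
    (hJ2 : Tendsto (J2 P k ε W τ) atTop (𝓝 s)) {r : ℝ} (h0 : 0 < r) (h1 : r < 1) :
    Tendsto (SS P k ε W (gH r)) atTop (𝓝 (r * (1 - r) / 2 * s)) :=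
  seq_lim (fun _ hη => compare A (gH_measurable r) (gH_linB h0 h1.le) (gH_quad r) hJ hτ hη) hJ2

lemma J2_lim_of_half (A : Arr P k ε W) {s τ : ℝ} (hτ : 0 < τ)
    (hJ : ∀ x : ℝ, 0 < x → Tendsto (J1 P k W x) atTop (𝓝 0))
    (h : Tendsto (SS P k ε W (gH (1 / 2))) atTop (𝓝 (1 / 8 * s))) :
    Tendsto (J2 P k ε W τ) atTop (𝓝 s) := by
  refine seq_lim' (c := 1 / 2 * (1 - 1 / 2) / 2) (by norm_num)
    (fun _ hη => compare A (gH_measurable (1 / 2)) (gH_linB (by norm_num) (by norm_num))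
      (gH_quad (1 / 2)) hJ hτ hη) ?_
  convert h using 2; norm_num

lemma SS_to_I (A : Arr P k ε W) {s : ℝ}
    (h : ∀ r : ℝ, 0 < r → r < 1 →
      Tendsto (SS P k ε W (gH r)) atTop (𝓝 (r * (1 - r) / 2 * s))) :
    (∀ x : ℝ, 0 < x → Tendsto (J1 P k W x) atTop (𝓝 0)) ∧
      ∀ τ : ℝ, 0 < τ → Tendsto (J2 P k ε W τ) atTop (𝓝 s) := by
  have e : hH = fun x => 4 * gH (3 / 4) x + 4 * gH (1 / 4) x + (-6) * gH (1 / 2) x := by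
    ext x; unfold hH; ring
  have l1 : LinB (gH (3 / 4)) := gH_linB (by norm_num) (by norm_num)
  have l2 : LinB (gH (1 / 4)) := gH_linB (by norm_num) (by norm_num)
  have l3 : LinB (gH (1 / 2)) := gH_linB (by norm_num) (by norm_num)
  have m := gH_measurable
  have hJ : ∀ x : ℝ, 0 < x → Tendsto (J1 P k W x) atTop (𝓝 0) := by
    refine tail_of_SS A (h := hH) ?_ ?_ (fun x hx => hH_nonneg hx) (fun x0 hx0 => hH_lower hx0) ?_
    · rw [e]; have := m (3 / 4); have := m (1 / 4); have := m (1 / 2); fun_prop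
    · rw [e]; exact linB3 l1 l2 l3 _ _ _
    · rw [e]
      have h1 := (h (3 / 4) (by norm_num) (by norm_num)).const_mul 4
      have h2 := (h (1 / 4) (by norm_num) (by norm_num)).const_mul 4
      have h3 := (h (1 / 2) (by norm_num) (by norm_num)).const_mul (-6)
      have h4 := (h1.add h2).add h3
      convert h4 using 2
      · exact SS_lin3 A (m _) (m _) (m _) l1 l2 l3 _ _ _ _
      · ring
  refine ⟨hJ, fun τ hτ => J2_lim_of_half A hτ hJ ?_⟩
  convert h (1 / 2) (by norm_num) (by norm_num) using 2; norm_num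

lemma SS_rel (A : Arr P k ε W) {r L L' : ℝ} (h0 : 0 < r) (h1 : r < 1)
    (h : Tendsto (SS P k ε W (gH r)) atTop (𝓝 L))
    (h' : Tendsto (SS P k ε W (gH (1 / 2))) atTop (𝓝 L')) : L ≤ 10 * r * L' := by
  refine le_of_tendsto_of_tendsto h (h'.const_mul (10 * r)) ?_
  filter_upwards [A.small (3 / 4) (by norm_num)] with n hn
  unfold SS
  rw [Finset.mul_sum]
  refine Finset.sum_le_sum fun i hi => ?_
  rw [← integral_const_mul]
  refine integral_mono (A.intg (gH_measurable _) (gH_linB h0 h1.le) n i)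
    ((A.intg (gH_measurable _) (gH_linB (by norm_num) (by norm_num)) n i).const_mul _) fun a => ?_
  exact gH_le_half h0.le (by linarith [A.nonneg n i a, hn i (Finset.mem_range.1 hi)])

lemma SS_gH_nonneg (A : Arr P k ε W) {r : ℝ} (h0 : 0 < r) (h1 : r < 1) (n : ℕ) :
    0 ≤ SS P k ε W (gH r) n := Finset.sum_nonneg fun i _ => igH_nonneg A h0 h1 n i

/-- `Σ P(W ≥ δ)`. -/
def MP (P : ℕ → ℕ → Measure α) (k : ℕ → ℕ) (W : ℕ → ℕ → α → ℝ) (δ : ℝ) (n : ℕ) : ℝ :=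
  ∑ i ∈ Finset.range (k n), (P n i).real {a | δ ≤ W n i a}

lemma MP_nonneg (δ : ℝ) (n : ℕ) : 0 ≤ MP P k W δ n :=
  Finset.sum_nonneg fun _ _ => measureReal_nonneg

lemma I_to_max (A : Arr P k ε W) (hJ : ∀ x : ℝ, 0 < x → Tendsto (J1 P k W x) atTop (𝓝 0))
    (δ : ℝ) (hδ : 0 < δ) : Tendsto (MP P k W δ) atTop (𝓝 0) := by
  have hT : Tendsto (fun n => 1 / δ * J1 P k W (δ / 2) n) atTop (𝓝 0) := by
    simpa using (hJ (δ / 2) (by positivity)).const_mul (1 / δ)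
  refine squeeze_zero (fun n => MP_nonneg δ n) (fun n => ?_) hT
  unfold MP J1
  rw [Finset.mul_sum]
  refine Finset.sum_le_sum fun i _ => ?_
  have := A.prob n i
  have hm : MeasurableSet {a | δ ≤ W n i a} := measurableSet_le measurable_const (A.meas n i)
  rw [← integral_const_mul, ← integral_indicator_one hm]
  refine integral_mono ((integrable_const (1 : ℝ)).indicator hm)
    ((int_tail (A.meas n i) (A.int n i) _).const_mul _) fun a => ?_
  simp only [Set.indicator, Set.mem_setOf_eq]
  have := A.nonneg n i a
  split_ifs with h1 h2 h2
  · simp only [Pi.one_apply]; rw [div_mul_eq_mul_div, le_div_iff₀ hδ]; linarith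
  · exfalso; linarith
  · positivity
  · simp

lemma max_to_J1 (A : Arr P k ε W) {L : ℝ → ℝ}
    (hM : ∀ δ : ℝ, 0 < δ → Tendsto (MP P k W δ) atTop (𝓝 0))
    (hS : ∀ r : ℝ, 0 < r → r < 1 → Tendsto (SS P k ε W (gH r)) atTop (𝓝 (L r)))
    (hL : Tendsto L (𝓝[<] 1) (𝓝 0)) :
    ∀ x : ℝ, 0 < x → Tendsto (J1 P k W x) atTop (𝓝 0) := by
  intro x hx
  rw [Metric.tendsto_nhds]
  intro η hη
  have hev : ∀ᶠ r in 𝓝[<] (1 : ℝ), L r < η / 16 ∧ 1 / 2 < r ∧ r < 1 := by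
    refine (hL.eventually (gt_mem_nhds (by positivity))).and ?_
    exact ((eventually_nhdsWithin_of_eventually_nhds
      (lt_mem_nhds (by norm_num : (1 / 2 : ℝ) < 1))).and self_mem_nhdsWithin)
  obtain ⟨r, hr1, hr2, hr3⟩ := hev.exists
  have hr0 : 0 < r := by linarith
  obtain ⟨K, hK, hKl⟩ := gH_lower hr0 hr3
  have hT : Tendsto (fun n => 2 * K * MP P k W x n) atTop (𝓝 0) := by
    simpa using (hM x hx).const_mul (2 * K)
  filter_upwards [A.small (x / 2) (by positivity), (hS r hr0 hr3).eventually (gt_mem_nhds hr1),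
    hT.eventually (gt_mem_nhds (by positivity : 0 < η / 2))] with n hn h1 h2
  rw [Real.dist_eq, sub_zero, abs_of_nonneg (J1_nonneg A x n)]
  have key : J1 P k W x n ≤ 8 * SS P k ε W (gH r) n + 2 * K * MP P k W x n := by
    unfold J1 SS MP
    rw [Finset.mul_sum, Finset.mul_sum, ← Finset.sum_add_distrib]
    refine Finset.sum_le_sum fun i hi => ?_
    have := A.prob n i
    have hm : MeasurableSet {a | x ≤ W n i a} := measurableSet_le measurable_const (A.meas n i)
    have i1 := (A.intg (gH_measurable r) (gH_linB hr0 hr3.le) n i).const_mul 8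
    have i2 := (((integrable_const (μ := P n i) (1 : ℝ)).indicator hm)).const_mul (2 * K)
    rw [← integral_indicator_one hm, ← integral_const_mul, ← integral_const_mul]
    refine le_trans ?_ (integral_add i1 i2).le
    refine integral_mono (int_tail (A.meas n i) (A.int n i) _) (i1.add i2) fun a => ?_
    have hW := A.nonneg n i a
    have hg := gH_nonneg hr0.le hr3.le (A.ge n i a)
    have he := hn i (Finset.mem_range.1 hi)
    simp only [Set.indicator, Set.mem_setOf_eq, Pi.add_apply]
    by_cases h1 : x < W n i a
    · rw [if_pos h1, if_pos h1.le]
      rcases le_total K (W n i a - ε n i) with h3 | h3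
      · have h4 := hKl _ h3
        have h5 : 1 / 4 * (W n i a - ε n i) ≤ r / 2 * (W n i a - ε n i) :=
          mul_le_mul_of_nonneg_right (by linarith) (by linarith)
        linarith
      · linarith
    · rw [if_neg h1]
      split_ifs <;> linarith
  linarith

end arr4
/-! ### The linear statistic: characteristic functions -/

section arr5

variable {α : Type*} [MeasurableSpace α] {P : ℕ → ℕ → Measure α} {k : ℕ → ℕ}
    {ε : ℕ → ℕ → ℝ} {W : ℕ → ℕ → α → ℝ}

/-- Centered sum. -/
def Zr (k : ℕ → ℕ) (ε : ℕ → ℕ → ℝ) (W : ℕ → ℕ → α → ℝ) (n : ℕ) (y : Fin (k n) → α) : ℝ :=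
  ∑ i : Fin (k n), (W n i (y i) - ε n i)

lemma Zr_measurable (A : Arr P k ε W) (n : ℕ) : Measurable (Zr k ε W n) := by
  unfold Zr
  refine Finset.measurable_sum _ fun i _ => ?_
  exact ((A.meas n i).comp (measurable_pi_apply i)).sub_const _

lemma Pprod_prob (A : Arr P k ε W) (n : ℕ) : IsProbabilityMeasure (Pprod P k n) := by
  have := fun i => A.prob n i
  unfold Pprod; infer_instance

lemma lawZ_prob (A : Arr P k ε W) (n : ℕ) :
    IsProbabilityMeasure ((Pprod P k n).map (Zr k ε W n)) := by
  have := Pprod_prob A n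
  exact Measure.isProbabilityMeasure_map (Zr_measurable A n).aemeasurable

lemma int_pprod {𝕜 : Type*} [RCLike 𝕜] (A : Arr P k ε W) (n : ℕ) (f : ℕ → α → 𝕜) :
    ∫ y, ∏ i : Fin (k n), f i (y i) ∂(Pprod P k n)
      = ∏ i ∈ Finset.range (k n), ∫ a, f i a ∂(P n i) := by
  have := fun i => A.prob n i
  unfold Pprod
  rw [Finset.prod_range]
  exact integral_fintype_prod_eq_prod (fun (i : Fin (k n)) => f i)

lemma int_cexp (A : Arr P k ε W) (t : ℝ) (n i : ℕ) :
    ∫ a, Complex.exp (t * ((W n i a - ε n i : ℝ) : ℂ) * Complex.I) ∂(P n i)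
      = 1 + (((∫ a, (Real.cos (t * (W n i a - ε n i)) - 1) ∂(P n i) : ℝ) : ℂ)
        + ((∫ a, (Real.sin (t * (W n i a - ε n i)) - t * (W n i a - ε n i)) ∂(P n i) : ℝ) : ℂ)
          * Complex.I) := by
  have := A.prob n i
  have ic := A.intg (g := fun x => Real.cos (t * x) - 1) (by fun_prop) (cos_linB t) n i
  have is := A.intg (g := fun x => Real.sin (t * x) - t * x) (by fun_prop) (sin_linB t) n i
  have iX := (A.intX n i).const_mul t
  have e : ∀ a, Complex.exp (t * ((W n i a - ε n i : ℝ) : ℂ) * Complex.I)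
      = (1 + ((Real.cos (t * (W n i a - ε n i)) - 1 : ℝ) : ℂ)) +
        (((Real.sin (t * (W n i a - ε n i)) - t * (W n i a - ε n i) : ℝ) : ℂ)
          + ((t * (W n i a - ε n i) : ℝ) : ℂ)) * Complex.I := by
    intro a
    rw [← Complex.ofReal_mul, Complex.exp_mul_I, ← Complex.ofReal_cos, ← Complex.ofReal_sin]
    push_cast; ring
  simp_rw [e]
  have j1 : Integrable (fun a => (1 : ℂ) + ((Real.cos (t * (W n i a - ε n i)) - 1 : ℝ) : ℂ))
      (P n i) := (integrable_const _).add ic.ofReal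
  have j2 : Integrable (fun a =>
      (((Real.sin (t * (W n i a - ε n i)) - t * (W n i a - ε n i) : ℝ) : ℂ)
          + ((t * (W n i a - ε n i) : ℝ) : ℂ))) (P n i) := is.ofReal.add iX.ofReal
  rw [integral_add j1 (j2.mul_const _), integral_add (integrable_const _) ic.ofReal,
    integral_mul_const, integral_add is.ofReal iX.ofReal, integral_complex_ofReal,
    integral_complex_ofReal, integral_complex_ofReal, integral_const_mul, A.mean0]
  simp; ring

lemma charFun_Zr (A : Arr P k ε W) (t : ℝ) (n : ℕ) :
    charFun ((Pprod P k n).map (Zr k ε W n)) t = ∏ i ∈ Finset.range (k n),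
      (1 + (((∫ a, (Real.cos (t * (W n i a - ε n i)) - 1) ∂(P n i) : ℝ) : ℂ)
        + ((∫ a, (Real.sin (t * (W n i a - ε n i)) - t * (W n i a - ε n i)) ∂(P n i) : ℝ) : ℂ)
          * Complex.I)) := by
  rw [charFun_apply_real, integral_map (Zr_measurable A n).aemeasurable (by fun_prop)]
  simp_rw [← int_cexp A]
  rw [← int_pprod A n (fun i a => Complex.exp (t * ((W n i a - ε n i : ℝ) : ℂ) * Complex.I))]
  congr 1
  ext y
  rw [← Complex.exp_sum]
  congr 1
  unfold Zr
  push_cast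
  rw [Finset.mul_sum, Finset.sum_mul]

lemma I_to_F (A : Arr P k ε W) {s τ : ℝ} (hs : 0 ≤ s) (hτ : 0 < τ)
    (hJ : ∀ x : ℝ, 0 < x → Tendsto (J1 P k W x) atTop (𝓝 0))
    (hJ2 : Tendsto (J2 P k ε W τ) atTop (𝓝 s)) :
    WeakLim (fun n => (Pprod P k n).map (Zr k ε W n)) (gaussianReal 0 s.toNNReal) := by
  have hpr := lawZ_prob A
  let μs : ℕ → ProbabilityMeasure ℝ := fun n => ⟨(Pprod P k n).map (Zr k ε W n), hpr n⟩
  let μ0 : ProbabilityMeasure ℝ := ⟨gaussianReal 0 s.toNNReal, inferInstance⟩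
  suffices h : Tendsto μs atTop (𝓝 μ0) from
    (ProbabilityMeasure.tendsto_iff_forall_integral_tendsto.1 h)
  rw [ProbabilityMeasure.tendsto_iff_tendsto_charFun]
  intro t
  have mc : Measurable (fun x => Real.cos (t * x) - 1) := by fun_prop
  have ms : Measurable (fun x => Real.sin (t * x) - t * x) := by fun_prop
  have msa : Measurable (fun x => |Real.sin (t * x) - t * x|) := by fun_prop
  have lsa : LinB (fun x => |Real.sin (t * x) - t * x|) := by
    obtain ⟨K, h0, hK⟩ := sin_linB t
    exact ⟨K, h0, fun x hx => by rw [abs_abs]; exact hK x hx⟩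
  have qsa : Quad (fun x => |Real.sin (t * x) - t * x|) 0 := by
    intro η hη
    obtain ⟨x0, h0, hK⟩ := sin_quad t η hη
    exact ⟨x0, h0, fun x hx => by have := hK x hx; simpa using this⟩
  have Sc := seq_lim (fun _ hη => compare A mc (cos_linB t) (cos_quad t) hJ hτ hη) hJ2
  have Ss := seq_lim (fun _ hη => compare A ms (sin_linB t) (sin_quad t) hJ hτ hη) hJ2
  have Sa := seq_lim (fun _ hη => compare A msa lsa qsa hJ hτ hη) hJ2
  rw [zero_mul] at Ss Sa
  set z : ℕ → ℕ → ℂ := fun n i =>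
    (((∫ a, (Real.cos (t * (W n i a - ε n i)) - 1) ∂(P n i) : ℝ) : ℂ)
        + ((∫ a, (Real.sin (t * (W n i a - ε n i)) - t * (W n i a - ε n i)) ∂(P n i) : ℝ) : ℂ)
          * Complex.I) with hz
  have hzn : ∀ n i, ‖z n i‖ ≤ |∫ a, (Real.cos (t * (W n i a - ε n i)) - 1) ∂(P n i)|
      + |∫ a, (Real.sin (t * (W n i a - ε n i)) - t * (W n i a - ε n i)) ∂(P n i)| := by
    intro n i
    refine (norm_add_le _ _).trans ?_
    rw [norm_mul, Complex.norm_I, mul_one, Complex.norm_real, Complex.norm_real]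
    exact le_rfl
  have hlim : Tendsto (fun n => ∑ i ∈ Finset.range (k n), z n i) atTop
      (𝓝 (((-(t ^ 2 / 2) * s : ℝ) : ℂ) + ((0 : ℝ) : ℂ) * Complex.I)) := by
    have := ((Complex.continuous_ofReal.tendsto _).comp Sc).add
      (((Complex.continuous_ofReal.tendsto _).comp Ss).mul_const Complex.I)
    refine this.congr fun n => ?_
    simp only [Function.comp_apply, SS, hz]
    push_cast
    rw [Finset.sum_add_distrib, Finset.sum_mul]
  have key := prod_tendsto_complex (z := z) (M := t ^ 2 / 2 * s + 2) ?_ ?_ hlim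
  · have e1 : charFun (μ0 : Measure ℝ) t
        = Complex.exp (((-(t ^ 2 / 2) * s : ℝ) : ℂ) + ((0 : ℝ) : ℂ) * Complex.I) := by
      change charFun (gaussianReal 0 s.toNNReal) t = _
      rw [charFun_gaussianReal]
      congr 1
      have : ((s.toNNReal : ℝ) : ℂ) = s := by rw [Real.coe_toNNReal s hs]
      rw [this]; push_cast; ring
    rw [e1]
    refine key.congr fun n => ?_
    exact (charFun_Zr A t n).symm
  · have h1 : ∀ᶠ n in atTop, -(SS P k ε W (fun x => Real.cos (t * x) - 1) n)
        < t ^ 2 / 2 * s + 1 := Sc.neg.eventually (gt_mem_nhds (by linarith))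
    have h2 : ∀ᶠ n in atTop, SS P k ε W (fun x => |Real.sin (t * x) - t * x|) n < 1 :=
      Sa.eventually (gt_mem_nhds one_pos)
    filter_upwards [h1, h2] with n h1 h2
    have : ∑ i ∈ Finset.range (k n), ‖z n i‖
        ≤ -(SS P k ε W (fun x => Real.cos (t * x) - 1) n)
          + SS P k ε W (fun x => |Real.sin (t * x) - t * x|) n := by
      unfold SS
      rw [← Finset.sum_neg_distrib, ← Finset.sum_add_distrib]
      refine Finset.sum_le_sum fun i _ => (hzn n i).trans ?_
      refine add_le_add ?_ abs_integral_le_integral_abs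
      rw [abs_of_nonpos]
      exact integral_nonpos fun a => by
        have := Real.cos_le_one (t * (W n i a - ε n i))
        simp only [Pi.zero_apply]; linarith
    linarith
  · intro δ hδ
    filter_upwards [A.smallint' (cos_linB t) (δ / 2) (by positivity),
      A.smallint' (sin_linB t) (δ / 2) (by positivity)] with n h1 h2 i hi
    have a1 := h1 i hi
    have a2 := h2 i hi
    have := hzn n i
    linarith

end arr5
/-! ### The linear statistic: Laplace transforms -/

section arr6

variable {α : Type*} [MeasurableSpace α] {P : ℕ → ℕ → Measure α} {k : ℕ → ℕ}
    {ε : ℕ → ℕ → ℝ} {W : ℕ → ℕ → α → ℝ}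

lemma int_exp_single (A : Arr P k ε W) {l : ℝ} (hl : 0 ≤ l) (n i : ℕ) :
    Integrable (fun a => Real.exp (-(l * (W n i a - ε n i)))) (P n i) ∧
    ∫ a, Real.exp (-(l * (W n i a - ε n i))) ∂(P n i)
      = 1 + ∫ a, gL l (W n i a - ε n i) ∂(P n i) := by
  have := A.prob n i
  have hi := A.intg (gL_measurable l) (gL_linB hl) n i
  have hX := A.intX n i
  have e : ∀ a, Real.exp (-(l * (W n i a - ε n i)))
      = (1 - l * (W n i a - ε n i)) + gL l (W n i a - ε n i) := by intro a; unfold gL; ring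
  have hY : Integrable (fun a => 1 - l * (W n i a - ε n i)) (P n i) :=
    (integrable_const _).sub (hX.const_mul l)
  simp_rw [e]
  refine ⟨hY.add hi, ?_⟩
  rw [integral_add hY hi, integral_sub (integrable_const _) (hX.const_mul l),
    integral_const_mul, A.mean0]
  simp

lemma exp_Zr (l : ℝ) (n : ℕ) (y : Fin (k n) → α) :
    Real.exp (-(l * Zr k ε W n y)) = ∏ i : Fin (k n), Real.exp (-(l * (W n i (y i) - ε n i))) := by
  rw [← Real.exp_sum]; unfold Zr; rw [Finset.mul_sum, Finset.sum_neg_distrib]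

lemma int_exp_Zr (A : Arr P k ε W) {l : ℝ} (hl : 0 ≤ l) (n : ℕ) :
    Integrable (fun y => Real.exp (-(l * Zr k ε W n y))) (Pprod P k n) ∧
    ∫ y, Real.exp (-(l * Zr k ε W n y)) ∂(Pprod P k n)
      = ∏ i ∈ Finset.range (k n), (1 + ∫ a, gL l (W n i a - ε n i) ∂(P n i)) := by
  have := fun i => A.prob n i
  simp_rw [exp_Zr]
  constructor
  · exact Integrable.fintype_prod (f := fun (i : Fin (k n)) a =>
      Real.exp (-(l * (W n i a - ε n i)))) fun i => (int_exp_single A hl n i).1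
  · rw [int_pprod A n (fun i a => Real.exp (-(l * (W n i a - ε n i))))]
    exact Finset.prod_congr rfl fun i _ => (int_exp_single A hl n i).2

lemma igL_nonneg (l : ℝ) (n i : ℕ) :
    0 ≤ ∫ a, gL l (W n i a - ε n i) ∂(P n i) := integral_nonneg fun a => gL_nonneg _ _

lemma int_exp_Zr_le (A : Arr P k ε W) {l : ℝ} (hl : 0 ≤ l) (n : ℕ) :
    ∫ y, Real.exp (-(l * Zr k ε W n y)) ∂(Pprod P k n) ≤ Real.exp (SS P k ε W (gL l) n) := by
  rw [(int_exp_Zr A hl n).2]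
  unfold SS
  rw [Real.exp_sum]
  refine Finset.prod_le_prod (fun i _ => ?_) fun i _ => ?_
  · have := igL_nonneg (P := P) (ε := ε) (W := W) l n i; linarith
  · rw [add_comm]; exact Real.add_one_le_exp _

lemma one_add_sum_le {s : Finset ℕ} {f : ℕ → ℝ} (hf : ∀ i, 0 ≤ f i) :
    1 + ∑ i ∈ s, f i ≤ ∏ i ∈ s, (1 + f i) := by
  classical
  induction s using Finset.induction_on with
  | empty => simp
  | insert a s ha ih =>
    rw [Finset.sum_insert ha, Finset.prod_insert ha]
    have := hf a
    have h2 : 0 ≤ ∑ i ∈ s, f i := Finset.sum_nonneg fun i _ => hf i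
    nlinarith

lemma int_exp_Zr_ge (A : Arr P k ε W) {l : ℝ} (hl : 0 ≤ l) (n : ℕ) :
    1 + SS P k ε W (gL l) n ≤ ∫ y, Real.exp (-(l * Zr k ε W n y)) ∂(Pprod P k n) := by
  rw [(int_exp_Zr A hl n).2]
  exact one_add_sum_le fun i => igL_nonneg l n i

lemma V_half (A : Arr P k ε W) {l : ℝ} (hl : 0 ≤ l) (n : ℕ) :
    SS P k ε W (gL (l / 2)) n ≤ SS P k ε W (gL l) n / 2 := by
  unfold SS
  rw [Finset.sum_div]
  refine Finset.sum_le_sum fun i _ => ?_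
  rw [← integral_div]
  refine integral_mono (A.intg (gL_measurable _) (gL_linB (by positivity)) n i)
    ((A.intg (gL_measurable _) (gL_linB hl) n i).div_const _) fun a => ?_
  exact gL_half _ _

lemma V_double (A : Arr P k ε W) {l : ℝ} (hl : 0 ≤ l) (n : ℕ)
    (hn : ∀ i, i < k n → l * ε n i ≤ 1) :
    SS P k ε W (gL (2 * l)) n ≤ 11 * SS P k ε W (gL l) n := by
  unfold SS
  rw [Finset.mul_sum]
  refine Finset.sum_le_sum fun i hi => ?_
  rw [← integral_const_mul]
  refine integral_mono (A.intg (gL_measurable _) (gL_linB (by positivity)) n i)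
    ((A.intg (gL_measurable _) (gL_linB hl) n i).const_mul _) fun a => ?_
  refine gL_double ?_
  have := hn i (Finset.mem_range.1 hi)
  nlinarith [mul_nonneg hl (A.nonneg n i a)]

lemma PZ (A : Arr P k ε W) {l : ℝ} (hl : 0 ≤ l) (n : ℕ)
    (hn : ∀ i, i < k n → l * ε n i ≤ 1) (h1 : 1 < SS P k ε W (gL l) n)
    (h11 : SS P k ε W (gL l) n ≤ 11) :
    (Real.exp 121)⁻¹ / 4 ≤ (Pprod P k n).real {y | 3 / 2 ≤ Real.exp (-(l * Zr k ε W n y))} := by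
  have := Pprod_prob A n
  have hm := Zr_measurable A n
  set S := {y | 3 / 2 ≤ Real.exp (-(l * Zr k ε W n y))} with hS
  have mS : MeasurableSet S := measurableSet_le measurable_const (by fun_prop)
  set c : ℝ := 2 * Real.exp 121 with hc
  have hc0 : 0 < c := by positivity
  have i1 := (int_exp_Zr A hl n).1
  have i2 := (int_exp_Zr A (by positivity : (0 : ℝ) ≤ 2 * l) n).1
  have b1 := int_exp_Zr_ge A hl n
  have b2 := int_exp_Zr_le A (by positivity : (0 : ℝ) ≤ 2 * l) n
  have b3 : Real.exp (SS P k ε W (gL (2 * l)) n) ≤ Real.exp 121 := by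
    apply Real.exp_le_exp.2; have := V_double A hl n hn; linarith
  have iS : Integrable (fun y => c / 2 * S.indicator (1 : (Fin (k n) → α) → ℝ) y) (Pprod P k n) :=
    ((integrable_const (1 : ℝ)).indicator mS).const_mul _
  have iB : Integrable (fun y => (2 * c)⁻¹ * Real.exp (-(2 * l * Zr k ε W n y))) (Pprod P k n) :=
    i2.const_mul _
  have iC : Integrable (fun y => 3 / 2 + c / 2 * S.indicator (1 : (Fin (k n) → α) → ℝ) y) (Pprod P k n) :=
    (integrable_const _).add iS
  have key : ∫ y, Real.exp (-(l * Zr k ε W n y)) ∂(Pprod P k n) ≤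
      ∫ y, ((3 / 2 + c / 2 * S.indicator (1 : (Fin (k n) → α) → ℝ) y)
        + (2 * c)⁻¹ * Real.exp (-(2 * l * Zr k ε W n y))) ∂(Pprod P k n) := by
    refine integral_mono i1 (iC.add iB) fun y => ?_
    have e2 : Real.exp (-(2 * l * Zr k ε W n y)) = Real.exp (-(l * Zr k ε W n y)) ^ 2 := by
      rw [← Real.exp_nat_mul]; congr 1; push_cast; ring
    simp only [e2]
    set Y := Real.exp (-(l * Zr k ε W n y)) with hY
    have hY0 : 0 < Y := Real.exp_pos _
    by_cases hy : y ∈ S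
    · rw [Set.indicator_of_mem hy, Pi.one_apply, mul_one]
      have : Y ≤ c / 2 + (2 * c)⁻¹ * Y ^ 2 := by
        have : c / 2 + (2 * c)⁻¹ * Y ^ 2 - Y = (2 * c)⁻¹ * (Y - c) ^ 2 := by field_simp; ring
        have : 0 ≤ (2 * c)⁻¹ * (Y - c) ^ 2 := by positivity
        linarith
      linarith
    · rw [Set.indicator_of_notMem hy, mul_zero, add_zero]
      have h3 : Y < 3 / 2 := not_le.1 hy
      have : 0 ≤ (2 * c)⁻¹ * Y ^ 2 := by positivity
      linarith
  rw [integral_add iC iB, integral_add (integrable_const _) iS, integral_const_mul,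
    integral_const_mul, integral_indicator_one mS] at key
  simp only [integral_const, probReal_univ, one_smul] at key
  have h4 : (2 * c)⁻¹ * ∫ y, Real.exp (-(2 * l * Zr k ε W n y)) ∂(Pprod P k n) ≤ 1 / 4 := by
    rw [inv_mul_le_iff₀ (by positivity), hc]
    linarith
  have h5 : 1 / 4 ≤ c / 2 * (Pprod P k n).real S := by linarith
  rw [hc] at h5
  rw [div_le_iff₀ (by norm_num), inv_le_iff_one_le_mul₀ (Real.exp_pos _)]
  linarith

lemma V_bounded_aux (A : Arr P k ε W) {Λ B : ℝ} (hΛ : 0 < Λ) (n : ℕ)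
    (hn : ∀ i, i < k n → Λ * ε n i ≤ 1) (hB : 0 < B) (hBΛ : Λ ≤ Real.log (3 / 2) / B)
    (ht : (Pprod P k n).real {y | Zr k ε W n y ≤ -B} < (Real.exp 121)⁻¹ / 4) :
    SS P k ε W (gL Λ) n ≤ 1 := by
  have := Pprod_prob A n
  by_contra hcon
  have hlog : 0 < Real.log (3 / 2) := Real.log_pos (by norm_num)
  have hV : ∀ m : ℕ, SS P k ε W (gL (Λ / 2 ^ m)) n ≤ SS P k ε W (gL Λ) n / 2 ^ m := by
    intro m
    induction m with
    | zero => simp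
    | succ m ih =>
      have := V_half A (by positivity : 0 ≤ Λ / 2 ^ m) n
      rw [pow_succ, ← div_div, ← div_div]
      linarith
  have hex : ∃ m : ℕ, SS P k ε W (gL (Λ / 2 ^ m)) n ≤ 1 := by
    obtain ⟨m, hm⟩ := pow_unbounded_of_one_lt (SS P k ε W (gL Λ) n) (by norm_num : (1 : ℝ) < 2)
    refine ⟨m, (hV m).trans ?_⟩
    rw [div_le_one (by positivity)]; exact hm.le
  classical
  have hm0 : Nat.find hex ≠ 0 := by
    intro h0
    have := Nat.find_spec hex
    rw [h0] at this
    simp at this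
    exact hcon this
  obtain ⟨m, hm⟩ := Nat.exists_eq_succ_of_ne_zero hm0
  have h1 := Nat.find_spec hex
  rw [hm] at h1
  have h2 := Nat.find_min hex (m := m) (by omega)
  set l := Λ / 2 ^ m with hl
  have hl0 : 0 < l := by positivity
  have hlΛ : l ≤ Λ := div_le_self hΛ.le (one_le_pow₀ (by norm_num))
  have e : Λ / 2 ^ (m.succ) = l / 2 := by rw [Nat.succ_eq_add_one, pow_succ, ← div_div]
  rw [e] at h1
  have hn' : ∀ i, i < k n → l * ε n i ≤ 1 := fun i hi =>
    (mul_le_mul_of_nonneg_right hlΛ (A.e0 n i)).trans (hn i hi)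
  have h3 := V_double A (by positivity : 0 ≤ l / 2) n (fun i hi => by
    have := hn' i hi; nlinarith [mul_nonneg hl0.le (A.e0 n i)])
  rw [show 2 * (l / 2) = l by ring] at h3
  have h4 := PZ A hl0.le n hn' (not_le.1 h2) (by linarith)
  refine absurd (h4.trans (measureReal_mono ?_)) (not_le.2 ht)
  intro y hy
  have hy : 3 / 2 ≤ Real.exp (-(l * Zr k ε W n y)) := hy
  change Zr k ε W n y ≤ -B
  have h5 := (Real.log_le_iff_le_exp (by norm_num)).2 hy
  have h6 : Λ * B ≤ Real.log (3 / 2) := (le_div_iff₀ hB).1 hBΛ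
  by_contra h7
  have h7 := not_le.1 h7
  nlinarith

end arr6
/-! ### From convergence of the linear statistic to the truncated conditions -/

/-- Truncated exponential as a bounded continuous function. -/
def truncExp (l M : ℝ) (hM : 0 ≤ M) : BoundedContinuousFunction ℝ ℝ :=
  BoundedContinuousFunction.ofNormedAddCommGroup (fun z => min (Real.exp (-(l * z))) M)
    (by fun_prop) M (fun z => by
      rw [Real.norm_of_nonneg (le_min (Real.exp_pos _).le hM)]; exact min_le_right _ _)

lemma trunc_err {Ω : Type*} [MeasurableSpace Ω] {ρ : Measure Ω} [IsProbabilityMeasure ρ]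
    {Y : Ω → ℝ} (hY : ∀ ω, 0 < Y ω) (h1 : Integrable Y ρ) (h2 : Integrable (fun ω => Y ω ^ 2) ρ)
    {M : ℝ} (hM : 0 < M) :
    |∫ ω, Y ω ∂ρ - ∫ ω, min (Y ω) M ∂ρ| ≤ (∫ ω, Y ω ^ 2 ∂ρ) / M := by
  have h3 : Integrable (fun ω => min (Y ω) M) ρ := h1.inf (integrable_const M)
  rw [← integral_sub h1 h3, ← integral_div]
  refine abs_integral_le_integral_abs.trans ?_
  refine integral_mono (h1.sub h3).abs (h2.div_const M) fun ω => ?_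
  have := hY ω
  simp only
  rcases le_total (Y ω) M with h | h
  · rw [min_eq_left h, sub_self, abs_zero]; positivity
  · rw [min_eq_right h, abs_of_nonneg (by linarith), le_div_iff₀ hM]
    nlinarith

section arr7

variable {α : Type*} [MeasurableSpace α] {P : ℕ → ℕ → Measure α} {k : ℕ → ℕ}
    {ε : ℕ → ℕ → ℝ} {W : ℕ → ℕ → α → ℝ}

lemma tight_aux (A : Arr P k ε W) {v : NNReal}
    (hF : WeakLim (fun n => (Pprod P k n).map (Zr k ε W n)) (gaussianReal 0 v))
    {p : ℝ} (hp : 0 < p) :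
    ∃ B : ℝ, 0 < B ∧ ∀ᶠ n in atTop, (Pprod P k n).real {y | Zr k ε W n y ≤ -B} < p := by
  have h1 := (tendsto_cdf_atBot (gaussianReal 0 v)).eventually (gt_mem_nhds hp)
  obtain ⟨b, hb0, hb⟩ := ((eventually_lt_atBot (0 : ℝ)).and h1).exists
  refine ⟨-b, by linarith, ?_⟩
  have hpr := lawZ_prob A
  let μs : ℕ → ProbabilityMeasure ℝ := fun n => ⟨(Pprod P k n).map (Zr k ε W n), hpr n⟩
  let μ0 : ProbabilityMeasure ℝ := ⟨gaussianReal 0 v, inferInstance⟩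
  have h : Tendsto μs atTop (𝓝 μ0) :=
    ProbabilityMeasure.tendsto_iff_forall_integral_tendsto.2 hF
  have h2 := ProbabilityMeasure.limsup_measure_closed_le_of_tendsto h (isClosed_Iic (a := b))
  have h3 : (μ0 : Measure ℝ) (Set.Iic b) < ENNReal.ofReal p := by
    change gaussianReal 0 v (Set.Iic b) < _
    rw [← ofReal_cdf]
    exact (ENNReal.ofReal_lt_ofReal_iff hp).2 hb
  have h4 := eventually_lt_of_limsup_lt (lt_of_le_of_lt h2 h3)
  filter_upwards [h4] with n hn
  have hn : (Pprod P k n).map (Zr k ε W n) (Set.Iic b) < ENNReal.ofReal p := hn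
  rw [Measure.map_apply (Zr_measurable A n) measurableSet_Iic] at hn
  rw [neg_neg, measureReal_def]
  exact (ENNReal.lt_ofReal_iff_toReal_lt (ne_top_of_lt hn)).1 hn

lemma V_bounded (A : Arr P k ε W) {v : NNReal}
    (hF : WeakLim (fun n => (Pprod P k n).map (Zr k ε W n)) (gaussianReal 0 v))
    {l : ℝ} (hl : 0 < l) : ∃ C : ℝ, ∀ᶠ n in atTop, SS P k ε W (gL l) n ≤ C := by
  obtain ⟨B, hB, hev⟩ := tight_aux A hF (p := (Real.exp 121)⁻¹ / 4) (by positivity)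
  have hlog : 0 < Real.log (3 / 2) := Real.log_pos (by norm_num)
  obtain ⟨J, hJ⟩ := pow_unbounded_of_one_lt (l * B / Real.log (3 / 2)) (by norm_num : (1 : ℝ) < 2)
  refine ⟨11 ^ J, ?_⟩
  filter_upwards [hev, A.small (1 / l) (by positivity)] with n h1 h2
  have hle : ∀ i, i < k n → l * ε n i ≤ 1 := fun i hi => by
    have := h2 i hi; rw [le_div_iff₀ hl] at this; linarith
  have hle' : ∀ m : ℕ, ∀ i, i < k n → l / 2 ^ m * ε n i ≤ 1 := fun m i hi =>
    (mul_le_mul_of_nonneg_right (div_le_self hl.le (one_le_pow₀ (by norm_num)))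
      (A.e0 n i)).trans (hle i hi)
  have hJ1 : SS P k ε W (gL (l / 2 ^ J)) n ≤ 1 := by
    refine V_bounded_aux A (by positivity) n (hle' J) hB ?_ h1
    rw [div_lt_iff₀ hlog] at hJ
    rw [le_div_iff₀ hB, div_mul_eq_mul_div, div_le_iff₀ (by positivity)]
    linarith
  have hind : ∀ m : ℕ, SS P k ε W (gL l) n ≤ 11 ^ m * SS P k ε W (gL (l / 2 ^ m)) n := by
    intro m
    induction m with
    | zero => simp
    | succ m ih =>
      have h3 := V_double A (by positivity : 0 ≤ l / 2 ^ (m + 1)) n (hle' (m + 1))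
      rw [show 2 * (l / 2 ^ (m + 1)) = l / 2 ^ m by rw [pow_succ]; field_simp] at h3
      calc _ ≤ 11 ^ m * SS P k ε W (gL (l / 2 ^ m)) n := ih
        _ ≤ 11 ^ m * (11 * SS P k ε W (gL (l / 2 ^ (m + 1))) n) := by gcongr
        _ = _ := by ring
  calc _ ≤ 11 ^ J * SS P k ε W (gL (l / 2 ^ J)) n := hind J
    _ ≤ 11 ^ J * 1 := by gcongr
    _ = _ := mul_one _

lemma laplace_lim (A : Arr P k ε W) {v : NNReal}
    (hF : WeakLim (fun n => (Pprod P k n).map (Zr k ε W n)) (gaussianReal 0 v))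
    {l : ℝ} (hl : 0 < l) :
    Tendsto (fun n => ∫ y, Real.exp (-(l * Zr k ε W n y)) ∂(Pprod P k n)) atTop
      (𝓝 (Real.exp (v * l ^ 2 / 2))) := by
  obtain ⟨C, hC⟩ := V_bounded A hF (by positivity : 0 < 2 * l)
  have e2 : ∀ x, Real.exp (-(l * x)) ^ 2 = Real.exp (-(2 * l * x)) := fun x => by
    rw [← Real.exp_nat_mul]; congr 1; push_cast; ring
  have gi : ∀ t : ℝ, Integrable (fun x => Real.exp (-(t * x))) (gaussianReal 0 v) := fun t => by
    simpa using integrable_exp_mul_gaussianReal (μ := 0) (v := v) (-t)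
  have gv : ∫ x, Real.exp (-(l * x)) ∂(gaussianReal 0 v) = Real.exp (v * l ^ 2 / 2) := by
    have := congrFun (mgf_id_gaussianReal (μ := 0) (v := v)) (-l)
    unfold mgf at this
    simpa using this
  set C2 := ∫ x, Real.exp (-(2 * l * x)) ∂(gaussianReal 0 v) with hC2
  have hC20 : 0 ≤ C2 := integral_nonneg fun x => (Real.exp_pos _).le
  rw [Metric.tendsto_nhds]
  intro η hη
  set M : ℝ := 3 * (Real.exp C + C2 + 1) / η with hM
  have hM0 : 0 < M := by positivity
  have hw := hF (truncExp l M hM0.le)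
  have hw' := (Metric.tendsto_nhds.1 hw) (η / 3) (by positivity)
  filter_upwards [hw', hC] with n h1 h2
  have := Pprod_prob A n
  have hi1 := (int_exp_Zr A hl.le n).1
  have hi2 := (int_exp_Zr A (by positivity : 0 ≤ 2 * l) n).1
  have hb := int_exp_Zr_le A (by positivity : 0 ≤ 2 * l) n
  have t1 := trunc_err (ρ := Pprod P k n) (Y := fun y => Real.exp (-(l * Zr k ε W n y)))
    (fun _ => Real.exp_pos _) hi1 (by simpa only [e2] using hi2) hM0
  have t2 := trunc_err (ρ := gaussianReal 0 v) (Y := fun x => Real.exp (-(l * x)))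
    (fun _ => Real.exp_pos _) (gi l) (by simpa only [e2] using gi (2 * l)) hM0
  simp only [e2] at t1 t2
  rw [gv] at t2
  have em : ∫ x, truncExp l M hM0.le x ∂((Pprod P k n).map (Zr k ε W n))
      = ∫ y, min (Real.exp (-(l * Zr k ε W n y))) M ∂(Pprod P k n) :=
    integral_map (Zr_measurable A n).aemeasurable
      (truncExp l M hM0.le).continuous.measurable.aestronglyMeasurable
  rw [em, Real.dist_eq] at h1
  have h1 : |∫ y, min (Real.exp (-(l * Zr k ε W n y))) M ∂(Pprod P k n)
    - ∫ x, min (Real.exp (-(l * x))) M ∂(gaussianReal 0 v)| < η / 3 := h1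
  have b1 : (∫ y, Real.exp (-(2 * l * Zr k ε W n y)) ∂(Pprod P k n)) / M ≤ η / 3 := by
    rw [div_le_iff₀ hM0, hM]
    have : Real.exp (SS P k ε W (gL (2 * l)) n) ≤ Real.exp C := Real.exp_le_exp.2 h2
    have : η / 3 * (3 * (Real.exp C + C2 + 1) / η) = Real.exp C + C2 + 1 := by field_simp
    linarith
  have b2 : C2 / M ≤ η / 3 := by
    rw [div_le_iff₀ hM0, hM]
    have : η / 3 * (3 * (Real.exp C + C2 + 1) / η) = Real.exp C + C2 + 1 := by field_simp
    linarith [Real.exp_pos C]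
  rw [Real.dist_eq]
  rw [abs_lt] at *
  have t1 := abs_le.1 (t1.trans b1)
  have t2 := abs_le.1 (t2.trans b2)
  constructor <;> linarith [t1.1, t1.2, t2.1, t2.2, h1.1, h1.2]

lemma F_to_I (A : Arr P k ε W) {s : ℝ} (hs : 0 ≤ s)
    (hF : WeakLim (fun n => (Pprod P k n).map (Zr k ε W n)) (gaussianReal 0 s.toNNReal)) :
    (∀ x : ℝ, 0 < x → Tendsto (J1 P k W x) atTop (𝓝 0)) ∧
      ∀ τ : ℝ, 0 < τ → Tendsto (J2 P k ε W τ) atTop (𝓝 s) := by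
  have hV : ∀ l : ℝ, 0 < l → Tendsto (SS P k ε W (gL l)) atTop (𝓝 (l ^ 2 / 2 * s)) := by
    intro l hl
    have h1 := laplace_lim A hF hl
    simp_rw [(int_exp_Zr A hl.le _).2] at h1
    have h2 := sum_tendsto (fun n => sum_abs_nonneg fun i => igL_nonneg l n i)
      (A.smallint' (gL_linB hl.le)) (Real.exp_pos _) h1
    rw [Real.log_exp, Real.coe_toNNReal s hs] at h2
    rw [show l ^ 2 / 2 * s = s * l ^ 2 / 2 by ring]
    exact h2
  have e : hL = fun x => 3 * gL 1 x + (-(3 / 2)) * gL 2 x + 1 / 3 * gL 3 x := by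
    ext x; unfold hL; ring
  have l1 : LinB (gL 1) := gL_linB (by norm_num)
  have l2 : LinB (gL 2) := gL_linB (by norm_num)
  have l3 : LinB (gL 3) := gL_linB (by norm_num)
  have m := gL_measurable
  have hJ : ∀ x : ℝ, 0 < x → Tendsto (J1 P k W x) atTop (𝓝 0) := by
    refine tail_of_SS A (h := hL) ?_ ?_ (fun x _ => hL_nonneg x) (fun x0 hx0 => hL_lower hx0) ?_
    · rw [e]; have := m 1; have := m 2; have := m 3; fun_prop
    · rw [e]; exact linB3 l1 l2 l3 _ _ _
    · rw [e]
      have h1 := (hV 1 (by norm_num)).const_mul 3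
      have h2 := (hV 2 (by norm_num)).const_mul (-(3 / 2))
      have h3 := (hV 3 (by norm_num)).const_mul (1 / 3)
      have h4 := (h1.add h2).add h3
      convert h4 using 2
      · exact SS_lin3 A (m _) (m _) (m _) l1 l2 l3 _ _ _ _
      · ring
  refine ⟨hJ, fun τ hτ => ?_⟩
  exact seq_lim' (c := 1 ^ 2 / 2) (by norm_num)
    (fun _ hη => compare A (m 1) l1 (gL_quad 1) hJ hτ hη) (hV 1 one_pos)

end arr7

/-! ### Uniqueness of the Laplace transform on an interval -/

lemma lap_unique (m m' : Measure ℝ) [IsFiniteMeasure m] [IsFiniteMeasure m'] (a b : ℝ)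
    (hab : a < b)
    (hfin : ∀ t ∈ Set.Ioo a b, ∫⁻ x, ENNReal.ofReal (Real.exp (t * x)) ∂m ≠ ⊤)
    (heq : ∀ t ∈ Set.Ioo a b, ∫⁻ x, ENNReal.ofReal (Real.exp (t * x)) ∂m
      = ∫⁻ x, ENNReal.ofReal (Real.exp (t * x)) ∂m') : m = m' := by
  have key : ∀ (q : Measure ℝ) (t : ℝ), ∫⁻ x, ENNReal.ofReal (Real.exp (t * x)) ∂q ≠ ⊤ →
      Integrable (fun x => Real.exp (t * x)) q := by
    intro q t h
    refine ⟨by fun_prop, ?_⟩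
    rw [hasFiniteIntegral_iff_ofReal (Eventually.of_forall fun x => (Real.exp_pos _).le)]
    exact lt_top_iff_ne_top.2 h
  have hI : ∀ t ∈ Set.Ioo a b, Integrable (fun x => Real.exp (t * x)) m :=
    fun t ht => key m t (hfin t ht)
  have hI' : ∀ t ∈ Set.Ioo a b, Integrable (fun x => Real.exp (t * x)) m' :=
    fun t ht => key m' t (heq t ht ▸ hfin t ht)
  have hm : ∀ t ∈ Set.Ioo a b, mgf id m t = mgf id m' t := by
    intro t ht
    simp only [mgf, id]
    rw [integral_eq_lintegral_of_nonneg_ae (Eventually.of_forall fun x => (Real.exp_pos _).le)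
      (by fun_prop), integral_eq_lintegral_of_nonneg_ae
      (Eventually.of_forall fun x => (Real.exp_pos _).le) (by fun_prop), heq t ht]
  have hsub : Set.Ioo a b ⊆ interior (integrableExpSet id m) :=
    interior_maximal (fun t ht => by simpa [integrableExpSet] using hI t ht) isOpen_Ioo
  have hsub' : Set.Ioo a b ⊆ interior (integrableExpSet id m') :=
    interior_maximal (fun t ht => by simpa [integrableExpSet] using hI' t ht) isOpen_Ioo
  have hX : AnalyticOnNhd ℂ (complexMGF id m) {z | z.re ∈ Set.Ioo a b} :=
    fun z hz => analyticOnNhd_complexMGF z (hsub hz)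
  have hY : AnalyticOnNhd ℂ (complexMGF id m') {z | z.re ∈ Set.Ioo a b} :=
    fun z hz => analyticOnNhd_complexMGF z (hsub' hz)
  obtain ⟨c, hc⟩ : ∃ c, c ∈ Set.Ioo a b := Set.nonempty_Ioo.2 hab
  have hE : Set.EqOn (complexMGF id m) (complexMGF id m') {z | z.re ∈ Set.Ioo a b} := by
    refine AnalyticOnNhd.eqOn_of_preconnected_of_frequently_eq hX hY
      ((convex_Ioo a b).linear_preimage Complex.reLm).isPreconnected
      (z₀ := (c : ℂ)) (by simpa using hc) ?_
    have h_real : ∃ᶠ (x : ℝ) in 𝓝[≠] c, complexMGF id m x = complexMGF id m' x := by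
      refine Eventually.frequently ?_
      have : ∀ᶠ x in 𝓝[≠] c, x ∈ Set.Ioo a b :=
        nhdsWithin_le_nhds (isOpen_Ioo.mem_nhds hc)
      filter_upwards [this] with y hy
      rw [complexMGF_ofReal, complexMGF_ofReal, hm y hy]
    rw [frequently_iff_seq_forall] at h_real ⊢
    obtain ⟨xs, hx_tendsto, hx_eq⟩ := h_real
    refine ⟨fun n ↦ xs n, ?_, fun n ↦ ?_⟩
    · rw [tendsto_nhdsWithin_iff] at hx_tendsto ⊢
      constructor
      · exact (Complex.continuous_ofReal.tendsto c).comp hx_tendsto.1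
      · simpa using hx_tendsto.2
    · simp [hx_eq]
  have hcm : Measurable fun x : ℝ => ENNReal.ofReal (Real.exp (c * x)) := by fun_prop
  have hw : m.withDensity (fun x => ENNReal.ofReal (Real.exp (c * x)))
      = m'.withDensity (fun x => ENNReal.ofReal (Real.exp (c * x))) := by
    have f1 : IsFiniteMeasure (m.withDensity (fun x => ENNReal.ofReal (Real.exp (c * x)))) :=
      isFiniteMeasure_withDensity (hfin c hc)
    have f2 : IsFiniteMeasure (m'.withDensity (fun x => ENNReal.ofReal (Real.exp (c * x)))) :=
      isFiniteMeasure_withDensity (heq c hc ▸ hfin c hc)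
    apply Measure.ext_of_charFun
    funext t
    have e : ∀ q : Measure ℝ,
        charFun (q.withDensity (fun x => ENNReal.ofReal (Real.exp (c * x)))) t
        = complexMGF id q (c + t * Complex.I) := by
      intro q
      rw [charFun_apply_real, complexMGF, integral_withDensity_eq_integral_toReal_smul hcm
        (Eventually.of_forall fun x => ENNReal.ofReal_lt_top)]
      congr 1
      funext x
      rw [ENNReal.toReal_ofReal (Real.exp_pos _).le, Complex.real_smul, Complex.ofReal_exp,
        ← Complex.exp_add]
      congr 1
      simp only [id]
      push_cast
      ring
    rw [e, e]
    exact hE (by simpa using hc)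
  have back : ∀ q : Measure ℝ, (q.withDensity (fun x => ENNReal.ofReal (Real.exp (c * x)))).withDensity
      (fun x => ENNReal.ofReal (Real.exp (-(c * x)))) = q := by
    intro q
    rw [← withDensity_mul _ hcm (by fun_prop)]
    have : ((fun x => ENNReal.ofReal (Real.exp (c * x))) *
        fun x => ENNReal.ofReal (Real.exp (-(c * x)))) = 1 := by
      funext x
      simp only [Pi.mul_apply, Pi.one_apply]
      rw [← ENNReal.ofReal_mul (Real.exp_pos _).le, ← Real.exp_add]
      simp
    rw [this, withDensity_one]
  rw [← back m, hw, back m']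

/-! ### Functions on the extended line -/

def tauE (x : EReal) : ℝ := ((1 + EReal.exp x)⁻¹).toReal

lemma tauE_top : tauE ⊤ = 0 := by simp [tauE]
lemma tauE_bot : tauE ⊥ = 1 := by simp [tauE]
lemma tauE_coe (x : ℝ) : tauE x = (1 + Real.exp x)⁻¹ := by
  have : (1 : ENNReal) = ENNReal.ofReal 1 := by simp
  rw [tauE, EReal.exp_coe, this, ← ENNReal.ofReal_add zero_le_one (Real.exp_pos _).le,
    ENNReal.toReal_inv, ENNReal.toReal_ofReal (by positivity)]

lemma tauE_cont : Continuous tauE := by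
  unfold tauE
  have h1 : Continuous fun x : EReal => (1 + EReal.exp x)⁻¹ :=
    (continuous_const.add ENNReal.continuous_exp).inv
  refine ENNReal.continuousOn_toReal.comp_continuous h1 fun x => ?_
  simp

lemma tauE_nonneg (x : EReal) : 0 ≤ tauE x := ENNReal.toReal_nonneg
lemma tauE_le_one (x : EReal) : tauE x ≤ 1 := by
  induction x with
  | bot => rw [tauE_bot]
  | top => rw [tauE_top]; exact zero_le_one
  | coe x => rw [tauE_coe]; exact inv_le_one_of_one_le₀ (by linarith [Real.exp_pos x])

def sigE (x : EReal) : ℝ := 1 - tauE x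
lemma sigE_cont : Continuous sigE := continuous_const.sub tauE_cont
lemma sigE_nonneg (x : EReal) : 0 ≤ sigE x := sub_nonneg.2 (tauE_le_one x)
lemma sigE_le_one (x : EReal) : sigE x ≤ 1 := by unfold sigE; linarith [tauE_nonneg x]
lemma sigE_coe (x : ℝ) : sigE x = Real.exp x * (1 + Real.exp x)⁻¹ := by
  rw [sigE, tauE_coe]
  have := Real.exp_pos x
  field_simp
  ring
lemma sigE_top : sigE ⊤ = 1 := by simp [sigE, tauE_top]
lemma sigE_bot : sigE ⊥ = 0 := by simp [sigE, tauE_bot]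

def FE (r : ℝ) (x : EReal) : ℝ := sigE x ^ r * tauE x ^ (1 - r)

lemma FE_nonneg (r : ℝ) (x : EReal) : 0 ≤ FE r x :=
  mul_nonneg (Real.rpow_nonneg (sigE_nonneg x) _) (Real.rpow_nonneg (tauE_nonneg x) _)

lemma FE_le_one {r : ℝ} (h0 : 0 ≤ r) (h1 : r ≤ 1) (x : EReal) : FE r x ≤ 1 :=
  mul_le_one₀ (Real.rpow_le_one (sigE_nonneg x) (sigE_le_one x) h0)
    (Real.rpow_nonneg (tauE_nonneg x) _)
    (Real.rpow_le_one (tauE_nonneg x) (tauE_le_one x) (by linarith))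

lemma FE_cont {r : ℝ} (h0 : 0 < r) (h1 : r < 1) : Continuous (FE r) :=
  (sigE_cont.rpow_const fun _ => Or.inr h0.le).mul
    (tauE_cont.rpow_const fun _ => Or.inr (by linarith))

lemma FE_coe (r x : ℝ) : FE r x = Real.exp (r * x) * (1 + Real.exp x)⁻¹ := by
  have he := Real.exp_pos x
  have hp : 0 < (1 + Real.exp x)⁻¹ := by positivity
  rw [FE, sigE_coe, tauE_coe, Real.mul_rpow he.le hp.le, mul_assoc, ← Real.rpow_add hp,
    ← Real.exp_mul, mul_comm x r]
  simp

lemma FE_top {r : ℝ} (h1 : r < 1) : FE r ⊤ = 0 := by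
  rw [FE, tauE_top, Real.zero_rpow (by linarith), mul_zero]
lemma FE_bot {r : ℝ} (h0 : 0 < r) : FE r ⊥ = 0 := by
  rw [FE, sigE_bot, Real.zero_rpow (by linarith), zero_mul]

def bcE (f : EReal → ℝ) (hf : Continuous f) (h : ∀ x, 0 ≤ f x) (h' : ∀ x, f x ≤ 1) :
    BoundedContinuousFunction EReal ℝ :=
  BoundedContinuousFunction.ofNormedAddCommGroup f hf 1 fun x => by
    rw [Real.norm_eq_abs, abs_of_nonneg (h x)]; exact h' x

/-! ### The relation between the two limit laws -/

structure RelE (ν1 ν2 : Measure EReal) : Prop where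
  one : ν1 = (ν1 + ν2).withDensity fun x => ENNReal.ofReal (tauE x)
  two : ν2 = (ν1 + ν2).withDensity fun x => ENNReal.ofReal (sigE x)

def HlimE (ν1 ν2 : Measure EReal) (r : ℝ) : ℝ := ∫ x, FE r x ∂(ν1 + ν2)

def rlE (ν : Measure EReal) : Measure ℝ := ν.comap (fun x : ℝ => (x : EReal))

instance rlE_fin (ν : Measure EReal) [IsFiniteMeasure ν] : IsFiniteMeasure (rlE ν) := by
  unfold rlE
  infer_instance

lemma rlE_map (ν : Measure EReal) :
    (rlE ν).map (fun x : ℝ => (x : EReal)) = ν.restrict (Set.range fun x : ℝ => (x : EReal)) :=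
  EReal.measurableEmbedding_coe.map_comap ν

lemma compl_range : (Set.range fun x : ℝ => (x : EReal))ᶜ = {x : EReal | x = ⊥ ∨ x = ⊤} := by
  ext x
  induction x <;> simp

lemma rlE_lintegral (ν : Measure EReal) (f : ℝ → ENNReal) :
    ∫⁻ x, f x ∂(rlE ν)
      = ∫⁻ x, (Set.range fun x : ℝ => (x : EReal)).indicator (fun x => f x.toReal) x ∂ν := by
  rw [lintegral_indicator EReal.measurableEmbedding_coe.measurableSet_range, ← rlE_map,
    EReal.measurableEmbedding_coe.lintegral_map]
  simp

lemma rlE_gauss {ν : Measure EReal} [IsProbabilityMeasure ν] (a s : ℝ) :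
    ν = gaussE a s ↔ rlE ν = gaussianReal a s.toNNReal := by
  constructor
  · rintro h
    rw [h, rlE, gaussE, EReal.measurableEmbedding_coe.comap_map]
  · intro h
    have h1 := rlE_map ν
    rw [h] at h1
    have h2 : ν (Set.range fun x : ℝ => (x : EReal)) = 1 := by
      rw [← Measure.restrict_apply_univ, ← h1, Measure.map_apply measurable_coe_real_ereal .univ]
      simp
    have h3 : ν.restrict (Set.range fun x : ℝ => (x : EReal)) = ν := by
      apply Measure.restrict_eq_self_of_ae_mem
      rw [ae_iff]
      exact (prob_compl_eq_zero_iff EReal.measurableEmbedding_coe.measurableSet_range).2 h2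
    rw [← h3, ← h1, gaussE]

lemma gaussE_real (a s : ℝ) : gaussE a s {x : EReal | x = ⊥ ∨ x = ⊤} = 0 := by
  rw [gaussE, ← compl_range, Measure.map_apply measurable_coe_real_ereal
    EReal.measurableEmbedding_coe.measurableSet_range.compl]
  simp

lemma gauss_lint (a s t : ℝ) (hs : 0 ≤ s) :
    ∫⁻ x, ENNReal.ofReal (Real.exp (t * x)) ∂(gaussianReal a s.toNNReal)
      = ENNReal.ofReal (Real.exp (a * t + s * t ^ 2 / 2)) := by
  rw [← ofReal_integral_eq_lintegral_ofReal (integrable_exp_mul_gaussianReal t)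
    (Eventually.of_forall fun x => (Real.exp_pos _).le)]
  have := congrFun (mgf_id_gaussianReal (μ := a) (v := s.toNNReal)) t
  simp only [mgf, id, Real.coe_toNNReal s hs] at this
  rw [this]

section rel
variable {ν1 ν2 : Measure EReal} [IsProbabilityMeasure ν1] [IsProbabilityMeasure ν2]

lemma FE_integrable {r : ℝ} (h0 : 0 < r) (h1 : r < 1) (ν : Measure EReal) [IsFiniteMeasure ν] :
    Integrable (FE r) ν :=
  (bcE (FE r) (FE_cont h0 h1) (FE_nonneg r) (FE_le_one h0.le h1.le)).integrable ν

lemma HlimE_add {r : ℝ} (h0 : 0 < r) (h1 : r < 1) :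
    HlimE ν1 ν2 r = ∫ x, FE r x ∂ν1 + ∫ x, FE r x ∂ν2 :=
  integral_add_measure (FE_integrable h0 h1 _) (FE_integrable h0 h1 _)

lemma HlimE_lint {r : ℝ} (h0 : 0 < r) (h1 : r < 1) :
    ∫⁻ x, ENNReal.ofReal (FE r x) ∂(ν1 + ν2) = ENNReal.ofReal (HlimE ν1 ν2 r) :=
  (ofReal_integral_eq_lintegral_ofReal (FE_integrable h0 h1 _)
    (Eventually.of_forall (FE_nonneg r))).symm

lemma ind_meas (t : ℝ) : Measurable ((Set.range fun x : ℝ => (x : EReal)).indicator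
    (fun x : EReal => ENNReal.ofReal (Real.exp (t * x.toReal)))) := by
  refine Measurable.indicator ?_ EReal.measurableEmbedding_coe.measurableSet_range
  have := measurable_ereal_toReal
  fun_prop

lemma lap1 (h : RelE ν1 ν2) {r : ℝ} (h0 : 0 < r) (h1 : r < 1) :
    ∫⁻ x, ENNReal.ofReal (Real.exp (r * x)) ∂(rlE ν1) = ENNReal.ofReal (HlimE ν1 ν2 r) := by
  rw [rlE_lintegral, h.one, lintegral_withDensity_eq_lintegral_mul _
    (tauE_cont.measurable.ennreal_ofReal) (ind_meas r), ← h.one, ← HlimE_lint h0 h1]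
  congr 1
  funext x
  simp only [Pi.mul_apply]
  induction x with
  | bot => simp [FE_bot h0]
  | top => simp [FE_top h1]
  | coe x =>
    rw [Set.indicator_of_mem (Set.mem_range_self x), ← ENNReal.ofReal_mul (tauE_nonneg _), FE_coe, tauE_coe,
      EReal.toReal_coe, mul_comm]

lemma lap2 (h : RelE ν1 ν2) {r : ℝ} (h0 : 0 < r) (h1 : r < 1) :
    ∫⁻ x, ENNReal.ofReal (Real.exp ((r - 1) * x)) ∂(rlE ν2) = ENNReal.ofReal (HlimE ν1 ν2 r) := by
  rw [rlE_lintegral]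
  conv_lhs => rw [h.two]
  rw [lintegral_withDensity_eq_lintegral_mul _
    (sigE_cont.measurable.ennreal_ofReal) (ind_meas (r - 1)), ← HlimE_lint h0 h1]
  congr 1
  funext x
  simp only [Pi.mul_apply]
  induction x with
  | bot => simp [FE_bot h0]
  | top => simp [FE_top h1]
  | coe x =>
    rw [Set.indicator_of_mem (Set.mem_range_self x), ← ENNReal.ofReal_mul (sigE_nonneg _), FE_coe, sigE_coe,
      EReal.toReal_coe, mul_right_comm, ← Real.exp_add]
    ring_nf

lemma HlimE_nonneg (r : ℝ) : 0 ≤ HlimE ν1 ν2 r := integral_nonneg (FE_nonneg r)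

lemma H_of_g1 (h : RelE ν1 ν2) {a s : ℝ} (hs : 0 ≤ s) (hg : ν1 = gaussE a s) {r : ℝ}
    (h0 : 0 < r) (h1 : r < 1) : HlimE ν1 ν2 r = Real.exp (a * r + s * r ^ 2 / 2) := by
  have := lap1 h h0 h1
  rw [(rlE_gauss a s).1 hg, gauss_lint a s r hs,
    ENNReal.ofReal_eq_ofReal_iff (Real.exp_pos _).le (HlimE_nonneg r)] at this
  exact this.symm

lemma H_of_g2 (h : RelE ν1 ν2) {a s : ℝ} (hs : 0 ≤ s) (hg : ν2 = gaussE a s) {r : ℝ}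
    (h0 : 0 < r) (h1 : r < 1) :
    HlimE ν1 ν2 r = Real.exp (a * (r - 1) + s * (r - 1) ^ 2 / 2) := by
  have := lap2 h h0 h1
  rw [(rlE_gauss a s).1 hg, gauss_lint a s (r - 1) hs,
    ENNReal.ofReal_eq_ofReal_iff (Real.exp_pos _).le (HlimE_nonneg r)] at this
  exact this.symm

lemma g1_of_H (h : RelE ν1 ν2) {a s : ℝ} (hs : 0 ≤ s)
    (hH : ∀ r, 0 < r → r < 1 → HlimE ν1 ν2 r = Real.exp (a * r + s * r ^ 2 / 2)) :
    ν1 = gaussE a s := by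
  rw [rlE_gauss]
  refine lap_unique _ _ 0 1 one_pos (fun t ht => ?_) (fun t ht => ?_)
  · rw [lap1 h ht.1 ht.2]; exact ENNReal.ofReal_ne_top
  · rw [lap1 h ht.1 ht.2, gauss_lint _ _ _ hs, hH t ht.1 ht.2]

lemma g2_of_H (h : RelE ν1 ν2) {a s : ℝ} (hs : 0 ≤ s)
    (hH : ∀ r, 0 < r → r < 1 → HlimE ν1 ν2 r = Real.exp (a * (r - 1) + s * (r - 1) ^ 2 / 2)) :
    ν2 = gaussE a s := by
  rw [rlE_gauss]
  have e : ∀ t ∈ Set.Ioo (-1 : ℝ) 0, ∫⁻ x, ENNReal.ofReal (Real.exp (t * x)) ∂(rlE ν2)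
      = ENNReal.ofReal (HlimE ν1 ν2 (t + 1)) := by
    intro t ht
    have := lap2 h (r := t + 1) (by linarith [ht.1]) (by linarith [ht.2])
    simpa using this
  refine lap_unique _ _ (-1) 0 (by norm_num) (fun t ht => ?_) (fun t ht => ?_)
  · rw [e t ht]; exact ENNReal.ofReal_ne_top
  · rw [e t ht, gauss_lint _ _ _ hs, hH (t + 1) (by linarith [ht.1]) (by linarith [ht.2])]
    simp

lemma H_pos (hr : ν2 {x : EReal | x = ⊥ ∨ x = ⊤} = 0) {r : ℝ}
    (h0 : 0 < r) (h1 : r < 1) : 0 < HlimE ν1 ν2 r := by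
  rw [HlimE_add h0 h1]
  refine add_pos_of_nonneg_of_pos (integral_nonneg (FE_nonneg r)) ?_
  rw [integral_pos_iff_support_of_nonneg (FE_nonneg r) (FE_integrable h0 h1 _)]
  have h2 : ν2 {x : EReal | x = ⊥ ∨ x = ⊤}ᶜ = 1 := by
    rw [prob_compl_eq_one_iff]
    · exact hr
    · rw [← compl_range]
      exact EReal.measurableEmbedding_coe.measurableSet_range.compl
  refine lt_of_lt_of_le (by rw [h2]; exact one_pos) (measure_mono (t := Function.support (FE r)) ?_)
  intro x hx
  rw [← compl_range, compl_compl] at hx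
  obtain ⟨y, rfl⟩ := hx
  rw [Function.mem_support, FE_coe]
  positivity

lemma H_to_one (h : RelE ν1 ν2) (hr : ν2 {x : EReal | x = ⊥ ∨ x = ⊤} = 0) :
    Tendsto (HlimE ν1 ν2) (𝓝[<] 1) (𝓝 1) := by
  -- dominated convergence
  have hz : (ν1 + ν2) {x : EReal | x = ⊤} = 0 := by
    have hle : ν2 {x : EReal | x = ⊤} = 0 := measure_mono_null (fun x hx => Or.inr hx) hr
    have h1 : ν1 {x : EReal | x = ⊤} = 0 := by
      have e : {x : EReal | x = ⊤} = {⊤} := rfl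
      rw [h.one, e, withDensity_apply _ (measurableSet_singleton _), lintegral_singleton,
        tauE_top]
      simp
    rw [Measure.add_apply, hle, h1, add_zero]
  have hlim : Tendsto (fun r => ∫ x, FE r x ∂(ν1 + ν2)) (𝓝[<] 1)
      (𝓝 (∫ x, sigE x ∂(ν1 + ν2))) := by
    refine tendsto_integral_filter_of_dominated_convergence (fun _ => 1) ?_ ?_
      (integrable_const _) ?_
    · filter_upwards [Ioo_mem_nhdsLT (show (0 : ℝ) < 1 from one_pos)] with r hr
      exact (FE_cont hr.1 hr.2).aestronglyMeasurable
    · filter_upwards [Ioo_mem_nhdsLT (show (0 : ℝ) < 1 from one_pos)] with r hr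
      refine Eventually.of_forall fun x => ?_
      rw [Real.norm_eq_abs, abs_of_nonneg (FE_nonneg r x)]
      exact FE_le_one hr.1.le hr.2.le x
    · have hne : ∀ᵐ x ∂(ν1 + ν2), x ≠ ⊤ := by
        rw [ae_iff]
        simpa using hz
      filter_upwards [hne] with x hx
      induction x with
      | top => exact absurd rfl hx
      | bot =>
        rw [sigE_bot]
        refine tendsto_const_nhds.congr' ?_
        filter_upwards [Ioo_mem_nhdsLT (show (0 : ℝ) < 1 from one_pos)] with r hr
        rw [FE_bot hr.1]
      | coe x =>
        simp_rw [FE_coe, sigE_coe]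
        have : Continuous fun r : ℝ => Real.exp (r * x) * (1 + Real.exp x)⁻¹ := by fun_prop
        have h2 := this.tendsto 1
        rw [one_mul] at h2
        exact h2.mono_left nhdsWithin_le_nhds
  have h1 : ∫ x, sigE x ∂(ν1 + ν2) = 1 := by
    have h2 : ν2 Set.univ = ∫⁻ x, ENNReal.ofReal (sigE x) ∂(ν1 + ν2) := by
      conv_lhs => rw [h.two]
      rw [withDensity_apply _ .univ, Measure.restrict_univ]
    rw [integral_eq_lintegral_of_nonneg_ae (Eventually.of_forall sigE_nonneg)
      sigE_cont.aestronglyMeasurable, ← h2]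
    simp
  rw [h1] at hlim
  exact hlim

end rel

lemma RelE_of (ν1 ν2 : Measure EReal) [IsProbabilityMeasure ν1] [IsProbabilityMeasure ν2]
    (h1 : ∀ f : BoundedContinuousFunction EReal ℝ,
      ∫ x, f x * tauE x ∂ν1 + ∫ x, f x * tauE x ∂ν2 = ∫ x, f x ∂ν1)
    (h2 : ∀ f : BoundedContinuousFunction EReal ℝ,
      ∫ x, f x * sigE x ∂ν1 + ∫ x, f x * sigE x ∂ν2 = ∫ x, f x ∂ν2) : RelE ν1 ν2 := by
  have gen : ∀ (g : EReal → ℝ) (hg : Continuous g) (g0 : ∀ x, 0 ≤ g x) (g1 : ∀ x, g x ≤ 1)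
      (ν : Measure EReal) [IsProbabilityMeasure ν],
      (∀ f : BoundedContinuousFunction EReal ℝ,
        ∫ x, f x * g x ∂ν1 + ∫ x, f x * g x ∂ν2 = ∫ x, f x ∂ν) →
      ν = (ν1 + ν2).withDensity fun x => ENNReal.ofReal (g x) := by
    intro g hg g0 g1 ν _ hf
    have : IsFiniteMeasure ((ν1 + ν2).withDensity fun x => ENNReal.ofReal (g x)) := by
      refine isFiniteMeasure_withDensity_ofReal ?_
      exact ((bcE g hg g0 g1).integrable (ν1 + ν2)).2
    refine ext_of_forall_integral_eq_of_IsFiniteMeasure fun f => ?_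
    have i1 : ∀ (q : Measure EReal) [IsFiniteMeasure q], Integrable (fun x => f x * g x) q :=
      fun q _ => (f * bcE g hg g0 g1).integrable q
    rw [integral_withDensity_eq_integral_toReal_smul hg.measurable.ennreal_ofReal
      (Eventually.of_forall fun x => ENNReal.ofReal_lt_top), ← hf f,
      ← integral_add_measure (i1 _) (i1 _)]
    congr 1
    funext x
    rw [ENNReal.toReal_ofReal (g0 x), smul_eq_mul, mul_comm]
  exact ⟨gen _ tauE_cont tauE_nonneg tauE_le_one _ h1, gen _ sigE_cont sigE_nonneg sigE_le_one _ h2⟩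

/-! ### The detection model -/

structure DetM {α : Type*} [MeasurableSpace α] (k : ℕ → ℕ) (P μ : ℕ → ℕ → Measure α)
    (ε : ℕ → ℕ → ℝ) : Prop where
  hk : Tendsto k atTop atTop
  hP : ∀ n i, IsProbabilityMeasure (P n i)
  hμ : ∀ n i, IsProbabilityMeasure (μ n i)
  hac : ∀ n i, μ n i ≪ P n i
  hε : ∀ n i, ε n i ∈ Set.Icc (0 : ℝ) 1
  hεmax : Tendsto (fun n => ⨆ i : Fin (k n), ε n i) atTop (nhds 0)

section model
variable {α : Type*} [MeasurableSpace α] {k : ℕ → ℕ} {P μ : ℕ → ℕ → Measure α} {ε : ℕ → ℕ → ℝ}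

def WM (P μ : ℕ → ℕ → Measure α) (ε : ℕ → ℕ → ℝ) (n i : ℕ) (a : α) : ℝ :=
  ε n i * dmuP (μ n i) (P n i) a

lemma dmuP_meas (m p : Measure α) : Measurable (dmuP m p) :=
  (Measure.measurable_rnDeriv m p).ennreal_toReal

lemma dmuP_int (m p : Measure α) [IsProbabilityMeasure m] [IsProbabilityMeasure p] :
    Integrable (dmuP m p) p := Measure.integrable_toReal_rnDeriv

lemma dmuP_set {m p : Measure α} [IsProbabilityMeasure m] [IsProbabilityMeasure p] (h : m ≪ p)
    {s : Set α} (hs : MeasurableSet s) : ∫ a in s, dmuP m p a ∂p = m.real s :=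
  Measure.setIntegral_toReal_rnDeriv' h hs

lemma dmuP_mean {m p : Measure α} [IsProbabilityMeasure m] [IsProbabilityMeasure p] (h : m ≪ p) :
    ∫ a, dmuP m p a ∂p = 1 := by
  have := dmuP_set h MeasurableSet.univ
  simpa using this

lemma dmuP_nonneg (m p : Measure α) (a : α) : 0 ≤ dmuP m p a := ENNReal.toReal_nonneg

lemma DetM.small (M : DetM k P μ ε) (δ : ℝ) (hδ : 0 < δ) :
    ∀ᶠ n in atTop, ∀ i, i < k n → ε n i ≤ δ := by
  filter_upwards [M.hεmax.eventually (gt_mem_nhds hδ)] with n hn i hi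
  refine le_trans ?_ hn.le
  exact le_ciSup (f := fun i : Fin (k n) => ε n i) (Set.finite_range _).bddAbove ⟨i, hi⟩

lemma DetM.arr (M : DetM k P μ ε) : Arr P k ε (WM P μ ε) where
  prob := M.hP
  meas n i := (dmuP_meas _ _).const_mul _
  nonneg n i a := mul_nonneg (M.hε n i).1 (dmuP_nonneg _ _ _)
  int n i := by
    have := M.hP n i
    have := M.hμ n i
    exact (dmuP_int _ _).const_mul _
  mean n i := by
    have := M.hP n i
    have := M.hμ n i
    unfold WM
    rw [integral_const_mul, dmuP_mean (M.hac n i), mul_one]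
  e0 n i := (M.hε n i).1
  e1 n i := (M.hε n i).2
  small := M.small

lemma DetM.I1_eq (M : DetM k P μ ε) (x : ℝ) (n : ℕ) :
    I1 P μ ε k x n = J1 P k (WM P μ ε) x n := by
  unfold I1 J1
  refine Finset.sum_congr rfl fun i _ => ?_
  have := M.hP n i
  have := M.hμ n i
  have hm : MeasurableSet {a | x < ε n i * dmuP (μ n i) (P n i) a} :=
    measurableSet_lt measurable_const ((dmuP_meas _ _).const_mul _)
  have e := dmuP_set (M.hac n i) hm
  rw [measureReal_def] at e
  rw [← e, ← integral_const_mul, ← integral_indicator hm]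
  rfl

lemma DetM.I2_eq (M : DetM k P μ ε) (x : ℝ) (n : ℕ) :
    I2 P μ ε k x n = J2 P k ε (WM P μ ε) x n := by
  unfold I2 J2
  refine Finset.sum_congr rfl fun i _ => ?_
  have := M.hP n i
  have := M.hμ n i
  rcases eq_or_lt_of_le (M.hε n i).1 with h0 | hpos
  · have : ∀ a, WM P μ ε n i a = 0 := fun a => by unfold WM; rw [← h0, zero_mul]
    simp only [this, ← h0]
    simp
  have hmW := M.arr.meas n i
  have hm : MeasurableSet {a | WM P μ ε n i a ≤ x} := measurableSet_le hmW measurable_const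
  have hI : Integrable (fun a => dmuP (μ n i) (P n i) a ^ 2 *
      (if ε n i * dmuP (μ n i) (P n i) a ≤ x then (1 : ℝ) else 0)) (P n i) := by
    refine Integrable.of_bound (C := (|x| / ε n i) ^ 2) ?_ ?_
    · refine Measurable.aestronglyMeasurable ?_
      exact ((dmuP_meas _ _).pow_const 2).mul (Measurable.ite hm measurable_const measurable_const)
    · refine Eventually.of_forall fun a => ?_
      rw [Real.norm_eq_abs]
      split_ifs with h
      · rw [mul_one, abs_of_nonneg (sq_nonneg _)]
        have h1 : dmuP (μ n i) (P n i) a ≤ |x| / ε n i := by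
          rw [le_div_iff₀ hpos, mul_comm]
          exact h.trans (le_abs_self x)
        exact pow_le_pow_left₀ (dmuP_nonneg _ _ _) h1 2
      · rw [mul_zero, abs_zero]; positivity
  rw [integral_sub hI (integrable_const _), mul_sub, ← integral_const_mul]
  simp only [integral_const, probReal_univ, smul_eq_mul, mul_one]
  congr 2
  funext a
  unfold WM
  split_ifs <;> ring

lemma Zstat_eq : Zstat P μ ε k = Zr k ε (WM P μ ε) := by
  funext n y
  unfold Zstat Zr WM
  exact Finset.sum_congr rfl fun i _ => by ring

/-- density of `Q` with respect to `P` -/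
def dM (P μ : ℕ → ℕ → Measure α) (ε : ℕ → ℕ → ℝ) (n i : ℕ) (a : α) : ℝ :=
  1 + (WM P μ ε n i a - ε n i)

lemma DetM.dM_nonneg (M : DetM k P μ ε) (n i : ℕ) (a : α) : 0 ≤ dM P μ ε n i a := by
  unfold dM; linarith [M.arr.nonneg n i a, M.arr.e1 n i]

lemma DetM.dM_meas (M : DetM k P μ ε) (n i : ℕ) : Measurable (dM P μ ε n i) :=
  ((M.arr.meas n i).sub_const _).const_add _

lemma DetM.Qmix_eq (M : DetM k P μ ε) (n i : ℕ) :
    Qmix (P n i) (μ n i) (ε n i) = (P n i).withDensity fun a => ENNReal.ofReal (dM P μ ε n i a) := by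
  have := M.hP n i
  have := M.hμ n i
  have h1 : (fun a => ENNReal.ofReal (dM P μ ε n i a)) =ᵐ[P n i]
      (fun _ => ENNReal.ofReal (1 - ε n i)) +
        (ENNReal.ofReal (ε n i) • (μ n i).rnDeriv (P n i)) := by
    filter_upwards [Measure.rnDeriv_lt_top (μ n i) (P n i)] with a ha
    simp only [Pi.add_apply, Pi.smul_apply, smul_eq_mul]
    have : dM P μ ε n i a = (1 - ε n i) + ε n i * dmuP (μ n i) (P n i) a := by
      unfold dM WM; ring
    rw [this, ENNReal.ofReal_add (by linarith [(M.hε n i).2])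
      (mul_nonneg (M.hε n i).1 (dmuP_nonneg _ _ _)), ENNReal.ofReal_mul (M.hε n i).1, dmuP,
      ENNReal.ofReal_toReal ha.ne]
  rw [withDensity_congr_ae h1, withDensity_add_left measurable_const, withDensity_const,
    withDensity_smul _ (Measure.measurable_rnDeriv _ _),
    Measure.withDensity_rnDeriv_eq _ _ (M.hac n i), Qmix]

lemma DetM.Qmix_prob (M : DetM k P μ ε) (n i : ℕ) :
    IsProbabilityMeasure (Qmix (P n i) (μ n i) (ε n i)) := by
  have := M.hP n i
  have := M.hμ n i
  refine ⟨?_⟩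
  simp only [Qmix, Measure.add_apply, Measure.smul_apply, measure_univ, smul_eq_mul, mul_one]
  rw [← ENNReal.ofReal_add (by linarith [(M.hε n i).2]) (M.hε n i).1]
  simp

lemma DetM.rn_eq (M : DetM k P μ ε) (n i : ℕ) :
    (Qmix (P n i) (μ n i) (ε n i)).rnDeriv (P n i) =ᵐ[P n i]
      fun a => ENNReal.ofReal (dM P μ ε n i a) := by
  have := M.hP n i
  rw [M.Qmix_eq n i]
  exact Measure.rnDeriv_withDensity _ (M.dM_meas n i).ennreal_ofReal

lemma DetM.elr_eq (M : DetM k P μ ε) (n i : ℕ) :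
    elr (Qmix (P n i) (μ n i) (ε n i)) (P n i) =ᵐ[P n i]
      fun a => ENNReal.ofReal (dM P μ ε n i a) := by
  have := M.hP n i
  have := M.Qmix_prob n i
  have h := Measure.rnDeriv_eq_div_rnDeriv_add (Qmix (P n i) (μ n i) (ε n i)) (P n i)
  filter_upwards [h, M.rn_eq n i] with a h1 h2
  rw [elr, add_comm, ← h1, h2]

def LM (P μ : ℕ → ℕ → Measure α) (ε : ℕ → ℕ → ℝ) (k : ℕ → ℕ) (n : ℕ) (y : Fin (k n) → α) : ℝ :=
  ∏ i : Fin (k n), dM P μ ε n i (y i)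

lemma DetM.LM_nonneg (M : DetM k P μ ε) (n : ℕ) (y) : 0 ≤ LM P μ ε k n y :=
  Finset.prod_nonneg fun i _ => M.dM_nonneg n i (y i)

lemma DetM.LM_meas (M : DetM k P μ ε) (n : ℕ) : Measurable (LM P μ ε k n) :=
  Finset.measurable_prod _ fun i _ => (M.dM_meas n i).comp (measurable_pi_apply i)

lemma DetM.Qprod_eq (M : DetM k P μ ε) (n : ℕ) :
    Qprod P μ ε k n = (Pprod P k n).withDensity fun y => ENNReal.ofReal (LM P μ ε k n y) := by
  have hp := fun i : Fin (k n) => M.hP n i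
  have hq := fun i : Fin (k n) => M.Qmix_prob n i
  unfold Qprod
  refine Measure.pi_eq fun s hs => ?_
  rw [withDensity_apply _ (MeasurableSet.univ_pi hs), ← lintegral_indicator (MeasurableSet.univ_pi hs)]
  have hX : ∀ i : Fin (k n), Measurable ((s i).indicator fun a => ENNReal.ofReal (dM P μ ε n i a)) :=
    fun i => (M.dM_meas n i).ennreal_ofReal.indicator (hs i)
  have e1 : ∀ y : Fin (k n) → α, (Set.univ.pi s).indicator (fun y => ENNReal.ofReal (LM P μ ε k n y)) y
      = ∏ i : Fin (k n), (s i).indicator (fun a => ENNReal.ofReal (dM P μ ε n i a)) (y i) := by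
    intro y
    by_cases hy : y ∈ Set.univ.pi s
    · rw [Set.indicator_of_mem hy, LM, ENNReal.ofReal_prod_of_nonneg fun (i : Fin (k n)) _ => M.dM_nonneg n i (y i)]
      refine Finset.prod_congr rfl fun i _ => ?_
      rw [Set.indicator_of_mem (hy i trivial)]
    · rw [Set.indicator_of_notMem hy]
      simp only [Set.mem_pi, Set.mem_univ, true_implies, not_forall] at hy
      obtain ⟨i, hi⟩ := hy
      exact (Finset.prod_eq_zero (Finset.mem_univ i) (Set.indicator_of_notMem hi _)).symm
  simp_rw [e1]
  have hind := iIndepFun_pi (μ := fun i : Fin (k n) => P n i)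
    (X := fun i => (s i).indicator fun a => ENNReal.ofReal (dM P μ ε n i a))
    (fun i => (hX i).aemeasurable)
  unfold Pprod
  rw [lintegral_prod_eq_prod_lintegral_of_indepFun _ _ hind
    (fun i => (hX i).comp (measurable_pi_apply i))]
  refine Finset.prod_congr rfl fun i _ => ?_
  have := (measurePreserving_eval (fun i : Fin (k n) => P n i) i).lintegral_comp (hX i)
  simp only [Function.eval] at this
  rw [this, lintegral_indicator (hs i), M.Qmix_eq n i, withDensity_apply _ (hs i)]

def TM (P μ : ℕ → ℕ → Measure α) (ε : ℕ → ℕ → ℝ) (k : ℕ → ℕ) (n : ℕ) (y : Fin (k n) → α) : EReal :=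
  ENNReal.log (ENNReal.ofReal (LM P μ ε k n y))

lemma DetM.TM_meas (M : DetM k P μ ε) (n : ℕ) : Measurable (TM P μ ε k n) :=
  (M.LM_meas n).ennreal_ofReal.ennreal_log

lemma log_prod_sum {ι : Type*} (s : Finset ι) (f : ι → ENNReal) :
    ENNReal.log (∏ i ∈ s, f i) = ∑ i ∈ s, ENNReal.log (f i) := by
  classical
  induction s using Finset.induction_on with
  | empty => simp
  | insert a s ha ih => rw [Finset.prod_insert ha, Finset.sum_insert ha, ENNReal.log_mul_add, ih]

lemma DetM.ae_coord (M : DetM k P μ ε) (n : ℕ) {p : ℕ → α → Prop}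
    (h : ∀ i, ∀ᵐ a ∂(P n i), p i a) : ∀ᵐ y ∂(Pprod P k n), ∀ i : Fin (k n), p i (y i) := by
  have hp := fun i : Fin (k n) => M.hP n i
  rw [ae_all_iff]
  intro i
  exact (Measure.quasiMeasurePreserving_eval (fun i : Fin (k n) => P n i) i).ae (h i)

lemma DetM.T_eq (M : DetM k P μ ε) (n : ℕ) : Tstat P μ ε k n =ᵐ[Pprod P k n] TM P μ ε k n := by
  filter_upwards [M.ae_coord n (fun i => M.elr_eq n i)] with y hy
  rw [TM, LM, ENNReal.ofReal_prod_of_nonneg fun (i : Fin (k n)) _ => M.dM_nonneg n i (y i), log_prod_sum, Tstat]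
  exact Finset.sum_congr rfl fun i _ => by rw [hy i]

lemma DetM.lawP_eq (M : DetM k P μ ε) (n : ℕ) : lawP P μ ε k n = (Pprod P k n).map (TM P μ ε k n) :=
  Measure.map_congr (M.T_eq n)

lemma DetM.lawQ_eq (M : DetM k P μ ε) (n : ℕ) : lawQ P μ ε k n = (Qprod P μ ε k n).map (TM P μ ε k n) := by
  refine Measure.map_congr ?_
  have : Qprod P μ ε k n ≪ Pprod P k n := by
    rw [M.Qprod_eq n]; exact withDensity_absolutelyContinuous _ _
  exact this.ae_le (M.T_eq n)

lemma DetM.LM_int (M : DetM k P μ ε) (n : ℕ) : Integrable (LM P μ ε k n) (Pprod P k n) := by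
  refine ⟨(M.LM_meas n).aestronglyMeasurable, ?_⟩
  rw [hasFiniteIntegral_iff_ofReal (Eventually.of_forall (M.LM_nonneg n)), ← setLIntegral_univ,
    ← withDensity_apply _ .univ, ← M.Qprod_eq n]
  have hq := fun i : Fin (k n) => M.Qmix_prob n i
  unfold Qprod
  exact measure_lt_top _ _

lemma DetM.int_add (M : DetM k P μ ε) (n : ℕ) (f : BoundedContinuousFunction EReal ℝ) :
    ∫ x, f x ∂(lawP P μ ε k n) + ∫ x, f x ∂(lawQ P μ ε k n)
      = ∫ y, (1 + LM P μ ε k n y) * f (TM P μ ε k n y) ∂(Pprod P k n) := by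
  have := Pprod_prob M.arr n
  have hm : ∀ q : Measure EReal, AEStronglyMeasurable f q :=
    fun q => f.continuous.aestronglyMeasurable
  have hfT : AEStronglyMeasurable (fun y => f (TM P μ ε k n y)) (Pprod P k n) :=
    (f.continuous.measurable.comp (M.TM_meas n)).aestronglyMeasurable
  rw [M.lawP_eq, M.lawQ_eq, integral_map (M.TM_meas n).aemeasurable (hm _),
    integral_map (M.TM_meas n).aemeasurable (hm _), M.Qprod_eq,
    integral_withDensity_eq_integral_toReal_smul (M.LM_meas n).ennreal_ofReal
      (Eventually.of_forall fun x => ENNReal.ofReal_lt_top)]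
  simp only [ENNReal.toReal_ofReal (M.LM_nonneg n _), smul_eq_mul]
  rw [← integral_add]
  · congr 1; funext y; ring
  · exact Integrable.of_bound hfT ‖f‖ (Eventually.of_forall fun y => f.norm_coe_le_norm _)
  · exact (M.LM_int n).mul_bdd (c := ‖f‖) hfT (Eventually.of_forall fun y => f.norm_coe_le_norm _)

lemma DetM.int_P (M : DetM k P μ ε) (n : ℕ) (f : BoundedContinuousFunction EReal ℝ) :
    ∫ x, f x ∂(lawP P μ ε k n) = ∫ y, f (TM P μ ε k n y) ∂(Pprod P k n) := by
  rw [M.lawP_eq, integral_map (M.TM_meas n).aemeasurable f.continuous.aestronglyMeasurable]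

lemma DetM.int_Q (M : DetM k P μ ε) (n : ℕ) (f : BoundedContinuousFunction EReal ℝ) :
    ∫ x, f x ∂(lawQ P μ ε k n) = ∫ y, LM P μ ε k n y * f (TM P μ ε k n y) ∂(Pprod P k n) := by
  rw [M.lawQ_eq, integral_map (M.TM_meas n).aemeasurable f.continuous.aestronglyMeasurable,
    M.Qprod_eq, integral_withDensity_eq_integral_toReal_smul (M.LM_meas n).ennreal_ofReal
      (Eventually.of_forall fun x => ENNReal.ofReal_lt_top)]
  simp only [ENNReal.toReal_ofReal (M.LM_nonneg n _), smul_eq_mul]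

lemma tauE_log {l : ℝ} (hl : 0 ≤ l) : tauE (ENNReal.log (ENNReal.ofReal l)) = (1 + l)⁻¹ := by
  have : (1 : ENNReal) = ENNReal.ofReal 1 := by simp
  rw [tauE, ENNReal.exp_log, this, ← ENNReal.ofReal_add zero_le_one hl, ENNReal.toReal_inv,
    ENNReal.toReal_ofReal (by positivity)]

lemma sigE_log {l : ℝ} (hl : 0 ≤ l) : sigE (ENNReal.log (ENNReal.ofReal l)) = l * (1 + l)⁻¹ := by
  rw [sigE, tauE_log hl]
  field_simp
  ring

lemma FE_log (r : ℝ) {l : ℝ} (hl : 0 ≤ l) :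
    (1 + l) * FE r (ENNReal.log (ENNReal.ofReal l)) = l ^ r := by
  have hp : 0 < (1 + l)⁻¹ := by positivity
  rw [FE, tauE_log hl, sigE_log hl, Real.mul_rpow hl hp.le, mul_assoc, ← Real.rpow_add hp]
  simp only [add_sub_cancel, Real.rpow_one]
  field_simp

lemma DetM.HH_eq (M : DetM k P μ ε) {r : ℝ} (h0 : 0 < r) (h1 : r < 1) (n : ℕ) :
    HH P k ε (WM P μ ε) r n
      = ∫ x, FE r x ∂(lawP P μ ε k n) + ∫ x, FE r x ∂(lawQ P μ ε k n) := by
  have e := M.int_add n (bcE (FE r) (FE_cont h0 h1) (FE_nonneg r) (FE_le_one h0.le h1.le))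
  refine Eq.trans ?_ e.symm
  have e2 : ∀ y, (1 + LM P μ ε k n y) * FE r (TM P μ ε k n y)
      = ∏ i : Fin (k n), (1 + (WM P μ ε n i (y i) - ε n i)) ^ r := by
    intro y
    rw [TM, FE_log r (M.LM_nonneg n y), LM,
      ← Real.finsetProd_rpow _ _ fun (i : Fin (k n)) _ => M.dM_nonneg n i (y i)]
    rfl
  have e3 : ∫ y, (1 + LM P μ ε k n y) * FE r (TM P μ ε k n y) ∂(Pprod P k n)
      = HH P k ε (WM P μ ε) r n := by
    simp_rw [e2]
    exact int_pprod M.arr n (fun i a => (1 + (WM P μ ε n i a - ε n i)) ^ r)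
  exact e3.symm

section lim
variable {ν1 ν2 : Measure EReal} [IsProbabilityMeasure ν1] [IsProbabilityMeasure ν2]

lemma DetM.HH_lim (M : DetM k P μ ε) (hwP : WeakLim (lawP P μ ε k) ν1)
    (hwQ : WeakLim (lawQ P μ ε k) ν2) {r : ℝ} (h0 : 0 < r) (h1 : r < 1) :
    Tendsto (HH P k ε (WM P μ ε) r) atTop (𝓝 (HlimE ν1 ν2 r)) := by
  rw [HlimE_add h0 h1]
  have e : HH P k ε (WM P μ ε) r = fun n => ∫ x, FE r x ∂(lawP P μ ε k n) +
      ∫ x, FE r x ∂(lawQ P μ ε k n) := funext fun n => M.HH_eq h0 h1 n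
  rw [e]
  exact (hwP (bcE (FE r) (FE_cont h0 h1) (FE_nonneg r) (FE_le_one h0.le h1.le))).add
    (hwQ (bcE (FE r) (FE_cont h0 h1) (FE_nonneg r) (FE_le_one h0.le h1.le)))

lemma DetM.rel (M : DetM k P μ ε) (hwP : WeakLim (lawP P μ ε k) ν1)
    (hwQ : WeakLim (lawQ P μ ε k) ν2) : RelE ν1 ν2 := by
  refine RelE_of ν1 ν2 (fun f => ?_) (fun f => ?_)
  · have h1 := (hwP (f * bcE tauE tauE_cont tauE_nonneg tauE_le_one)).add
      (hwQ (f * bcE tauE tauE_cont tauE_nonneg tauE_le_one))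
    refine tendsto_nhds_unique h1 ((hwP f).congr fun n => ?_)
    rw [M.int_add, M.int_P]
    congr 1
    funext y
    change _ = (1 + LM P μ ε k n y) * (f (TM P μ ε k n y) * tauE (TM P μ ε k n y))
    have hl := M.LM_nonneg n y
    rw [mul_left_comm]
    conv_rhs => rw [TM, tauE_log hl]
    rw [mul_inv_cancel₀ (by positivity), mul_one]
    rfl
  · have h1 := (hwP (f * bcE sigE sigE_cont sigE_nonneg sigE_le_one)).add
      (hwQ (f * bcE sigE sigE_cont sigE_nonneg sigE_le_one))
    refine tendsto_nhds_unique h1 ((hwQ f).congr fun n => ?_)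
    rw [M.int_add, M.int_Q]
    congr 1
    funext y
    change _ = (1 + LM P μ ε k n y) * (f (TM P μ ε k n y) * sigE (TM P μ ε k n y))
    have hl := M.LM_nonneg n y
    have : sigE (TM P μ ε k n y) = LM P μ ε k n y * (1 + LM P μ ε k n y)⁻¹ := by
      rw [TM, sigE_log hl]
    rw [this]
    field_simp

end lim
end model

section maxima
variable {α : Type*} [MeasurableSpace α] {k : ℕ → ℕ} {P μ : ℕ → ℕ → Measure α} {ε : ℕ → ℕ → ℝ}

lemma DetM.max_of_MP (M : DetM k P μ ε) {δ : ℝ} (hδ : 0 < δ)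
    (h : Tendsto (MP P k (WM P μ ε) δ) atTop (𝓝 0)) :
    Tendsto (fun n => (Pprod P k n) {y | δ ≤ maxMu P μ ε k n y}) atTop (nhds 0) := by
  have h1 := ENNReal.tendsto_ofReal h
  rw [ENNReal.ofReal_zero] at h1
  refine tendsto_of_tendsto_of_tendsto_of_le_of_le tendsto_const_nhds h1 (fun _ => zero_le) fun n => ?_
  have hp := fun i : Fin (k n) => M.hP n i
  have hsub : {y | δ ≤ maxMu P μ ε k n y} ⊆
      ⋃ i : Fin (k n), Function.eval i ⁻¹' {a | δ ≤ WM P μ ε n i a} := by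
    intro y hy
    simp only [Set.mem_ofPred_eq] at hy
    have : Nonempty (Fin (k n)) := by
      by_contra hne
      rw [not_nonempty_iff] at hne
      rw [maxMu, Real.iSup_of_isEmpty] at hy
      linarith
    obtain ⟨i, hi⟩ := exists_eq_ciSup_of_finite (f := fun i : Fin (k n) =>
      ε n i * dmuP (μ n i) (P n i) (y i))
    rw [Set.mem_iUnion]
    refine ⟨i, ?_⟩
    rw [maxMu, ← hi] at hy
    exact hy
  refine (measure_mono hsub).trans ((measure_iUnion_le _).trans ?_)
  rw [tsum_fintype, MP, Finset.sum_range, ENNReal.ofReal_sum_of_nonneg fun i _ => measureReal_nonneg]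
  refine Finset.sum_le_sum fun i _ => ?_
  have hm : MeasurableSet {a | δ ≤ WM P μ ε n i a} :=
    measurableSet_le measurable_const (M.arr.meas n i)
  rw [ofReal_measureReal]
  exact ((measurePreserving_eval (fun i : Fin (k n) => P n i) i).measure_preimage
    hm.nullMeasurableSet).le

lemma DetM.MP_of_max (M : DetM k P μ ε) {δ : ℝ} (hδ : 0 < δ)
    (h : Tendsto (fun n => (Pprod P k n) {y | δ ≤ maxMu P μ ε k n y}) atTop (nhds 0)) :
    Tendsto (MP P k (WM P μ ε) δ) atTop (𝓝 0) := by
  have hm : ∀ n i, MeasurableSet {a | δ ≤ WM P μ ε n i a} := fun n i =>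
    measurableSet_le measurable_const (M.arr.meas n i)
  have hprod : ∀ n, (Pprod P k n).real (Set.univ.pi fun i : Fin (k n) => {a | δ ≤ WM P μ ε n i a}ᶜ)
      = ∏ i ∈ Finset.range (k n), (1 + -(P n i).real {a | δ ≤ WM P μ ε n i a}) := by
    intro n
    have hp := fun i : Fin (k n) => M.hP n i
    rw [measureReal_def, Pprod, Measure.pi_pi, ENNReal.toReal_prod, Finset.prod_range]
    refine Finset.prod_congr rfl fun i _ => ?_
    rw [← measureReal_def, probReal_compl_eq_one_sub (hm n i), sub_eq_add_neg]
  have hP1 : Tendsto (fun n => ∏ i ∈ Finset.range (k n),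
      (1 + -(P n i).real {a | δ ≤ WM P μ ε n i a})) atTop (𝓝 1) := by
    have h2 : Tendsto (fun n => (Pprod P k n).real {y | δ ≤ maxMu P μ ε k n y}) atTop (𝓝 0) := by
      have := (ENNReal.tendsto_toReal ENNReal.zero_ne_top).comp h
      simpa [Function.comp_def, measureReal_def] using this
    have h3 : Tendsto (fun n => 1 - (Pprod P k n).real {y | δ ≤ maxMu P μ ε k n y}) atTop (𝓝 1) := by
      simpa using h2.const_sub 1
    refine tendsto_of_tendsto_of_tendsto_of_le_of_le h3 tendsto_const_nhds (fun n => ?_) (fun n => ?_)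
    · have := Pprod_prob M.arr n
      simp only
      rw [← hprod n]
      have hms : MeasurableSet (Set.univ.pi fun i : Fin (k n) => {a | δ ≤ WM P μ ε n i a}ᶜ) :=
        MeasurableSet.univ_pi fun i => (hm n i).compl
      have hle : (Pprod P k n).real (Set.univ.pi fun i : Fin (k n) => {a | δ ≤ WM P μ ε n i a}ᶜ)ᶜ
          ≤ (Pprod P k n).real {y | δ ≤ maxMu P μ ε k n y} := by
        refine measureReal_mono ?_
        intro y hy
        simp only [Set.mem_compl_iff, Set.mem_pi, Set.mem_univ, true_implies, not_forall,
          not_not] at hy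
        obtain ⟨i, hi⟩ := hy
        have hi' : δ ≤ WM P μ ε n i (y i) := hi
        exact hi'.trans (le_ciSup (f := fun i : Fin (k n) => ε n i * dmuP (μ n i) (P n i) (y i))
          (Set.finite_range _).bddAbove i)
      rw [probReal_compl_eq_one_sub hms] at hle
      linarith
    · have := Pprod_prob M.arr n
      simp only
      rw [← hprod n]
      exact measureReal_le_one
  have h4 := sum_tendsto (b := fun n i => -(P n i).real {a | δ ≤ WM P μ ε n i a})
    (fun n => sum_abs_nonpos fun i => neg_nonpos.2 measureReal_nonneg) ?_ one_pos hP1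
  · rw [Real.log_one] at h4
    have h5 := h4.neg
    simp only [Finset.sum_neg_distrib, neg_neg, neg_zero] at h5
    exact h5
  · intro η hη
    filter_upwards [M.arr.small (η * δ) (by positivity)] with n hn i hi
    have := M.hP n i
    rw [abs_neg, abs_of_nonneg measureReal_nonneg]
    have hmk := mul_meas_ge_le_integral_of_nonneg (μ := P n i)
      (Eventually.of_forall (M.arr.nonneg n i)) (M.arr.int n i) δ
    rw [M.arr.mean] at hmk
    have := hmk.trans (hn i hi)
    rw [mul_comm] at this
    exact le_of_mul_le_mul_right this hδ

lemma DetM.maxQ_near (M : DetM k P μ ε) {η : ℝ} (hη : 0 < η) :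
    ∀ᶠ n in atTop, ∀ᵐ y ∂(Pprod P k n), |maxQ P μ ε k n y - 1 - maxMu P μ ε k n y| ≤ η := by
  filter_upwards [M.arr.small η hη, M.hk.eventually_ge_atTop 1] with n hn hk1
  filter_upwards [M.ae_coord n (fun i => M.rn_eq n i)] with y hy
  have hne : Nonempty (Fin (k n)) := ⟨⟨0, hk1⟩⟩
  have e : ∀ i : Fin (k n), ((Qmix (P n i) (μ n i) (ε n i)).rnDeriv (P n i) (y i)).toReal
      = 1 + (ε n i * dmuP (μ n i) (P n i) (y i) - ε n i) := by
    intro i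
    rw [hy i, ENNReal.toReal_ofReal (M.dM_nonneg n i _)]
    rfl
  have eQ : maxQ P μ ε k n y
      = ⨆ i : Fin (k n), (1 + (ε n i * dmuP (μ n i) (P n i) (y i) - ε n i)) := by
    unfold maxQ; congr 1; funext i; exact e i
  have hle : maxQ P μ ε k n y ≤ 1 + maxMu P μ ε k n y := by
    rw [eQ]
    refine ciSup_le fun i => ?_
    have := le_ciSup (f := fun i : Fin (k n) => ε n i * dmuP (μ n i) (P n i) (y i))
      (Set.finite_range _).bddAbove i
    unfold maxMu
    linarith [M.arr.e0 n i]
  have hge : maxMu P μ ε k n y ≤ maxQ P μ ε k n y - 1 + η := by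
    unfold maxMu
    rw [eQ]
    refine ciSup_le fun i => ?_
    have := le_ciSup (f := fun i : Fin (k n) =>
      (1 + (ε n i * dmuP (μ n i) (P n i) (y i) - ε n i)))
      (Set.finite_range _).bddAbove i
    linarith [hn i i.2]
  rw [abs_le]
  constructor <;> linarith

lemma maxMu_nonneg (M : DetM k P μ ε) (n : ℕ) (y) : 0 ≤ maxMu P μ ε k n y :=
  Real.iSup_nonneg fun i => M.arr.nonneg n i (y i)

lemma DetM.G_iff_H (M : DetM k P μ ε) :
    (∀ δ : ℝ, 0 < δ →
        Tendsto (fun n => (Pprod P k n) {y | δ ≤ |maxQ P μ ε k n y - 1|}) atTop (nhds 0)) ↔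
    (∀ δ : ℝ, 0 < δ →
        Tendsto (fun n => (Pprod P k n) {y | δ ≤ maxMu P μ ε k n y}) atTop (nhds 0)) := by
  constructor <;> intro h δ hδ <;>
  refine tendsto_of_tendsto_of_tendsto_of_le_of_le' tendsto_const_nhds (h (δ / 2) (by positivity))
    (Eventually.of_forall fun _ => zero_le) ?_ <;>
  filter_upwards [M.maxQ_near (η := δ / 2) (by positivity)] with n hn <;>
  refine measure_mono_ae ?_ <;>
  filter_upwards [hn] with y hy hd
  · have hd' : δ ≤ maxMu P μ ε k n y := hd
    change δ / 2 ≤ |maxQ P μ ε k n y - 1|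
    refine le_trans ?_ (le_abs_self _)
    linarith [(abs_le.1 hy).1]
  · have hd' : δ ≤ |maxQ P μ ε k n y - 1| := hd
    change δ / 2 ≤ maxMu P μ ε k n y
    have := abs_le.1 hy
    have h0 := maxMu_nonneg M n y
    rcases le_abs.1 hd' with h1 | h1 <;> linarith [this.1, this.2]

end maxima

section assembly
variable {α : Type*} [MeasurableSpace α] {k : ℕ → ℕ} {P μ : ℕ → ℕ → Measure α} {ε : ℕ → ℕ → ℝ}
  {ν1 ν2 : Measure EReal} [IsProbabilityMeasure ν1] [IsProbabilityMeasure ν2]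

/-- Hellinger transforms of the Gaussian shift with parameter `s` -/
def HG (ν1 ν2 : Measure EReal) (s : ℝ) : Prop :=
  ∀ r : ℝ, 0 < r → r < 1 → HlimE ν1 ν2 r = Real.exp (-(r * (1 - r) / 2 * s))

lemma B_iff_HG (h : RelE ν1 ν2) {s : ℝ} (hs : 0 ≤ s) :
    ν1 = gaussE (-s / 2) s ↔ HG ν1 ν2 s := by
  constructor
  · intro hg r h0 h1
    rw [H_of_g1 h hs hg h0 h1]; congr 1; ring
  · intro hg
    refine g1_of_H h hs fun r h0 h1 => ?_
    rw [hg r h0 h1]; congr 1; ring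

lemma C_iff_HG (h : RelE ν1 ν2) {s : ℝ} (hs : 0 ≤ s) :
    ν2 = gaussE (s / 2) s ↔ HG ν1 ν2 s := by
  constructor
  · intro hg r h0 h1
    rw [H_of_g2 h hs hg h0 h1]; congr 1; ring
  · intro hg
    refine g2_of_H h hs fun r h0 h1 => ?_
    rw [hg r h0 h1]; congr 1; ring

lemma DetM.I_to_HG (M : DetM k P μ ε) (hwP : WeakLim (lawP P μ ε k) ν1)
    (hwQ : WeakLim (lawQ P μ ε k) ν2) {s τ : ℝ} (hτ : 0 < τ)
    (hJ : ∀ x : ℝ, 0 < x → Tendsto (J1 P k (WM P μ ε) x) atTop (𝓝 0))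
    (hJ2 : Tendsto (J2 P k ε (WM P μ ε) τ) atTop (𝓝 s)) : HG ν1 ν2 s := by
  intro r h0 h1
  have h := I_to_SS M.arr hτ hJ hJ2 h0 h1
  exact tendsto_nhds_unique (M.HH_lim hwP hwQ h0 h1) (HH_of_SS M.arr h0 h1 h)

lemma DetM.HG_to_I (M : DetM k P μ ε) (hwP : WeakLim (lawP P μ ε k) ν1)
    (hwQ : WeakLim (lawQ P μ ε k) ν2) {s : ℝ} (hG : HG ν1 ν2 s) :
    (∀ x : ℝ, 0 < x → Tendsto (J1 P k (WM P μ ε) x) atTop (𝓝 0)) ∧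
      ∀ τ : ℝ, 0 < τ → Tendsto (J2 P k ε (WM P μ ε) τ) atTop (𝓝 s) := by
  refine SS_to_I M.arr fun r h0 h1 => ?_
  have h := M.HH_lim hwP hwQ h0 h1
  rw [hG r h0 h1] at h
  have h' := SS_of_HH M.arr h0 h1 (Real.exp_pos _) h
  rwa [Real.log_exp, neg_neg] at h'

lemma DetM.E_to_C (M : DetM k P μ ε) (hwP : WeakLim (lawP P μ ε k) ν1)
    (hwQ : WeakLim (lawQ P μ ε k) ν2) {a s : ℝ} (hs : 0 ≤ s) (hE : ν2 = gaussE a s) :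
    a = s / 2 := by
  have hSS : ∀ r : ℝ, 0 < r → r < 1 →
      Tendsto (SS P k ε (WM P μ ε) (gH r)) atTop (𝓝 ((1 - r) * a - (1 - r) ^ 2 * s / 2)) := by
    intro r h0 h1
    have h := M.HH_lim hwP hwQ h0 h1
    rw [H_of_g2 (M.rel hwP hwQ) hs hE h0 h1] at h
    have h' := SS_of_HH M.arr h0 h1 (Real.exp_pos _) h
    rw [Real.log_exp] at h'
    convert h' using 2
    ring
  have hcont : Tendsto (fun r : ℝ => (1 - r) * a - (1 - r) ^ 2 * s / 2) (𝓝[>] 0)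
      (𝓝 (a - s / 2)) := by
    have hc : Continuous (fun r : ℝ => (1 - r) * a - (1 - r) ^ 2 * s / 2) := by fun_prop
    have := (hc.tendsto 0).mono_left (nhdsWithin_le_nhds (s := Set.Ioi (0:ℝ)))
    convert this using 2
    ring
  have hev : ∀ᶠ r : ℝ in 𝓝[>] 0, 0 < r ∧ r < 1 :=
    Ioo_mem_nhdsGT one_pos
  set L' : ℝ := (1 - 1 / 2) * a - (1 - 1 / 2) ^ 2 * s / 2 with hL'
  have hub : Tendsto (fun r : ℝ => 10 * r * L') (𝓝[>] 0) (𝓝 0) := by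
    have hc : Continuous (fun r : ℝ => 10 * r * L') := by fun_prop
    have := (hc.tendsto 0).mono_left (nhdsWithin_le_nhds (s := Set.Ioi (0:ℝ)))
    simpa using this
  have h1 : 0 ≤ a - s / 2 := by
    refine ge_of_tendsto hcont ?_
    filter_upwards [hev] with r hr
    exact ge_of_tendsto' (hSS r hr.1 hr.2) fun n => SS_gH_nonneg M.arr hr.1 hr.2 n
  have h2 : a - s / 2 ≤ 0 := by
    refine le_of_tendsto_of_tendsto hcont hub ?_
    filter_upwards [hev] with r hr
    exact SS_rel M.arr hr.1 hr.2 (hSS r hr.1 hr.2) (hSS (1 / 2) (by norm_num) (by norm_num))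
  linarith

lemma D_to_B (h : RelE ν1 ν2) (hr : ν2 {x : EReal | x = ⊥ ∨ x = ⊤} = 0) {a s : ℝ} (hs : 0 ≤ s)
    (hD : ν1 = gaussE a s) : a = -s / 2 := by
  have h1 := H_to_one h hr
  have hc : Continuous (fun r : ℝ => Real.exp (a * r + s * r ^ 2 / 2)) := by fun_prop
  have h2 := (hc.tendsto 1).mono_left (nhdsWithin_le_nhds (s := Set.Iio (1:ℝ)))
  have h3 : Tendsto (HlimE ν1 ν2) (𝓝[<] 1) (𝓝 (Real.exp (a * 1 + s * 1 ^ 2 / 2))) := by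
    refine h2.congr' ?_
    filter_upwards [Ioo_mem_nhdsLT (zero_lt_one (α := ℝ))] with r hr
    exact (H_of_g1 h hs hD hr.1 hr.2).symm
  have h4 := tendsto_nhds_unique h1 h3
  have h5 := (Real.exp_eq_one_iff _).1 h4.symm
  linarith

lemma DetM.H_to_I (M : DetM k P μ ε) (hwP : WeakLim (lawP P μ ε k) ν1)
    (hwQ : WeakLim (lawQ P μ ε k) ν2) (hr : ν2 {x : EReal | x = ⊥ ∨ x = ⊤} = 0)
    (hM : ∀ δ : ℝ, 0 < δ → Tendsto (MP P k (WM P μ ε) δ) atTop (𝓝 0)) :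
    ∃ s, 0 ≤ s ∧ HG ν1 ν2 s := by
  have hSS : ∀ r : ℝ, 0 < r → r < 1 →
      Tendsto (SS P k ε (WM P μ ε) (gH r)) atTop (𝓝 (-Real.log (HlimE ν1 ν2 r))) :=
    fun r h0 h1 => SS_of_HH M.arr h0 h1 (H_pos hr h0 h1) (M.HH_lim hwP hwQ h0 h1)
  have hL : Tendsto (fun r => -Real.log (HlimE ν1 ν2 r)) (𝓝[<] 1) (𝓝 0) := by
    have := ((H_to_one (M.rel hwP hwQ) hr).log one_ne_zero).neg
    simpa using this
  have hJ := max_to_J1 M.arr hM hSS hL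
  have hh := hSS (1 / 2) (by norm_num) (by norm_num)
  have hpos : 0 ≤ -Real.log (HlimE ν1 ν2 (1 / 2)) :=
    ge_of_tendsto' hh fun n => SS_gH_nonneg M.arr (by norm_num) (by norm_num) n
  refine ⟨8 * (-Real.log (HlimE ν1 ν2 (1 / 2))), by positivity, ?_⟩
  refine M.I_to_HG hwP hwQ one_pos hJ (J2_lim_of_half M.arr one_pos hJ ?_)
  convert hh using 2
  ring

lemma gaussE_zero : gaussE 0 0 = Measure.dirac ((0 : ℝ) : EReal) := by
  unfold gaussE
  rw [Real.toNNReal_zero, gaussianReal_zero_var]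
  exact Measure.map_dirac' measurable_coe_real_ereal 0

end assembly

/-- Gaussian limits: equivalent conditions (a)–(i), with matching
variances σ². -/
theorem statement17 {α : Type*} [MeasurableSpace α]
    (k : ℕ → ℕ) (P μ : ℕ → ℕ → Measure α) (ε : ℕ → ℕ → ℝ)
    (hk : Tendsto k atTop atTop)
    (hP : ∀ n i, IsProbabilityMeasure (P n i))
    (hμ : ∀ n i, IsProbabilityMeasure (μ n i))
    (hac : ∀ n i, μ n i ≪ P n i)
    (hε : ∀ n i, ε n i ∈ Set.Icc (0 : ℝ) 1)
    (hεmax : Tendsto (fun n => ⨆ i : Fin (k n), ε n i) atTop (nhds 0))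
    (ν1 ν2 : Measure EReal)
    (hν1 : IsProbabilityMeasure ν1) (hν2 : IsProbabilityMeasure ν2)
    (hwP : WeakLim (lawP P μ ε k) ν1) (hwQ : WeakLim (lawQ P μ ε k) ν2) :
    -- the nine equivalent conditions
    letI PA : Prop := (∃ a1 s1 a2 s2 : ℝ, 0 < s1 ∧ 0 < s2 ∧
        ν1 = gaussE a1 s1 ∧ ν2 = gaussE a2 s2) ∨
      (ν1 = Measure.dirac ((0 : ℝ) : EReal) ∧ ν2 = Measure.dirac ((0 : ℝ) : EReal))
    letI PB : ℝ → Prop := fun s => ν1 = gaussE (-s / 2) s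
    letI PC : ℝ → Prop := fun s => ν2 = gaussE (s / 2) s
    letI PD : Prop := ν2 {x : EReal | x = ⊥ ∨ x = ⊤} = 0 ∧
      ∃ a s : ℝ, 0 ≤ s ∧ ν1 = gaussE a s
    letI PE : Prop := ∃ a s : ℝ, 0 ≤ s ∧ ν2 = gaussE a s
    letI PF : ℝ → Prop := fun s =>
      WeakLim (fun n => (Pprod P k n).map (Zstat P μ ε k n))
        (gaussianReal 0 s.toNNReal)
    letI PG : Prop := ν2 {x : EReal | x = ⊥ ∨ x = ⊤} = 0 ∧
      ∀ δ : ℝ, 0 < δ →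
        Tendsto (fun n => (Pprod P k n) {y | δ ≤ |maxQ P μ ε k n y - 1|})
          atTop (nhds 0)
    letI PH : Prop := ν2 {x : EReal | x = ⊥ ∨ x = ⊤} = 0 ∧
      ∀ δ : ℝ, 0 < δ →
        Tendsto (fun n => (Pprod P k n) {y | δ ≤ maxMu P μ ε k n y})
          atTop (nhds 0)
    letI PI : ℝ → Prop := fun s => ∃ τ : ℝ, 0 < τ ∧
      (∀ x : ℝ, 0 < x → Tendsto (fun n => I1 P μ ε k x n) atTop (nhds 0)) ∧
      Tendsto (fun n => I2 P μ ε k τ n) atTop (nhds s)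
    (PA ↔ (∃ s, 0 ≤ s ∧ PB s)) ∧
    ((∃ s, 0 ≤ s ∧ PB s) ↔ (∃ s, 0 ≤ s ∧ PC s)) ∧
    ((∃ s, 0 ≤ s ∧ PB s) ↔ PD) ∧
    ((∃ s, 0 ≤ s ∧ PB s) ↔ PE) ∧
    ((∃ s, 0 ≤ s ∧ PB s) ↔ (∃ s, 0 ≤ s ∧ PF s)) ∧
    ((∃ s, 0 ≤ s ∧ PB s) ↔ PG) ∧
    ((∃ s, 0 ≤ s ∧ PB s) ↔ PH) ∧
    ((∃ s, 0 ≤ s ∧ PB s) ↔ (∃ s, 0 ≤ s ∧ PI s)) ∧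
    (∀ s : ℝ, 0 ≤ s → ((PB s ↔ PC s) ∧ (PB s ↔ PF s) ∧ (PB s ↔ PI s))) := by
  have M : DetM k P μ ε := ⟨hk, hP, hμ, hac, hε, hεmax⟩
  have hR : RelE ν1 ν2 := M.rel hwP hwQ
  have hBG : ∀ s : ℝ, 0 ≤ s → (ν1 = gaussE (-s / 2) s ↔ HG ν1 ν2 s) :=
    fun s hs => B_iff_HG hR hs
  have hCG : ∀ s : ℝ, 0 ≤ s → (ν2 = gaussE (s / 2) s ↔ HG ν1 ν2 s) :=
    fun s hs => C_iff_HG hR hs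
  have hIG : ∀ s : ℝ, ((∃ τ : ℝ, 0 < τ ∧
      (∀ x : ℝ, 0 < x → Tendsto (fun n => I1 P μ ε k x n) atTop (nhds 0)) ∧
      Tendsto (fun n => I2 P μ ε k τ n) atTop (nhds s)) ↔ HG ν1 ν2 s) := by
    intro s
    simp only [M.I1_eq, M.I2_eq]
    constructor
    · rintro ⟨τ, hτ, h1, h2⟩
      exact M.I_to_HG hwP hwQ hτ h1 h2
    · intro h
      obtain ⟨h1, h2⟩ := M.HG_to_I hwP hwQ h
      exact ⟨1, one_pos, h1, h2 1 one_pos⟩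
  have hFG : ∀ s : ℝ, 0 ≤ s → (WeakLim (fun n => (Pprod P k n).map (Zstat P μ ε k n))
        (gaussianReal 0 s.toNNReal) ↔ HG ν1 ν2 s) := by
    intro s hs
    rw [Zstat_eq]
    constructor
    · intro h
      obtain ⟨h1, h2⟩ := F_to_I M.arr hs h
      exact M.I_to_HG hwP hwQ one_pos h1 (h2 1 one_pos)
    · intro h
      obtain ⟨h1, h2⟩ := M.HG_to_I hwP hwQ h
      exact I_to_F M.arr hs one_pos h1 (h2 1 one_pos)
  have hBC : ∀ s : ℝ, 0 ≤ s → (ν1 = gaussE (-s / 2) s ↔ ν2 = gaussE (s / 2) s) :=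
    fun s hs => (hBG s hs).trans (hCG s hs).symm
  have hBreal : ∀ s : ℝ, 0 ≤ s → ν1 = gaussE (-s / 2) s →
      ν2 {x : EReal | x = ⊥ ∨ x = ⊤} = 0 := by
    intro s hs h
    rw [(hBC s hs).1 h]
    exact gaussE_real _ _
  have hBH : (∃ s, 0 ≤ s ∧ ν1 = gaussE (-s / 2) s) ↔
      (ν2 {x : EReal | x = ⊥ ∨ x = ⊤} = 0 ∧ ∀ δ : ℝ, 0 < δ →
        Tendsto (fun n => (Pprod P k n) {y | δ ≤ maxMu P μ ε k n y}) atTop (nhds 0)) := by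
    constructor
    · rintro ⟨s, hs, h⟩
      refine ⟨hBreal s hs h, fun δ hδ => ?_⟩
      obtain ⟨h1, -⟩ := M.HG_to_I hwP hwQ ((hBG s hs).1 h)
      exact M.max_of_MP hδ (I_to_max M.arr h1 δ hδ)
    · rintro ⟨hr, hm⟩
      obtain ⟨s, hs, h⟩ := M.H_to_I hwP hwQ hr fun δ hδ => M.MP_of_max hδ (hm δ hδ)
      exact ⟨s, hs, (hBG s hs).2 h⟩
  have hDB : ∀ a s : ℝ, 0 ≤ s → ν2 {x : EReal | x = ⊥ ∨ x = ⊤} = 0 → ν1 = gaussE a s →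
      ν1 = gaussE (-s / 2) s := by
    intro a s hs hr h
    rw [← D_to_B hR hr hs h]
    exact h
  refine ⟨?_, ?_, ?_, ?_, ?_, ?_, hBH, ?_, ?_⟩
  · constructor
    · rintro (⟨a1, s1, a2, s2, h1, h2, e1, e2⟩ | ⟨e1, e2⟩)
      · refine ⟨s1, h1.le, hDB a1 s1 h1.le ?_ e1⟩
        rw [e2]
        exact gaussE_real _ _
      · refine ⟨0, le_rfl, ?_⟩
        change ν1 = gaussE (-0 / 2) 0
        rw [e1, neg_zero, zero_div, gaussE_zero]
    · rintro ⟨s, hs, h⟩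
      change ν1 = gaussE (-s / 2) s at h
      rcases hs.eq_or_lt with h0 | hpos
      · right
        have h2 := (hBC s hs).1 h
        rw [← h0] at h h2
        rw [neg_zero, zero_div, gaussE_zero] at h
        rw [zero_div, gaussE_zero] at h2
        exact ⟨h, h2⟩
      · exact Or.inl ⟨_, s, _, s, hpos, hpos, h, (hBC s hs).1 h⟩
  · exact exists_congr fun s => and_congr_right fun hs => hBC s hs
  · constructor
    · rintro ⟨s, hs, h⟩
      exact ⟨hBreal s hs h, _, s, hs, h⟩
    · rintro ⟨hr, a, s, hs, h⟩
      exact ⟨s, hs, hDB a s hs hr h⟩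
  · constructor
    · rintro ⟨s, hs, h⟩
      exact ⟨_, s, hs, (hBC s hs).1 h⟩
    · rintro ⟨a, s, hs, h⟩
      refine ⟨s, hs, (hBC s hs).2 ?_⟩
      rw [← M.E_to_C hwP hwQ hs h]
      exact h
  · exact exists_congr fun s => and_congr_right fun hs => (hBG s hs).trans (hFG s hs).symm
  · exact hBH.trans (and_congr_right fun _ => M.G_iff_H.symm)
  · exact exists_congr fun s => and_congr_right fun hs => (hBG s hs).trans (hIG s).symm
  · exact fun s hs => ⟨hBC s hs, (hBG s hs).trans (hFG s hs).symm, (hBG s hs).trans (hIG s).symm⟩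

end
end

section
/- Let Φ be the standard normal distribution function. Then: (i) for all x > 0, (x/(√(2π)(1+x²)))·exp(−x²/2) ≤ 1 − Φ(x) ≤ (1/(√(2π)·x))·exp(−x²/2); and (ii) there exists U > 0 such that for all u ∈ (0,U): −Φ^{−1}(u) = Φ^{−1}(1−u) ≥ √(2·log(1/u)) · ( 1 − (7 + log log(1/u))/(4·log(1/u)) ). -/
open MeasureTheory ProbabilityTheory

noncomputable section

/-- Standard normal distribution function `Φ`. -/
def Phi (x : ℝ) : ℝ := ((gaussianReal 0 1) (Set.Iic x)).toReal


lemma one_sub_Phi (x : ℝ) : 1 - Phi x = ((gaussianReal 0 1) (Set.Ioi x)).toReal := by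
  have h := probReal_compl_eq_one_sub (μ := gaussianReal 0 1) (measurableSet_Iic (a := x))
  rw [Set.compl_Iic] at h
  exact h.symm

lemma Phi_tail (x : ℝ) :
    1 - Phi x = (Real.sqrt (2 * Real.pi))⁻¹ * ∫ t in Set.Ioi x, Real.exp (-(t ^ 2) / 2) := by
  rw [one_sub_Phi, gaussianReal_apply_eq_integral 0 one_ne_zero, ENNReal.toReal_ofReal, 
    ← integral_const_mul]
  · simp [gaussianPDFReal]
  · exact integral_nonneg (fun t => gaussianPDFReal_nonneg _ _ _)

lemma Phi_strictMono : StrictMono Phi := by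
  intro a b hab
  have h1 : Set.Iic b = Set.Iic a ∪ Set.Ioc a b := (Set.Iic_union_Ioc_eq_Iic hab.le).symm
  have h2 : (gaussianReal 0 1) (Set.Ioc a b) ≠ 0 := by
    intro h
    have := gaussianReal_absolutelyContinuous' 0 (one_ne_zero (α := NNReal)) h
    rw [Real.volume_Ioc, ENNReal.ofReal_eq_zero] at this
    linarith
  have h3 : Phi b = Phi a + ((gaussianReal 0 1) (Set.Ioc a b)).toReal := by
    unfold Phi
    rw [h1, measure_union (Set.Iic_disjoint_Ioc le_rfl) measurableSet_Ioc,
      ENNReal.toReal_add (measure_ne_top _ _) (measure_ne_top _ _)]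
  have := ENNReal.toReal_pos h2 (measure_ne_top _ _)
  linarith

lemma Phi_neg (x : ℝ) : Phi (-x) = 1 - Phi x := by
  rw [one_sub_Phi]
  have h := gaussianReal_map_neg (μ := 0) (v := 1)
  rw [neg_zero] at h
  unfold Phi
  conv_lhs => rw [← h]
  rw [Measure.map_apply measurable_neg measurableSet_Iic]
  have hset : (fun x : ℝ => -x) ⁻¹' Set.Iic (-x) = Set.Ici x := by ext t; simp
  have := nullSingletonClass_gaussianReal (μ := 0) (v := 1) one_ne_zero
  rw [hset, measure_congr Ioi_ae_eq_Ici]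

lemma gexp_integrable : Integrable (fun t : ℝ => Real.exp (-(t ^ 2) / 2)) := by
  have := integrable_exp_neg_mul_sq (b := 1 / 2) (by norm_num)
  convert this using 2 with t
  congr 1; ring

lemma gexp_deriv (t : ℝ) :
    HasDerivAt (fun t : ℝ => Real.exp (-(t ^ 2) / 2)) (-t * Real.exp (-(t ^ 2) / 2)) t := by
  have h : HasDerivAt (fun t : ℝ => -(t ^ 2) / 2) (-t) t :=
    ((hasDerivAt_pow 2 t).neg.div_const 2).congr_deriv (by simp; ring)
  exact h.exp.congr_deriv (by ring)

lemma gexp_tendsto :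
    Filter.Tendsto (fun t : ℝ => Real.exp (-(t ^ 2) / 2)) Filter.atTop (nhds 0) := by
  have h : Filter.Tendsto (fun t : ℝ => t ^ 2 / 2) Filter.atTop Filter.atTop :=
    (Filter.tendsto_pow_atTop two_ne_zero).atTop_div_const two_pos
  refine (Real.tendsto_exp_neg_atTop_nhds_zero.comp h).congr (fun t => ?_)
  simp only [Function.comp]
  congr 1; ring

lemma tail_upper (x : ℝ) (hx : 0 < x) :
    ∫ t in Set.Ioi x, Real.exp (-(t ^ 2) / 2) ≤ 1 / x * Real.exp (-(x ^ 2) / 2) := by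
  have hd : ∀ t ∈ Set.Ici x, HasDerivAt (fun t : ℝ => -(1 / x) * Real.exp (-(t ^ 2) / 2))
      (t / x * Real.exp (-(t ^ 2) / 2)) t := by
    intro t _
    exact ((gexp_deriv t).const_mul (-(1 / x))).congr_deriv (by ring)
  have hn : ∀ t ∈ Set.Ioi x, 0 ≤ t / x * Real.exp (-(t ^ 2) / 2) := by
    intro t ht
    have : 0 < t := hx.trans ht
    positivity
  have hl : Filter.Tendsto (fun t : ℝ => -(1 / x) * Real.exp (-(t ^ 2) / 2)) Filter.atTop
      (nhds 0) := by
    simpa using gexp_tendsto.const_mul (-(1 / x))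
  have h1 := integral_Ioi_of_hasDerivAt_of_nonneg' hd hn hl
  have h2 := integrableOn_Ioi_deriv_of_nonneg' hd hn hl
  have h3 : ∫ t in Set.Ioi x, Real.exp (-(t ^ 2) / 2) ≤
      ∫ t in Set.Ioi x, t / x * Real.exp (-(t ^ 2) / 2) := by
    refine setIntegral_mono_on gexp_integrable.integrableOn h2 measurableSet_Ioi ?_
    intro t ht
    have : 1 ≤ t / x := (one_le_div hx).2 (le_of_lt ht)
    exact le_mul_of_one_le_left (Real.exp_pos _).le this
  rw [h1] at h3
  linarith

lemma tail_lower (x : ℝ) :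
    x / (1 + x ^ 2) * Real.exp (-(x ^ 2) / 2) ≤ ∫ t in Set.Ioi x, Real.exp (-(t ^ 2) / 2) := by
  have hd : ∀ t ∈ Set.Ici x,
      HasDerivAt (fun t : ℝ => -(t / (1 + t ^ 2)) * Real.exp (-(t ^ 2) / 2))
      ((1 - 2 / (1 + t ^ 2) ^ 2) * Real.exp (-(t ^ 2) / 2)) t := by
    intro t _
    have hp : (1 + t ^ 2) ≠ 0 := by positivity
    have hq : HasDerivAt (fun t : ℝ => 1 + t ^ 2) (2 * t) t :=
      ((hasDerivAt_pow 2 t).const_add 1).congr_deriv (by simp)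
    refine (((hasDerivAt_id' t).fun_div hq hp).fun_neg.fun_mul (gexp_deriv t)).congr_deriv ?_
    field_simp
    ring
  have hb : ∀ t : ℝ, 0 ≤ 2 / (1 + t ^ 2) ^ 2 ∧ 2 / (1 + t ^ 2) ^ 2 ≤ 2 := by
    intro t
    refine ⟨by positivity, ?_⟩
    rw [div_le_iff₀ (by positivity)]
    nlinarith [sq_nonneg t, sq_nonneg (t ^ 2)]
  have hi : Integrable (fun t : ℝ => (1 - 2 / (1 + t ^ 2) ^ 2) * Real.exp (-(t ^ 2) / 2)) := by
    refine gexp_integrable.mono' (by fun_prop) (Filter.Eventually.of_forall fun t => ?_)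
    rw [norm_mul, Real.norm_eq_abs, Real.norm_eq_abs, Real.abs_exp]
    refine mul_le_of_le_one_left (Real.exp_pos _).le ?_
    have := hb t
    rw [abs_le]
    constructor <;> linarith
  have hl : Filter.Tendsto (fun t : ℝ => -(t / (1 + t ^ 2)) * Real.exp (-(t ^ 2) / 2))
      Filter.atTop (nhds 0) := by
    refine squeeze_zero_norm (fun t => ?_) gexp_tendsto
    rw [norm_mul, Real.norm_eq_abs, Real.norm_eq_abs, Real.abs_exp]
    refine mul_le_of_le_one_left (Real.exp_pos _).le ?_
    rw [abs_neg, abs_div, abs_of_pos (by positivity : 0 < 1 + t ^ 2),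
      div_le_one (by positivity), abs_le]
    constructor <;> nlinarith [sq_nonneg (t - 1), sq_nonneg (t + 1)]
  have h1 := integral_Ioi_of_hasDerivAt_of_tendsto' hd hi.integrableOn hl
  have h3 : ∫ t in Set.Ioi x, (1 - 2 / (1 + t ^ 2) ^ 2) * Real.exp (-(t ^ 2) / 2) ≤
      ∫ t in Set.Ioi x, Real.exp (-(t ^ 2) / 2) := by
    refine setIntegral_mono_on hi.integrableOn gexp_integrable.integrableOn measurableSet_Ioi ?_
    intro t ht
    refine mul_le_of_le_one_left (Real.exp_pos _).le ?_
    linarith [(hb t).1]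
  rw [h1] at h3
  linarith

lemma Phi_lower (x : ℝ) :
    x / (Real.sqrt (2 * Real.pi) * (1 + x ^ 2)) * Real.exp (-(x ^ 2) / 2) ≤ 1 - Phi x := by
  rw [Phi_tail]
  have h := mul_le_mul_of_nonneg_left (tail_lower x)
    (by positivity : 0 ≤ (Real.sqrt (2 * Real.pi))⁻¹)
  refine le_trans (le_of_eq ?_) h
  have : 0 < Real.sqrt (2 * Real.pi) := Real.sqrt_pos.2 (by positivity)
  field_simp

lemma Phi_upper (x : ℝ) (hx : 0 < x) :
    1 - Phi x ≤ 1 / (Real.sqrt (2 * Real.pi) * x) * Real.exp (-(x ^ 2) / 2) := by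
  rw [Phi_tail]
  have h := mul_le_mul_of_nonneg_left (tail_upper x hx)
    (by positivity : 0 ≤ (Real.sqrt (2 * Real.pi))⁻¹)
  refine le_trans h (le_of_eq ?_)
  have : 0 < Real.sqrt (2 * Real.pi) := Real.sqrt_pos.2 (by positivity)
  field_simp

lemma key (L : ℝ) (hL : 100 ≤ L) (hlog : Real.log L ^ 2 ≤ L) :
    Real.exp (-L) < 1 - Phi (Real.sqrt (2 * L) * (1 - (7 + Real.log L) / (4 * L))) := by
  have hL0 : 0 < L := by linarith
  have hl0 : 0 ≤ Real.log L := Real.log_nonneg (by linarith)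
  set l := Real.log L with hl
  set d := (7 + l) / (4 * L) with hd
  have hdL : d * L = (7 + l) / 4 := by rw [hd]; field_simp
  have hd0 : 0 ≤ d := by positivity
  have hsq : (7 + l) ^ 2 ≤ 8 * L := by nlinarith [sq_nonneg (l - 7)]
  have hd2 : L * d ^ 2 ≤ 1 / 2 := by
    have : (L * d ^ 2) * L ≤ 1 / 2 * L := by
      have e : (L * d ^ 2) * L = (d * L) ^ 2 := by ring
      rw [e, hdL]; linarith
    exact le_of_mul_le_mul_right this hL0
  have hd1 : d ≤ 1 / 2 := by nlinarith
  set s := Real.sqrt L with hs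
  have hs0 : 0 < s := Real.sqrt_pos.2 hL0
  have hss : s ^ 2 = L := Real.sq_sqrt hL0.le
  have h2 : Real.sqrt (2 * L) = Real.sqrt 2 * s := Real.sqrt_mul (by norm_num) L
  have hsl : s = Real.exp (l / 2) := by
    rw [hs, Real.sqrt_eq_rpow, Real.rpow_def_of_pos hL0, hl]; congr 1; ring
  refine lt_of_lt_of_le ?_ (Phi_lower _)
  set w := Real.sqrt (2 * L) * (1 - d) with hw
  have hw2 : w ^ 2 = 2 * L * (1 - d) ^ 2 := by
    rw [hw, mul_pow, Real.sq_sqrt (by positivity)]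
  have hwl : Real.sqrt 2 * s / 2 ≤ w := by
    rw [hw, h2]
    have : 0 < Real.sqrt 2 * s := by positivity
    nlinarith
  have hwu : 1 + w ^ 2 ≤ 3 * L := by
    rw [hw2]
    have : (1 - d) ^ 2 ≤ 1 := by nlinarith
    nlinarith
  have hexp : Real.exp (-L) * (s * Real.exp 3) ≤ Real.exp (-(w ^ 2) / 2) := by
    rw [hsl, ← Real.exp_add, ← Real.exp_add]
    apply Real.exp_le_exp.2
    rw [hw2]
    nlinarith
  have he3 : 12 < Real.exp 3 := by
    have h : Real.exp 3 = Real.exp 1 ^ 3 := by rw [← Real.exp_nat_mul]; norm_num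
    have h1 : (2.7 : ℝ) < Real.exp 1 := by linarith [Real.exp_one_gt_d9]
    rw [h]
    calc (12 : ℝ) < 2.7 ^ 3 := by norm_num
      _ < _ := by gcongr
  have hpi : Real.sqrt (2 * Real.pi) ≤ Real.sqrt 2 * 2 := by
    rw [Real.sqrt_mul (by norm_num)]
    gcongr
    rw [Real.sqrt_le_left (by norm_num)]
    linarith [Real.pi_lt_four]
  have hfrac : 1 / (12 * s) ≤ w / (Real.sqrt (2 * Real.pi) * (1 + w ^ 2)) := by
    calc 1 / (12 * s) = (Real.sqrt 2 * s / 2) / (Real.sqrt 2 * 2 * (3 * L)) := by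
          rw [← hss]; field_simp; norm_num
      _ ≤ _ := by
        have : 0 ≤ w := le_trans (by positivity) hwl
        gcongr
  calc Real.exp (-L) = Real.exp (-L) * 1 := by ring
    _ < Real.exp (-L) * (Real.exp 3 / 12) := by
        gcongr
        linarith
    _ = 1 / (12 * s) * (Real.exp (-L) * (s * Real.exp 3)) := by field_simp
    _ ≤ _ := by
        have : 0 ≤ 1 / (12 * s) := by positivity
        exact mul_le_mul hfrac hexp (by positivity) (this.trans hfrac)

/-- tail and quantile estimates for the standard normal law:
(i) `x/(√(2π)(1+x²))·e^{−x²/2} ≤ 1 − Φ(x) ≤ 1/(√(2π)x)·e^{−x²/2}` for all `x > 0`;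
(ii) there is `U > 0` such that for all `u ∈ (0,U)`, writing `z = Φ⁻¹(u)` and
`y = Φ⁻¹(1−u)`, one has `−z = y` and
`y ≥ √(2 log(1/u))·(1 − (7 + log log(1/u))/(4 log(1/u)))`. -/
theorem statement19 :
    (∀ x : ℝ, 0 < x →
      (x / (Real.sqrt (2 * Real.pi) * (1 + x ^ 2)) * Real.exp (-(x ^ 2) / 2) ≤
          1 - Phi x ∧
        1 - Phi x ≤ 1 / (Real.sqrt (2 * Real.pi) * x) * Real.exp (-(x ^ 2) / 2))) ∧
    (∃ U : ℝ, 0 < U ∧ ∀ u ∈ Set.Ioo (0 : ℝ) U, ∀ z y : ℝ,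
      Phi z = u → Phi y = 1 - u →
      (-z = y ∧
        Real.sqrt (2 * Real.log u⁻¹) *
          (1 - (7 + Real.log (Real.log u⁻¹)) / (4 * Real.log u⁻¹)) ≤ y)) := by
  refine ⟨fun x hx => ⟨Phi_lower x, Phi_upper x hx⟩, ?_⟩
  have hev : ∀ᶠ L : ℝ in Filter.atTop, Real.log L ^ 2 ≤ L := by
    have h := (Real.isLittleO_pow_log_id_atTop (n := 2)).bound one_pos
    filter_upwards [h, Filter.eventually_ge_atTop 0] with L h hL
    simpa [abs_of_nonneg hL] using h
  obtain ⟨L0, hL0⟩ := Filter.eventually_atTop.1 hev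
  refine ⟨Real.exp (-(max L0 100)), Real.exp_pos _, ?_⟩
  rintro u ⟨hu0, hu⟩ z y hz hy
  constructor
  · apply Phi_strictMono.injective
    rw [Phi_neg, hz, hy]
  · have hL : max L0 100 ≤ Real.log u⁻¹ := by
      rw [Real.log_inv]
      have := (Real.log_lt_iff_lt_exp hu0).2 hu
      linarith
    have hk := key (Real.log u⁻¹) ((le_max_right _ _).trans hL)
      (hL0 _ ((le_max_left _ _).trans hL))
    have hu' : Real.exp (-Real.log u⁻¹) = u := by
      rw [Real.log_inv, neg_neg, Real.exp_log hu0]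
    rw [hu'] at hk
    by_contra! hlt
    have := Phi_strictMono hlt
    linarith

end
end
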